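/- Let S = {v ∈ L_Q : ⟨v,v⟩ = 6}. For v ∈ S and m ∈ ℤ set t_m(v) = #{x ∈ S : ⟨x,v⟩ = m}, and let S₀ = {v ∈ S : (t₀(v), t₁(v), t₂(v), t₃(v), t₆(v)) = (1377392, 578256, 38343, 304, 1)}. Then |S₀| = 23808, and for each v ∈ S₀ there exist exactly seven vectors v′ ∈ S₀ with ⟨v, v′⟩ = −3. -/

import Mathlib

/-!
The lattice `L_Q` is replaced by an integral model (`MM`, `psi`, `LQ_eq`): pairs `(s, d)` of integer
vectors indexed by `P¹(F₃₁)` with `s ≡ d mod 2` whose residues, `s` modulo 7 and `d` modulo 5 up to a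
sign at `∞`, form a word of `Q`; the form becomes `(5 s·s' + 7 d·d') / 70` (`Bf_psi`). Hence norm 6
means `bil x x = 420`. The code `Q` is self-dual (`mem_Qcode_iff`), so `L_Q` is even (`bil_self_dvd`)
and unimodular (`mem_MM_of_dual`) of rank 64.

The group `GG = SL₂(F₃₁) × {±1}`, of order 59520, acts on the model by signed permutations
(`bil_act`, `act_mem`), which makes the computations feasible. They are exact and are carried out by
the kernel.

*Minimal norm* (`min_norm`). A nonzero vector of norm less than 6 has `5|s|² + 7|d|² ∈ {140, 280}`, so
that `|d|² ≤ 20` or `|s|² ≤ 21`. The residues of `s` modulo 7 and of `d` modulo 5 lie in codes of length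
32 in which each half of the positions determines the other half. One half of a short vector carries
at most half of the norm, so all short vectors are found by enumerating the cheap half-words
(`card_le_scan`). The result: `s = 0` if `|s|² ≤ 21` (`small7`); `d` is zero or one of 81344 known
vectors of norm 20 if `|d|² ≤ 20` (`small5`); and no `s` with `|s|² ≤ 28` is congruent modulo 2 to one of
those vectors (`small57`). If one component of a vector vanishes then the other one is even, and the
same bounds apply to its half.

*Number of minimal vectors* (`card_SM`). The theta series of an even unimodular lattice of rank 64 is a
modular form of weight 32 and level one (`exists_thetaForm`), by the functional equation of Jacobi's
theta function. Such a form with expansion `1 + 0q + 0q² + ⋯` has `q³`-coefficient 2611200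
(`extremal_coeff`).

*Orbits.* For a list `WS` of 56 weighted vectors of norm 6, the kernel checks that each of them is hit
with total weight 465 by the images of the list members under `GG`. Therefore the weighted number of
pairs of a list member and a group element with some property of the image is 465 times the number of
image vectors with that property (`totW_count`). Counting all pairs gives 2611200 vectors, so there are
no others (`SM_eq`). Counting the pairs with inner product at least 1, 2, 3 with a representative gives
its type, and `S₀` consists of the orbits of two representatives (`S0_eq`). The same method, applied to
these two orbits alone, gives `|S₀|` (`card_I0`) and the number 8 of vectors of `S₀` with inner product
at least 3 with a given one, that is, the vector itself and seven others. As `-1` preserves `S₀`,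
inner product `-3` occurs equally often.
-/

noncomputable section

/-- The projective line over `F₃₁`: `none` is the point `∞`. -/
abbrev P1 : Type := Option (ZMod 31)

/-- The generator `v_μ` of the generalized quadratic residue code `Q` with
parameters `(a,b,d,s,t,e) = (0,0,1,7,3,2)`:
`v_μ(μ) = 1`, `v_μ(ν) = 7` if `χ(μ-ν) = 1`, `v_μ(ν) = 3` if `χ(μ-ν) = -1`, `v_μ(∞) = 2`. -/
def vgen (μ : ZMod 31) : P1 → ZMod 35 := fun ν =>
  match ν with
  | none => 2
  | some ν' => if ν' = μ then 1 else if IsSquare (μ - ν') then 7 else 3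

/-- The generalized quadratic residue code `Q`, a subgroup of `(ℤ/35ℤ)^{P¹(F₃₁)}`. -/
def Qcode : AddSubgroup (P1 → ZMod 35) := AddSubgroup.closure (Set.range vgen)
/-- The generator `u = (34 e₁ + 6 e₂)/35` of the discriminant group `D_R = R∨/R ≅ ℤ/35ℤ`. -/
def uvec : Fin 2 → ℚ := ![34/35, 6/35]

/-- The bilinear form `⟨x,y⟩ = xᵀ G y` on `ℚ²`, with `G = [[6,1],[1,6]]`. -/
def B2 (x y : Fin 2 → ℚ) : ℚ :=
  6 * x 0 * y 0 + x 0 * y 1 + x 1 * y 0 + 6 * x 1 * y 1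

/-- Membership in the lattice `R = ℤ² ⊆ ℚ²`. -/
def inRlat (x : Fin 2 → ℚ) : Prop := ∀ i, ∃ k : ℤ, x i = (k : ℚ)
/-- The lattice `L_Q ⊆ (R∨)³² ⊆ ℚ⁶⁴`: the preimage of the code `Q` under the natural
projection `(R∨)³² → (D_R)³² ≅ (ℤ/35ℤ)³²`.  A vector `x` belongs to `L_Q` iff there is a
codeword `w ∈ Q` such that for every `ν ∈ P¹(F₃₁)` the component `x ν` is congruent to
`w(ν)·u` modulo `R = ℤ²`. -/
def LQ : Set (P1 → Fin 2 → ℚ) :=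
  {x | ∃ w ∈ Qcode, ∀ ν : P1, ∃ m : ℤ,
    (m : ZMod 35) = w ν ∧ inRlat (x ν - (m : ℚ) • uvec)}

/-- The orthogonal direct-sum bilinear form of 32 copies of `R∨`. -/
def Bf (x y : P1 → Fin 2 → ℚ) : ℚ := ∑ ν : P1, B2 (x ν) (y ν)

/-- The set `S` of vectors of square-norm 6 in `L_Q`. -/
def Sset : Set (P1 → Fin 2 → ℚ) := {v | v ∈ LQ ∧ Bf v v = 6}

/-- `t_m(v) = #{x ∈ S : ⟨x,v⟩ = m}`. -/
def tCount (m : ℚ) (v : P1 → Fin 2 → ℚ) : ℕ :=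
  Set.ncard {x | x ∈ Sset ∧ Bf x v = m}

/-- `S₀` is the set of vectors `v ∈ S` of type
`(t₀, t₁, t₂, t₃, t₆) = (1377392, 578256, 38343, 304, 1)`. -/
def S0 : Set (P1 → Fin 2 → ℚ) :=
  {v | v ∈ Sset ∧ tCount 0 v = 1377392 ∧ tCount 1 v = 578256 ∧
    tCount 2 v = 38343 ∧ tCount 3 v = 304 ∧ tCount 6 v = 1}

/-! ### The integral model of the lattice -/

/-- Pairs `(s, d)` of integer vectors indexed by `P¹(F₃₁)`. -/
abbrev ZZ : Type := (P1 → ℤ) × (P1 → ℤ)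

/-- The sign `-1` at `∞` and `1` elsewhere. -/
def sgn (ν : P1) : ℤ := if ν = none then -1 else 1

lemma sgn_sq (ν : P1) : sgn ν * sgn ν = 1 := by unfold sgn; split_ifs <;> rfl

/-- The word over `ℤ/35ℤ` attached to a pair: `s` mod `7` and `∓d` mod `5`. -/
def word (x : ZZ) (ν : P1) : ZMod 35 := ((15 * x.1 ν - 21 * (sgn ν * x.2 ν) : ℤ) : ZMod 35)

/-- The model of `L_Q`: pairs with `s ≡ d mod 2` whose word lies in `Q`. -/
def MM : Set ZZ := {x | (∀ ν, (2 : ℤ) ∣ x.1 ν - x.2 ν) ∧ word x ∈ Qcode}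

/-- `70` times the bilinear form of `L_Q`, on the model. -/
def bil (x y : ZZ) : ℤ := ∑ ν, (5 * (x.1 ν * y.1 ν) + 7 * (x.2 ν * y.2 ν))

/-- The isometry from the model to `L_Q`. -/
def psi (x : ZZ) : P1 → Fin 2 → ℚ := fun ν =>
  ![((x.1 ν : ℚ) / 7 + (sgn ν * x.2 ν : ℤ) / 5) / 2, ((x.1 ν : ℚ) / 7 - (sgn ν * x.2 ν : ℤ) / 5) / 2]

lemma Bf_psi (x y : ZZ) : Bf (psi x) (psi y) = (bil x y : ℚ) / 70 := by
  unfold Bf bil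
  push_cast
  rw [Finset.sum_div]
  refine Finset.sum_congr rfl fun ν _ => ?_
  have h : ((sgn ν : ℤ) : ℚ) * sgn ν = 1 := by exact_mod_cast sgn_sq ν
  simp only [B2, psi, Matrix.cons_val_zero, Matrix.cons_val_one]
  push_cast
  linear_combination (x.2 ν * y.2 ν : ℚ) / 10 * h

lemma psi_injective : Function.Injective psi := by
  intro x y h
  have h0 : ∀ ν, psi x ν 0 = psi y ν 0 := fun ν => by rw [h]
  have h1 : ∀ ν, psi x ν 1 = psi y ν 1 := fun ν => by rw [h]
  simp only [psi, Matrix.cons_val_zero, Matrix.cons_val_one] at h0 h1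
  refine Prod.ext (funext fun ν => ?_) (funext fun ν => ?_)
  · have : (x.1 ν : ℚ) = y.1 ν := by linarith [h0 ν, h1 ν]
    exact_mod_cast this
  · have : ((sgn ν * x.2 ν : ℤ) : ℚ) = (sgn ν * y.2 ν : ℤ) := by linarith [h0 ν, h1 ν]
    have h2 : sgn ν * x.2 ν = sgn ν * y.2 ν := by exact_mod_cast this
    have := congrArg (sgn ν * ·) h2
    simpa [← mul_assoc, sgn_sq] using this

lemma psi_mem {x : ZZ} (hx : x ∈ MM) : psi x ∈ LQ := by
  refine ⟨word x, hx.2, fun ν => ⟨15 * x.1 ν - 21 * (sgn ν * x.2 ν), rfl, ?_⟩⟩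
  obtain ⟨k, hk⟩ := hx.1 ν
  obtain ⟨l, hl⟩ : (2 : ℤ) ∣ x.1 ν - sgn ν * x.2 ν := by
    unfold sgn; split_ifs
    · exact ⟨k + x.2 ν, by linarith⟩
    · exact ⟨k, by linarith⟩
  have hs : ((sgn ν * x.2 ν : ℤ) : ℚ) = x.1 ν - 2 * l := by
    have : sgn ν * x.2 ν = x.1 ν - 2 * l := by linarith
    exact_mod_cast this
  intro i
  fin_cases i
  · refine ⟨6 * x.1 ν - 41 * l, ?_⟩
    simp only [psi, uvec, Pi.sub_apply, Pi.smul_apply, smul_eq_mul, Fin.zero_eta, Matrix.cons_val_zero]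
    push_cast at hs ⊢
    rw [hs]; ring
  · refine ⟨x.1 ν - 7 * l, ?_⟩
    simp only [psi, uvec, Pi.sub_apply, Pi.smul_apply, smul_eq_mul, Fin.mk_one, Matrix.cons_val_one]
    push_cast at hs ⊢
    rw [hs]; ring

lemma LQ_eq : LQ = psi '' MM := by
  ext v
  constructor
  · rintro ⟨w, hw, h⟩
    choose m hm hm' using h
    choose k hk using hm'
    simp only [uvec, Pi.sub_apply, Pi.smul_apply, smul_eq_mul] at hk
    have h0 : ∀ ν, v ν 0 = m ν * (34 / 35) + k ν 0 := fun ν => by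
      have := hk ν 0; simp only [Matrix.cons_val_zero] at this; linarith
    have h1 : ∀ ν, v ν 1 = m ν * (6 / 35) + k ν 1 := fun ν => by
      have := hk ν 1; simp only [Matrix.cons_val_one, Matrix.cons_val_zero] at this; linarith
    refine ⟨(fun ν => 8 * m ν + 7 * (k ν 0 + k ν 1), fun ν => sgn ν * (4 * m ν + 5 * (k ν 0 - k ν 1))),
      ⟨fun ν => ?_, ?_⟩, ?_⟩
    · simp only [sgn]; split_ifs
      · exact ⟨6 * m ν + 6 * k ν 0 + k ν 1, by ring⟩
      · exact ⟨2 * m ν + k ν 0 + 6 * k ν 1, by ring⟩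
    · convert hw using 1
      funext ν
      rw [← hm ν]
      simp only [word]
      rw [← mul_assoc (sgn ν), sgn_sq, one_mul, ZMod.intCast_eq_intCast_iff_dvd_sub]
      exact ⟨-m ν - 6 * k ν 1, by push_cast; ring⟩
    · funext ν i
      have e : ((sgn ν * (sgn ν * (4 * m ν + 5 * (k ν 0 - k ν 1))) : ℤ) : ℚ)
          = 4 * m ν + 5 * (k ν 0 - k ν 1) := by
        rw [← mul_assoc, sgn_sq]; push_cast; ring
      fin_cases i
      · simp only [psi, Fin.zero_eta, Matrix.cons_val_zero, h0, e]; push_cast; ring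
      · simp only [psi, Fin.mk_one, Matrix.cons_val_one, h1, e]; push_cast; ring
  · rintro ⟨x, hx, rfl⟩
    exact psi_mem hx

/-! ### Self-duality of the code and of the lattice -/

/-- The standard bilinear form on `(ℤ/35)^{P¹}`. -/
def dot (w w' : P1 → ZMod 35) : ZMod 35 := ∑ ν, w ν * w' ν

set_option maxRecDepth 100000 in
lemma dot_vgen_zero : ∀ μ : ZMod 31, ∑ ν : P1, vgen 0 ν * vgen μ ν = 0 := by decide +kernel

set_option maxRecDepth 100000 in
lemma sum_vgen_zero : ∑ μ : ZMod 31, vgen μ (some 0) = 11 := by decide +kernel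

set_option maxRecDepth 100000 in
lemma vgen_add_swap_zero : ∀ μ : ZMod 31, vgen 0 (some μ) + vgen μ (some 0) = if μ = 0 then 2 else 10 := by
  decide +kernel

lemma vgen_trans (μ ν c : ZMod 31) : vgen (μ + c) (some (ν + c)) = vgen μ (some ν) := by
  simp [vgen]

lemma dot_vgen (μ μ' : ZMod 31) : dot (vgen μ) (vgen μ') = 0 := by
  have h0 := dot_vgen_zero (μ' - μ)
  rw [Fintype.sum_option] at h0
  rw [dot, Fintype.sum_option, ← h0]
  have e : ∑ ν : ZMod 31, vgen 0 (some ν) * vgen (μ' - μ) (some ν) = ∑ ν : ZMod 31, vgen μ (some ν) * vgen μ' (some ν) := by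
    refine Fintype.sum_equiv (Equiv.addRight μ) _ _ fun ν => ?_
    have h1 := vgen_trans 0 ν μ
    have h2 := vgen_trans (μ' - μ) ν μ
    rw [zero_add] at h1
    rw [sub_add_cancel] at h2
    rw [Equiv.coe_addRight, h1, h2]
  rw [e]
  rfl

lemma vgen_add_swap (μ ν : ZMod 31) : vgen ν (some μ) + vgen μ (some ν) = if μ = ν then 2 else 10 := by
  have h1 := vgen_trans 0 (μ - ν) ν
  have h2 := vgen_trans (μ - ν) 0 ν
  simp only [zero_add, sub_add_cancel] at h1 h2
  rw [h1, h2, vgen_add_swap_zero]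
  simp only [sub_eq_zero]

lemma sum_vgen (ν : ZMod 31) : ∑ μ : ZMod 31, vgen μ (some ν) = 11 := by
  rw [← sum_vgen_zero]
  symm
  refine Fintype.sum_equiv (Equiv.addRight ν) _ _ fun μ => ?_
  have h2 := vgen_trans μ 0 ν
  rw [zero_add] at h2
  rw [Equiv.coe_addRight, h2]

lemma dot_add_left (a b c) : dot (a + b) c = dot a c + dot b c := by
  simp only [dot, Pi.add_apply, add_mul, Finset.sum_add_distrib]

lemma dot_smul_left (r : ZMod 35) (a c) : dot (r • a) c = r * dot a c := by
  simp only [dot, Pi.smul_apply, smul_eq_mul, Finset.mul_sum, mul_assoc]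

lemma dot_comm (a b) : dot a b = dot b a := by simp [dot, mul_comm]

lemma dot_sum_left {ι : Type} (s : Finset ι) (f : ι → P1 → ZMod 35) (c) :
    dot (∑ i ∈ s, f i) c = ∑ i ∈ s, dot (f i) c := by
  simp only [dot, Finset.sum_apply, Finset.sum_mul]
  exact Finset.sum_comm

lemma smul_mem_Q (r : ZMod 35) {w} (hw : w ∈ Qcode) : r • w ∈ Qcode := by
  have : r • w = r.val • w := by
    funext ν; simp
  rw [this]; exact Qcode.nsmul_mem hw _

lemma vgen_mem (μ) : vgen μ ∈ Qcode := AddSubgroup.subset_closure ⟨μ, rfl⟩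

/-- The code `Q` is self-dual. The circulant part `C` of the generators satisfies
`C + Cᵀ = 10 J - 8`, with `8` a unit, so a word orthogonal to all the `v_μ` agrees at the finite
points with a combination of them. -/
lemma mem_Qcode_iff (w : P1 → ZMod 35) : w ∈ Qcode ↔ ∀ μ, dot w (vgen μ) = 0 := by
  constructor
  · intro hw μ
    induction hw using AddSubgroup.closure_induction with
    | mem x hx => obtain ⟨ν, rfl⟩ := hx; exact dot_vgen ν μ
    | zero => simp [dot]
    | add x y _ _ hx hy => rw [dot_add_left, hx, hy, add_zero]
    | neg x _ hx =>
      have := dot_smul_left (-1) x (vgen μ)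
      simpa [hx] using this
  · intro h
    let z := ∑ μ, w (some μ)
    let p := ∑ μ, w (some μ) • vgen μ
    let q := ∑ μ, vgen μ
    let r : ZMod 35 := -(22 * (10 * z + 2 * w none) * 16)
    have hp : p ∈ Qcode := Qcode.sum_mem fun μ _ => smul_mem_Q _ (vgen_mem μ)
    have hq : q ∈ Qcode := Qcode.sum_mem fun μ _ => vgen_mem μ
    let w' := w + (22 : ZMod 35) • p + r • q
    have hfin : ∀ ν, w' (some ν) = 0 := by
      intro ν
      have h1 : dot w (vgen ν) = 0 := h ν
      have h2 : p (some ν) = 10 * z - 8 * w (some ν) + 2 * w none := by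
        have e : p (some ν) = ∑ μ, w (some μ) * vgen μ (some ν) := by simp [p, Finset.sum_apply]
        have e1 : ∑ μ, w (some μ) * vgen μ (some ν) + ∑ μ, w (some μ) * vgen ν (some μ) = 10 * z - 8 * w (some ν) := by
          rw [← Finset.sum_add_distrib]
          have : ∀ μ, w (some μ) * vgen μ (some ν) + w (some μ) * vgen ν (some μ)
              = 10 * w (some μ) - if μ = ν then 8 * w (some μ) else 0 := by
            intro μ
            rw [← mul_add, add_comm, vgen_add_swap]
            split_ifs <;> ring
          rw [Finset.sum_congr rfl fun μ _ => this μ, Finset.sum_sub_distrib, ← Finset.mul_sum]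
          simp [z]
        rw [dot, Fintype.sum_option] at h1
        have e2 : vgen ν none = 2 := rfl
        rw [e2] at h1
        rw [e]
        linear_combination e1 - h1
      have h3 : q (some ν) = 11 := by simp only [q, Finset.sum_apply]; exact sum_vgen ν
      have e35 : (35 : ZMod 35) = 0 := by decide
      change w (some ν) + 22 * p (some ν) + r * q (some ν) = 0
      rw [h2, h3]
      simp only [r]
      linear_combination (-5 * w (some ν) - 22 * 5 * (10 * z + 2 * w none)) * e35
    have h0 : dot w' (vgen 0) = 0 := by
      have a : ∀ μ, dot q (vgen μ) = 0 := fun μ => by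
        simp only [q, dot_sum_left, dot_vgen, Finset.sum_const_zero]
      have b : ∀ μ, dot p (vgen μ) = 0 := fun μ => by
        simp only [p, dot_sum_left, dot_smul_left, dot_vgen, mul_zero, Finset.sum_const_zero]
      simp only [w', dot_add_left, dot_smul_left, a, b, h, mul_zero, add_zero]
    have hw' : w' = 0 := by
      rw [dot, Fintype.sum_option] at h0
      simp only [hfin, zero_mul, Finset.sum_const_zero, add_zero] at h0
      have e2 : vgen 0 none = 2 := rfl
      have e35 : (35 : ZMod 35) = 0 := by decide
      funext ν
      cases ν with
      | some ν => exact hfin ν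
      | none =>
        rw [e2] at h0
        change w' none = 0
        linear_combination 18 * h0 - w' none * e35
    have : w = -((22 : ZMod 35) • p + r • q) := by
      rw [eq_neg_iff_add_eq_zero, ← add_assoc]; exact hw'
    rw [this]
    exact Qcode.neg_mem (Qcode.add_mem (smul_mem_Q _ hp) (smul_mem_Q _ hq))

lemma dot_word (x y : ZZ) : dot (word x) (word y) = 3 * ((bil x y : ℤ) : ZMod 35) := by
  simp only [dot, word, bil]
  push_cast
  rw [Finset.mul_sum]
  refine Finset.sum_congr rfl fun ν _ => ?_
  have e35 : (35 : ZMod 35) = 0 := by decide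
  have hs : ((sgn ν : ℤ) : ZMod 35) * sgn ν = 1 := by exact_mod_cast congrArg (Int.cast (R := ZMod 35)) (sgn_sq ν)
  linear_combination (441 * (x.2 ν : ZMod 35) * y.2 ν) * hs + (6 * (x.1 ν : ZMod 35) * y.1 ν
    + 12 * (x.2 ν : ZMod 35) * y.2 ν - 9 * sgn ν * (x.1 ν * y.2 ν + y.1 ν * x.2 ν)) * e35

lemma word_add (x y : ZZ) : word (x + y) = word x + word y := by
  funext ν; simp only [word, Prod.fst_add, Prod.snd_add, Pi.add_apply]; push_cast; ring

lemma word_neg (x : ZZ) : word (-x) = -word x := by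
  funext ν; simp only [word, Prod.fst_neg, Prod.snd_neg, Pi.neg_apply]; push_cast; ring

/-- A lift of a word to the model. -/
def liftW (w : P1 → ZMod 35) : ZZ := (fun ν => (w ν).val, fun ν => -(sgn ν * (w ν).val))

lemma word_lift (w) : word (liftW w) = w := by
  funext ν
  have e35 : (35 : ZMod 35) = 0 := by decide
  have hs : ((sgn ν : ℤ) : ZMod 35) * sgn ν = 1 := by exact_mod_cast congrArg (Int.cast (R := ZMod 35)) (sgn_sq ν)
  have hv : (((w ν).val : ℤ) : ZMod 35) = w ν := by simp
  simp only [word, liftW]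
  push_cast at hv ⊢
  rw [hv]
  linear_combination 21 * w ν * hs + w ν * e35

lemma lift_mem {w} (hw : w ∈ Qcode) : liftW w ∈ MM := by
  refine ⟨fun ν => ?_, by rwa [word_lift]⟩
  simp only [liftW, sgn]
  split_ifs
  · simp
  · exact ⟨(w ν).val, by ring⟩

lemma add_mem_MM {x y : ZZ} (hx : x ∈ MM) (hy : y ∈ MM) : x + y ∈ MM := by
  refine ⟨fun ν => ?_, by rw [word_add]; exact Qcode.add_mem hx.2 hy.2⟩
  have := dvd_add (hx.1 ν) (hy.1 ν)
  simp only [Prod.fst_add, Prod.snd_add, Pi.add_apply]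
  omega

lemma neg_mem_MM {x : ZZ} (hx : x ∈ MM) : -x ∈ MM := by
  refine ⟨fun ν => ?_, by rw [word_neg]; exact Qcode.neg_mem hx.2⟩
  have := (hx.1 ν).neg_right
  simp only [Prod.fst_neg, Prod.snd_neg, Pi.neg_apply]
  omega

lemma mem_MM_of_dvd {x : ZZ} (h1 : ∀ ν, (14 : ℤ) ∣ x.1 ν) (h2 : ∀ ν, (10 : ℤ) ∣ x.2 ν) : x ∈ MM := by
  refine ⟨fun ν => dvd_sub ((by norm_num : (2 : ℤ) ∣ 14).trans (h1 ν)) ((by norm_num : (2 : ℤ) ∣ 10).trans (h2 ν)), ?_⟩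
  have : word x = 0 := by
    funext ν
    obtain ⟨a, ha⟩ := h1 ν
    obtain ⟨b, hb⟩ := h2 ν
    simp only [word, ha, hb, Pi.zero_apply]
    rw [ZMod.intCast_zmod_eq_zero_iff_dvd]
    exact ⟨6 * a - 6 * sgn ν * b, by push_cast; ring⟩
  rw [this]; exact Qcode.zero_mem

lemma bil_comm (x y : ZZ) : bil x y = bil y x := by
  unfold bil; exact Finset.sum_congr rfl fun ν _ => by ring

lemma bil_dvd {x y : ZZ} (hx : x ∈ MM) (hy : y ∈ MM) : (70 : ℤ) ∣ bil x y := by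
  have h35 : (35 : ℤ) ∣ bil x y := by
    have h : dot (word x) (word y) = 0 := by
      have h1 := (mem_Qcode_iff _).1 hx.2
      have : ∀ w ∈ Qcode, dot (word x) w = 0 := by
        intro w hw
        induction hw using AddSubgroup.closure_induction with
        | mem z hz => obtain ⟨ν, rfl⟩ := hz; exact h1 ν
        | zero => simp [dot]
        | add a b _ _ ha hb => rw [dot_comm, dot_add_left, dot_comm a, dot_comm b, ha, hb, add_zero]
        | neg a _ ha =>
          have := dot_smul_left (-1) a (word x)
          rw [dot_comm] at ha
          rw [dot_comm]
          simpa [ha] using this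
      exact this _ hy.2
    rw [dot_word] at h
    have e35 : (35 : ZMod 35) = 0 := by decide
    have : ((bil x y : ℤ) : ZMod 35) = 0 := by linear_combination 12 * h - bil x y * e35
    exact_mod_cast (ZMod.intCast_zmod_eq_zero_iff_dvd _ 35).1 this
  have h2 : (2 : ℤ) ∣ bil x y := by
    refine Finset.dvd_sum fun ν _ => ?_
    obtain ⟨k, hk⟩ := hx.1 ν
    obtain ⟨l, hl⟩ := hy.1 ν
    rw [show x.1 ν = x.2 ν + 2 * k by linarith, show y.1 ν = y.2 ν + 2 * l by linarith]
    exact ⟨6 * (x.2 ν * y.2 ν) + 5 * (k * y.2 ν + x.2 ν * l + 2 * k * l), by ring⟩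
  omega

lemma bil_self_dvd {x : ZZ} (hx : x ∈ MM) : (140 : ℤ) ∣ bil x x := by
  have h1 := bil_dvd hx hx
  have h2 : (4 : ℤ) ∣ bil x x := by
    refine Finset.dvd_sum fun ν _ => ?_
    obtain ⟨k, hk⟩ := hx.1 ν
    rw [show x.1 ν = x.2 ν + 2 * k by linarith]
    exact ⟨3 * (x.2 ν * x.2 ν) + 5 * (k * x.2 ν + k * k), by ring⟩
  omega

/-- The lattice is its own dual. -/
lemma mem_MM_of_dual {y : ZZ} (h : ∀ x ∈ MM, (70 : ℤ) ∣ bil x y) : y ∈ MM := by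
  refine ⟨fun ν => ?_, ?_⟩
  · let x : ZZ := (Pi.single ν 35, Pi.single ν 35)
    have hx : x ∈ MM := by
      refine ⟨fun κ => by simp [x], ?_⟩
      have : word x = 0 := by
        funext κ
        simp only [word, x, Pi.zero_apply]
        rw [ZMod.intCast_zmod_eq_zero_iff_dvd]
        by_cases hk : κ = ν
        · subst hk; simp only [Pi.single_eq_same]; exact ⟨15 - 21 * sgn κ, by push_cast; ring⟩
        · simp [hk]
      rw [this]; exact Qcode.zero_mem
    have := h x hx
    have e : bil x y = 35 * (5 * y.1 ν + 7 * y.2 ν) := by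
      unfold bil
      rw [Finset.sum_eq_single ν]
      · simp [x]; ring
      · intro κ _ hk; simp [x, hk]
      · simp
    rw [e] at this
    omega
  · rw [mem_Qcode_iff]
    intro μ
    have h1 := h _ (lift_mem (vgen_mem μ))
    have h2 := dot_word (liftW (vgen μ)) y
    rw [word_lift, dot_comm] at h2
    rw [h2]
    obtain ⟨k, hk⟩ := h1
    have e35 : (35 : ZMod 35) = 0 := by decide
    rw [hk]; push_cast
    linear_combination 6 * k * e35

/-! ### Theta series of a self-dual lattice -/

/-- The interchange of a finite product with absolutely convergent sums over `ℤ`. -/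
def PT (ι : Type) [Fintype ι] : Prop := ∀ f : ι → ℤ → ℂ, (∀ i, Summable fun k => ‖f i k‖) →
    (Summable fun x : ι → ℤ => ‖∏ i, f i (x i)‖) ∧
      ∑' x : ι → ℤ, ∏ i, f i (x i) = ∏ i, ∑' k, f i k

lemma PT_equiv (α β : Type) [Fintype β] (e : α ≃ β) (ih : @PT α (Fintype.ofEquiv β e.symm)) : PT β := by
  let _ : Fintype α := Fintype.ofEquiv β e.symm
  intro f hf
  obtain ⟨h1, h2⟩ := ih (fun a => f (e a)) fun a => hf _
  have key : ∀ x : α → ℤ, ∏ i, f i (e.arrowCongr (Equiv.refl ℤ) x i) = ∏ a, f (e a) (x a) := by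
    intro x
    rw [← e.prod_comp]
    simp
  constructor
  · rw [← (e.arrowCongr (Equiv.refl ℤ)).summable_iff]
    simpa only [Function.comp_def, key] using h1
  · rw [← (e.arrowCongr (Equiv.refl ℤ)).tsum_eq]
    simp only [key]
    rw [h2, e.prod_comp (fun b => ∑' k, f b k)]

lemma PT_option (α : Type) [Fintype α] (ih : PT α) : PT (Option α) := by
  intro f hf
  obtain ⟨h1, h2⟩ := ih (fun a => f (some a)) fun a => hf _
  have key : ∀ p : ℤ × (α → ℤ), ∏ i, f i ((Equiv.piOptionEquivProd (β := fun _ : Option α => ℤ)).symm p i)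
      = f none p.1 * ∏ a, f (some a) (p.2 a) := by
    rintro ⟨p, q⟩
    rw [Fintype.prod_option]
    rfl
  constructor
  · rw [← (Equiv.piOptionEquivProd (β := fun _ : Option α => ℤ)).symm.summable_iff]
    simp only [Function.comp_def, key, norm_mul]
    exact (hf none).mul_of_nonneg h1 (fun _ => norm_nonneg _) (fun _ => norm_nonneg _)
  · rw [← (Equiv.piOptionEquivProd (β := fun _ : Option α => ℤ)).symm.tsum_eq]
    simp only [key]
    rw [← tsum_mul_tsum_of_summable_norm (hf none) h1, h2, Fintype.prod_option]

lemma PT_empty : PT PEmpty := by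
  intro f _
  exact ⟨(hasSum_fintype _).summable, by rw [tsum_fintype]; simp⟩

/-- The product of finitely many absolutely convergent sums is a sum over families of indices. -/
lemma prod_tsum {ι : Type} [Fintype ι] : PT ι :=
  Fintype.induction_empty_option (P := fun ι _ => PT ι) PT_equiv PT_empty PT_option ι

section
open Complex

/-- `exp(πiτk²/n)`. -/
def gs (n : ℕ) (τ : ℂ) (k : ℤ) : ℂ := cexp (Real.pi * I * τ * (k : ℂ) ^ 2 / n)

lemma jterm_eq (n : ℕ) [NeZero n] (c : ℤ) (τ : ℂ) (k : ℤ) :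
    jacobiTheta₂_term k (c / n) (τ / n) = ZMod.stdAddChar ((c * k : ℤ) : ZMod n) * gs n τ k := by
  rw [ZMod.stdAddChar_coe, jacobiTheta₂_term, gs, ← Complex.exp_add]
  congr 1
  push_cast
  ring

lemma im_div_nat (n : ℕ) [NeZero n] {τ : ℂ} (h : 0 < τ.im) : 0 < (τ / n).im := by
  have : (τ / n).im = τ.im / n := by
    rw [← Complex.ofReal_natCast, Complex.div_ofReal_im]
  rw [this]
  exact div_pos h (by exact_mod_cast Nat.pos_of_ne_zero (NeZero.ne n))

lemma summable_gs (n : ℕ) [NeZero n] {τ : ℂ} (h : 0 < τ.im) : Summable fun k => ‖gs n τ k‖ := by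
  have := (summable_jacobiTheta₂_term_iff ((0 : ℤ) / n) (τ / n)).2 (im_div_nat n h)
  simp only [jterm_eq] at this
  simpa using this.norm

/-- The partial theta series over `k ≡ c mod n`. -/
def th (n : ℕ) (c : ZMod n) (τ : ℂ) : ℂ := ∑' k : ℤ, if (k : ZMod n) = c then gs n τ k else 0

/-- Jacobi's functional equation, in terms of the partial theta series at `-1/τ`. -/
lemma jacobi_eq_th (n : ℕ) [NeZero n] (c : ℤ) {τ : ℂ} (h : 0 < τ.im) :
    jacobiTheta₂ (c / n) (τ / n) = 1 / (-I * (τ / n)) ^ (1 / 2 : ℂ) * th n c (-1 / τ) := by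
  have hn : (n : ℂ) ≠ 0 := by exact_mod_cast NeZero.ne n
  have hτ : τ ≠ 0 := by rintro rfl; simp at h
  rw [jacobiTheta₂_functional_equation, mul_assoc]
  congr 1
  have e : th n c (-1 / τ) = ∑' m : ℤ, gs n (-1 / τ) (c + n * m) := by
    let g : ℤ → ℤ := fun m => c + n * m
    have hg : Function.Injective g := by
      intro a b hab
      have : (n : ℤ) * a = n * b := by simpa [g] using hab
      exact mul_left_cancel₀ (by exact_mod_cast NeZero.ne n) this
    unfold th
    rw [← hg.tsum_eq]
    · refine tsum_congr fun m => ?_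
      rw [if_pos (by simp [g])]
    · intro k hk
      simp only [Function.mem_support, ne_eq, ite_eq_right_iff, not_forall] at hk
      obtain ⟨hk, -⟩ := hk
      rw [eq_comm, ZMod.intCast_eq_intCast_iff_dvd_sub] at hk
      obtain ⟨m, hm⟩ := hk
      exact ⟨m, by simp only [g]; linarith⟩
  rw [e, jacobiTheta₂, ← tsum_mul_left, ← (Equiv.neg ℤ).tsum_eq]
  refine tsum_congr fun m => ?_
  rw [jacobiTheta₂_term, gs, ← Complex.exp_add]
  congr 1
  simp only [Equiv.neg_apply]
  push_cast
  field_simp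
  ring

end

section Theta
open Complex
variable {J : Type} [Fintype J] (n : J → ℕ) [∀ j, NeZero (n j)] (M : AddSubgroup (J → ℤ))

/-- Reduction `ℤ^J → ∏ ℤ/n_j`. -/
def red : (J → ℤ) →+ (∀ j, ZMod (n j)) where
  toFun x := fun j => (x j : ZMod (n j))
  map_zero' := by funext j; simp
  map_add' x y := by funext j; simp

/-- The weight `exp(πiτ Σ x_j²/n_j)`. -/
def gw (τ : ℂ) (x : J → ℤ) : ℂ := ∏ j, gs (n j) τ (x j)

open Classical in
/-- The theta series of the lattice `M` for the form `Σ x_j²/n_j`. -/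
def Theta (τ : ℂ) : ℂ := ∑' x : J → ℤ, if x ∈ M then gw n τ x else 0

/-- The image of `M` in `∏ ℤ/n_j`. -/
abbrev Cd : AddSubgroup (∀ j, ZMod (n j)) := M.map (red n)

instance : Finite (Cd n M) := inferInstance
instance : Fintype (Cd n M) := Fintype.ofFinite _

variable {n M}

omit [Fintype J] [∀ j, NeZero (n j)] in
lemma red_mem (hper : ∀ x : J → ℤ, (∀ j, (n j : ℤ) ∣ x j) → x ∈ M) (x : J → ℤ) :
    red n x ∈ Cd n M ↔ x ∈ M := by
  refine ⟨?_, fun h => ⟨x, h, rfl⟩⟩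
  rintro ⟨y, hy, h⟩
  have : x - y ∈ M := hper _ fun j => by
    have := congrFun h j
    exact (ZMod.intCast_eq_intCast_iff_dvd_sub _ _ _).1 this
  simpa using M.add_mem this hy

lemma summable_gw {τ : ℂ} (h : 0 < τ.im) : Summable fun x : J → ℤ => ‖gw n τ x‖ :=
  (prod_tsum _ fun j => summable_gs (n j) h).1

lemma norm_th_le {τ : ℂ} (h : 0 < τ.im) (m : ℕ) [NeZero m] (c : ZMod m) :
    Summable fun k : ℤ => ‖if (k : ZMod m) = c then gs m τ k else 0‖ := by
  refine (summable_gs m h).of_nonneg_of_le (fun _ => norm_nonneg _) fun k => ?_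
  split_ifs
  · exact le_rfl
  · simp

/-- The theta series is the sum, over the words of the code, of products of partial theta series. -/
lemma Theta_eq_th (hper : ∀ x : J → ℤ, (∀ j, (n j : ℤ) ∣ x j) → x ∈ M) {τ : ℂ} (h : 0 < τ.im) :
    Theta n M τ = ∑ c : Cd n M, ∏ j, th (n j) (c.1 j) τ := by
  have h1 := fun c : Cd n M => prod_tsum (ι := J) _ fun j => norm_th_le h (n j) (c.1 j)
  simp only [th]
  rw [Finset.sum_congr rfl fun c _ => (h1 c).2.symm, ← Summable.tsum_finsetSum fun c _ => (h1 c).1.of_norm]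
  refine tsum_congr fun x => ?_
  classical
  simp only [Finset.prod_ite_zero, Finset.mem_univ, true_imp_iff]
  have e : ∀ c : Cd n M, (∀ i, (x i : ZMod (n i)) = c.1 i) ↔ red n x = c.1 := fun c => by
    rw [funext_iff]; rfl
  simp only [e]
  split_ifs with hx
  · rw [Finset.sum_eq_single (⟨red n x, (red_mem hper x).2 hx⟩ : Cd n M)]
    · simp [gw]
    · intro b _ hb
      rw [if_neg]
      intro hh; exact hb (Subtype.ext hh.symm)
    · simp
  · rw [Finset.sum_eq_zero]
    intro c _
    rw [if_neg]
    intro hh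
    exact hx ((red_mem hper x).1 (hh ▸ c.2))

/-- The character of `∏ ℤ/n_j` attached to `x`. -/
def chr (x : J → ℤ) : AddChar (Cd n M) ℂ where
  toFun c := ∏ j, ZMod.stdAddChar (c.1 j * (x j : ZMod (n j)))
  map_zero_eq_one' := by simp
  map_add_eq_mul' a b := by
    simp only [AddSubgroup.coe_add, Pi.add_apply, add_mul, AddChar.map_add_eq_mul, Finset.prod_mul_distrib]

/-- By the orthogonality of the characters of the finite code and its self-duality, the sum of the
products of Jacobi theta functions over the code picks out the members of `M`. -/
lemma sum_jacobi (hdual : ∀ y : J → ℤ, (∀ x ∈ M, ∏ j, (ZMod.stdAddChar ((x j : ZMod (n j)) * (y j : ZMod (n j))) : ℂ) = 1) ↔ y ∈ M)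
    {τ : ℂ} (h : 0 < τ.im) :
    ∑ c : Cd n M, ∏ j, jacobiTheta₂ (((c.1 j).val : ℤ) / n j) (τ / n j)
      = Fintype.card (Cd n M) * Theta n M τ := by
  have hs : ∀ c : Cd n M, ∀ j, Summable fun k : ℤ => ‖jacobiTheta₂_term k (((c.1 j).val : ℤ) / n j) (τ / n j)‖ :=
    fun c j => ((summable_jacobiTheta₂_term_iff _ _).2 (im_div_nat (n j) h)).norm
  have h1 := fun c : Cd n M => prod_tsum (ι := J) _ (hs c)
  simp only [jacobiTheta₂]
  rw [Finset.sum_congr rfl fun c _ => (h1 c).2.symm, ← Summable.tsum_finsetSum fun c _ => (h1 c).1.of_norm,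
    Theta, ← tsum_mul_left]
  refine tsum_congr fun x => ?_
  have e : ∀ c : Cd n M, ∏ j, jacobiTheta₂_term (x j) (((c.1 j).val : ℤ) / n j) (τ / n j)
      = chr x c * gw n τ x := by
    intro c
    rw [gw, chr, AddChar.coe_mk, ← Finset.prod_mul_distrib]
    refine Finset.prod_congr rfl fun j _ => ?_
    rw [jterm_eq]
    congr 2
    push_cast
    rw [ZMod.natCast_zmod_val]
  classical
  rw [Finset.sum_congr rfl fun c _ => e c, ← Finset.sum_mul, AddChar.sum_eq_ite]
  have e2 : (chr x : AddChar (Cd n M) ℂ) = 0 ↔ x ∈ M := by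
    rw [← hdual]
    constructor
    · intro hx y hy
      have : chr x (⟨red n y, y, hy, rfl⟩ : Cd n M) = 1 := by rw [hx]; rfl
      exact this
    · intro hx
      ext ⟨c, y, hy, rfl⟩
      exact hx y hy
  simp only [e2]
  split_ifs <;> simp

end Theta

section Theta
open Complex
variable {J : Type} [Fintype J] {n : J → ℕ} [∀ j, NeZero (n j)] {M : AddSubgroup (J → ℤ)}

/-- The branch of the square root is multiplicative on positive multiples. -/
lemma sqrt_factor (m : ℕ) [NeZero m] {τ : ℂ} (h : 0 < τ.im) :
    (-I * (τ / m)) ^ (1 / 2 : ℂ) = ((m : ℂ)⁻¹) ^ (1 / 2 : ℂ) * (-I * τ) ^ (1 / 2 : ℂ) := by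
  have hm : (0 : ℝ) < (m : ℝ)⁻¹ := inv_pos.2 (by exact_mod_cast Nat.pos_of_ne_zero (NeZero.ne m))
  have hz : -I * τ ≠ 0 := by
    have : τ ≠ 0 := by rintro rfl; simp at h
    simpa using this
  have e : -I * (τ / m) = (((m : ℝ)⁻¹ : ℝ) : ℂ) * (-I * τ) := by push_cast; ring
  have e' : ((m : ℂ)⁻¹) = (((m : ℝ)⁻¹ : ℝ) : ℂ) := by push_cast; rfl
  have h0 : (((m : ℝ)⁻¹ : ℝ) : ℂ) ≠ 0 := by exact_mod_cast hm.ne'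
  rw [e, e', cpow_def_of_ne_zero (mul_ne_zero h0 hz), cpow_def_of_ne_zero h0, cpow_def_of_ne_zero hz,
    Complex.log_ofReal_mul hm hz, ← Complex.exp_add, Complex.ofReal_log hm.le]
  congr 1; ring

lemma neg_inv_im {τ : ℂ} (h : 0 < τ.im) : 0 < (-1 / τ).im := by
  have := UpperHalfPlane.im_inv_neg_coe_pos ⟨τ, h⟩
  simpa [neg_div, one_div, inv_neg] using this

/-- The transformation under `τ ↦ -1/τ`, up to a constant that does not depend on `τ`. -/
lemma Theta_S_aux {w : ℕ} (hcard : Fintype.card J = 2 * w) (hw : (-I) ^ w = 1)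
    (hper : ∀ x : J → ℤ, (∀ j, (n j : ℤ) ∣ x j) → x ∈ M)
    (hdual : ∀ y : J → ℤ, (∀ x ∈ M, ∏ j, (ZMod.stdAddChar ((x j : ZMod (n j)) * (y j : ZMod (n j))) : ℂ) = 1) ↔ y ∈ M) :
    ∃ κ : ℂ, ∀ τ : ℂ, 0 < τ.im → τ ^ w * Theta n M τ = κ * Theta n M (-1 / τ) := by
  refine ⟨(Fintype.card (Cd n M) : ℂ)⁻¹ * ∏ j, (((n j : ℂ)⁻¹) ^ (1 / 2 : ℂ))⁻¹, fun τ h => ?_⟩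
  have hc : (Fintype.card (Cd n M) : ℂ) ≠ 0 := by
    exact_mod_cast Fintype.card_ne_zero
  have h1 := sum_jacobi hdual h
  rw [Theta_eq_th hper (neg_inv_im h)]
  have hτ : τ ≠ 0 := by rintro rfl; simp at h
  have h2 : ∀ c : Cd n M, ∏ j, jacobiTheta₂ (((c.1 j).val : ℤ) / n j) (τ / n j)
      = (∏ j, (((n j : ℂ)⁻¹) ^ (1 / 2 : ℂ))⁻¹) * (τ ^ w)⁻¹ * ∏ j, th (n j) (c.1 j) (-1 / τ) := by
    intro c
    have e : ∀ j, jacobiTheta₂ (((c.1 j).val : ℤ) / n j) (τ / n j)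
        = (((n j : ℂ)⁻¹) ^ (1 / 2 : ℂ))⁻¹ * ((-I * τ) ^ (1 / 2 : ℂ))⁻¹ * th (n j) (c.1 j) (-1 / τ) := by
      intro j
      rw [jacobi_eq_th (n j) _ h, sqrt_factor (n j) h, one_div, mul_inv]
      congr 2
      simp
    rw [Finset.prod_congr rfl fun j _ => e j, Finset.prod_mul_distrib, Finset.prod_mul_distrib]
    congr 2
    rw [Finset.prod_const, Finset.card_univ, hcard, inv_pow]
    congr 1
    rw [pow_mul, ← cpow_nat_mul]
    have : ((2 : ℕ) : ℂ) * (1 / 2) = 1 := by norm_num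
    rw [this, cpow_one, mul_pow, hw, one_mul]
  rw [Finset.sum_congr rfl fun c _ => h2 c, ← Finset.mul_sum] at h1
  generalize Theta n M τ = A at h1 ⊢
  generalize (∑ c : Cd n M, ∏ j, th (n j) (c.1 j) (-1 / τ)) = B at h1 ⊢
  generalize (∏ j, (((n j : ℂ)⁻¹) ^ (1 / 2 : ℂ))⁻¹) = D at h1 ⊢
  generalize (Fintype.card (Cd n M) : ℂ) = c at hc h1 ⊢
  have h32 : τ ^ w ≠ 0 := pow_ne_zero _ hτ
  generalize τ ^ w = t at h32 h1 ⊢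
  field_simp at h1 ⊢
  linear_combination (-1 : ℂ) * h1

/-- At `τ = i` all terms are positive real numbers. -/
lemma Theta_I_ne (M : AddSubgroup (J → ℤ)) : Theta n M I ≠ 0 := by
  classical
  let f : (J → ℤ) → ℝ := fun x => if x ∈ M then ∏ j, Real.exp (-Real.pi * (x j : ℝ) ^ 2 / n j) else 0
  have e : ∀ x : J → ℤ, (if x ∈ M then gw n I x else 0) = ((f x : ℝ) : ℂ) := by
    intro x
    simp only [f]
    split_ifs
    · push_cast
      refine Finset.prod_congr rfl fun j _ => ?_
      rw [gs]
      congr 1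
      linear_combination (Real.pi * (x j : ℂ) ^ 2 / n j) * I_mul_I
    · simp
  have hs : Summable f := by
    have := summable_gw (n := n) (τ := I) (by simp)
    refine this.of_norm_bounded (fun x => ?_)
    have := e x
    rw [← Complex.norm_real, ← e x]
    split_ifs <;> simp
  have hpos : 0 < ∑' x, f x := by
    refine hs.tsum_pos (fun x => ?_) 0 ?_
    · simp only [f]; split_ifs
      · exact Finset.prod_nonneg fun j _ => (Real.exp_pos _).le
      · exact le_rfl
    · simp [f, M.zero_mem]
  unfold Theta
  rw [show (fun x : J → ℤ => if x ∈ M then gw n I x else 0) = fun x => ((f x : ℝ) : ℂ) from funext e]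
  rw [← Complex.ofReal_tsum]
  exact_mod_cast hpos.ne'
end Theta

/-! ### Modular forms of weight 32 -/

section
open UpperHalfPlane ModularForm CongruenceSubgroup EisensteinSeries SlashInvariantForm
open scoped MatrixGroups

/-- The truncation of a power series at order `4`. -/
def C4 (f : PowerSeries ℂ) (a b c d : ℂ) : Prop :=
  f.coeff 0 = a ∧ f.coeff 1 = b ∧ f.coeff 2 = c ∧ f.coeff 3 = d

/-- Cauchy products of the first four coefficients. -/
lemma C4.mul {f g : PowerSeries ℂ} {a b c d a' b' c' d' : ℂ} (hf : C4 f a b c d) (hg : C4 g a' b' c' d') :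
    C4 (f * g) (a * a') (a * b' + b * a') (a * c' + b * b' + c * a')
      (a * d' + b * c' + c * b' + d * a') := by
  obtain ⟨h0, h1, h2, h3⟩ := hf
  obtain ⟨g0, g1, g2, g3⟩ := hg
  refine ⟨?_, ?_, ?_, ?_⟩ <;>
    simp only [PowerSeries.coeff_mul, Finset.Nat.antidiagonal_succ, Finset.Nat.antidiagonal_zero,
      Finset.sum_cons, Finset.map_cons, Finset.map_singleton, Finset.sum_singleton,
      Function.Embedding.prodMap, Function.Embedding.coeFn_mk, Prod.map, Function.Embedding.refl_apply,
      Nat.succ_eq_add_one, zero_add, Nat.reduceAdd, h0, h1, h2, h3, g0, g1, g2, g3] <;> ring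

lemma C4_E4 : C4 (qExpansion 1 E₄) 1 240 2160 6720 := by
  have e : ∀ m, (qExpansion 1 E₄).coeff m = if m = 0 then 1 else -(2 * ((4:ℕ):ℂ) / ((bernoulli 4 : ℚ) : ℂ)) * ((ArithmeticFunction.sigma (4 - 1) m : ℕ) : ℂ) :=
    fun m => E_qExpansion_coeff (by norm_num) ⟨2, rfl⟩ m
  rw [show bernoulli 4 = -1 / 30 by decide +kernel] at e
  refine ⟨?_, ?_, ?_, ?_⟩
  · simp [e]
  · rw [e, show ArithmeticFunction.sigma (4 - 1) 1 = 1 by decide +kernel]; norm_num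
  · rw [e, show ArithmeticFunction.sigma (4 - 1) 2 = 9 by decide +kernel]; norm_num
  · rw [e, show ArithmeticFunction.sigma (4 - 1) 3 = 28 by decide +kernel]; norm_num

lemma C4_E6 : C4 (qExpansion 1 E₆) 1 (-504) (-16632) (-122976) := by
  have e : ∀ m, (qExpansion 1 E₆).coeff m = if m = 0 then 1 else -(2 * ((6:ℕ):ℂ) / ((bernoulli 6 : ℚ) : ℂ)) * ((ArithmeticFunction.sigma (6 - 1) m : ℕ) : ℂ) :=
    fun m => E_qExpansion_coeff (by norm_num) ⟨3, rfl⟩ m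
  rw [show bernoulli 6 = 1 / 42 by decide +kernel] at e
  refine ⟨?_, ?_, ?_, ?_⟩
  · simp [e]
  · rw [e, show ArithmeticFunction.sigma (6 - 1) 1 = 1 by decide +kernel]; norm_num
  · rw [e, show ArithmeticFunction.sigma (6 - 1) 2 = 33 by decide +kernel]; norm_num
  · rw [e, show ArithmeticFunction.sigma (6 - 1) 3 = 244 by decide +kernel]; norm_num

lemma C4.congr {f : PowerSeries ℂ} {a b c d a' b' c' d' : ℂ} (h : C4 f a b c d)
    (ha : a = a') (hb : b = b') (hc : c = c') (hd : d = d') : C4 f a' b' c' d' := by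
  subst ha hb hc hd; exact h

/-- By the Sturm bound the form is determined by its first three coefficients: it is
`(257/2592) E₄⁸ + (895/1296) E₄⁵ E₆² + (545/2592) E₄² E₆⁴`. -/
lemma extremal_coeff (f : ModularForm 𝒮ℒ ((32 : ℕ) : ℤ)) (h0 : (qExpansion 1 f).coeff 0 = 1)
   (h1 : (qExpansion 1 f).coeff 1 = 0) (h2 : (qExpansion 1 f).coeff 2 = 0) :
    (qExpansion 1 f).coeff 3 = 2611200 := by
  let A : ModularForm 𝒮ℒ ((32:ℕ):ℤ) := ModularForm.mcast (by decide) (E₄.pow 8)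
  let B : ModularForm 𝒮ℒ ((32:ℕ):ℤ) := ModularForm.mcast (by decide) ((E₄.pow 5).mul (E₆.pow 2))
  let C : ModularForm 𝒮ℒ ((32:ℕ):ℤ) := ModularForm.mcast (by decide) ((E₄.pow 2).mul (E₆.pow 4))
  have hA : qExpansion 1 A = (qExpansion 1 E₄) ^ 8 := by
    simp only [A, coe_mcast, ModularForm.qExpansion_pow one_pos one_mem_strictPeriods_SL]
  have hB : qExpansion 1 B = (qExpansion 1 E₄) ^ 5 * (qExpansion 1 E₆) ^ 2 := by
    simp only [B, coe_mcast, ModularForm.qExpansion_mul one_pos one_mem_strictPeriods_SL, ModularForm.qExpansion_pow one_pos one_mem_strictPeriods_SL]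
  have hC : qExpansion 1 C = (qExpansion 1 E₄) ^ 2 * (qExpansion 1 E₆) ^ 4 := by
    simp only [C, coe_mcast, ModularForm.qExpansion_mul one_pos one_mem_strictPeriods_SL, ModularForm.qExpansion_pow one_pos one_mem_strictPeriods_SL]
  have p2 : C4 ((qExpansion 1 E₄) * (qExpansion 1 E₄)) 1 480 61920 1050240 :=
    (C4_E4.mul C4_E4).congr (by norm_num) (by norm_num) (by norm_num) (by norm_num)
  have p4 := p2.mul p2
  have s2 := C4_E6.mul C4_E6
  have s4 := s2.mul s2
  have cA : C4 (qExpansion 1 A) 1 1920 1630080 803228160 := by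
    rw [hA, show (qExpansion 1 E₄) ^ 8 = ((qExpansion 1 E₄ * qExpansion 1 E₄) * (qExpansion 1 E₄ * qExpansion 1 E₄)) * ((qExpansion 1 E₄ * qExpansion 1 E₄) * (qExpansion 1 E₄ * qExpansion 1 E₄)) by ring]
    exact (p4.mul p4).congr (by norm_num) (by norm_num) (by norm_num) (by norm_num)
  have cB : C4 (qExpansion 1 B) 1 192 (-402048) (-161431296) := by
    rw [hB, show (qExpansion 1 E₄) ^ 5 * (qExpansion 1 E₆) ^ 2 = (((qExpansion 1 E₄ * qExpansion 1 E₄) * (qExpansion 1 E₄ * qExpansion 1 E₄)) * qExpansion 1 E₄) * (qExpansion 1 E₆ * qExpansion 1 E₆) by ring]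
    exact ((p4.mul C4_E4).mul s2).congr (by norm_num) (by norm_num) (by norm_num) (by norm_num)
  have cC : C4 (qExpansion 1 C) 1 (-1536) 551808 163854336 := by
    rw [hC, show (qExpansion 1 E₄) ^ 2 * (qExpansion 1 E₆) ^ 4 = (qExpansion 1 E₄ * qExpansion 1 E₄) * ((qExpansion 1 E₆ * qExpansion 1 E₆) * (qExpansion 1 E₆ * qExpansion 1 E₆)) by ring]
    exact (p2.mul s4).congr (by norm_num) (by norm_num) (by norm_num) (by norm_num)
  let D : ModularForm 𝒮ℒ ((32:ℕ):ℤ) := f - ((257/2592 : ℂ) • A + (895/1296 : ℂ) • B + (545/2592 : ℂ) • C)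
  have hD : qExpansion 1 D = qExpansion 1 f - ((257/2592 : ℂ) • qExpansion 1 A + (895/1296 : ℂ) • qExpansion 1 B + (545/2592 : ℂ) • qExpansion 1 C) := by
    have a1 := ModularForm.qExpansion_sub one_pos one_mem_strictPeriods_SL f ((257/2592 : ℂ) • A + (895/1296 : ℂ) • B + (545/2592 : ℂ) • C)
    have a2 := ModularForm.qExpansion_add one_pos one_mem_strictPeriods_SL ((257/2592 : ℂ) • A + (895/1296 : ℂ) • B) ((545/2592 : ℂ) • C)
    have a3 := ModularForm.qExpansion_add one_pos one_mem_strictPeriods_SL ((257/2592 : ℂ) • A) ((895/1296 : ℂ) • B)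
    have b1 := ModularForm.qExpansion_smul one_pos one_mem_strictPeriods_SL (257/2592 : ℂ) A
    have b2 := ModularForm.qExpansion_smul one_pos one_mem_strictPeriods_SL (895/1296 : ℂ) B
    have b3 := ModularForm.qExpansion_smul one_pos one_mem_strictPeriods_SL (545/2592 : ℂ) C
    have e1 : (⇑D : ℍ → ℂ) = ⇑f - ⇑((257/2592 : ℂ) • A + (895/1296 : ℂ) • B + (545/2592 : ℂ) • C) := rfl
    have e2 : (⇑((257/2592 : ℂ) • A + (895/1296 : ℂ) • B + (545/2592 : ℂ) • C) : ℍ → ℂ) = ⇑((257/2592 : ℂ) • A + (895/1296 : ℂ) • B) + ⇑((545/2592 : ℂ) • C) := rfl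
    have e3 : (⇑((257/2592 : ℂ) • A + (895/1296 : ℂ) • B) : ℍ → ℂ) = ⇑((257/2592 : ℂ) • A) + ⇑((895/1296 : ℂ) • B) := rfl
    have f1 : (⇑((257/2592 : ℂ) • A) : ℍ → ℂ) = (257/2592 : ℂ) • ⇑A := rfl
    have f2 : (⇑((895/1296 : ℂ) • B) : ℍ → ℂ) = (895/1296 : ℂ) • ⇑B := rfl
    have f3 : (⇑((545/2592 : ℂ) • C) : ℍ → ℂ) = (545/2592 : ℂ) • ⇑C := rfl
    rw [e1, a1, e2, a2, e3, a3, f1, f2, f3, b1, b2, b3]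
  have z : D = 0 := by
    apply ModularForm.sturm_bound_levelOne_nat
    refine lt_of_lt_of_le (b := ((3 : ℕ) : ℕ∞)) (by norm_num) (PowerSeries.nat_le_order _ _ fun i hi => ?_)
    rw [hD]
    interval_cases i <;> simp only [map_sub, map_add, PowerSeries.coeff_smul, h0, h1, h2, cA.1, cB.1, cC.1, cA.2.1, cB.2.1, cC.2.1, cA.2.2.1, cB.2.2.1, cC.2.2.1, smul_eq_mul] <;> norm_num
  have z3 : (qExpansion 1 D).coeff 3 = 0 := by
    rw [z]
    have : (⇑(0 : ModularForm 𝒮ℒ ((32:ℕ):ℤ)) : ℍ → ℂ) = 0 := rfl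
    rw [this, qExpansion_zero, map_zero]
  rw [hD] at z3
  simp only [map_sub, map_add, PowerSeries.coeff_smul, cA.2.2.2, cB.2.2.2, cC.2.2.2, smul_eq_mul] at z3
  linear_combination z3

end

/-! ### The theta series as a modular form -/

section ThetaForm
open UpperHalfPlane hiding I
open ModularForm CongruenceSubgroup SlashInvariantForm
open scoped MatrixGroups
open Complex (I)

variable {J : Type} [Fintype J] {n : J → ℕ} [∀ j, NeZero (n j)] {M : AddSubgroup (J → ℤ)}

omit [∀ j, NeZero (n j)] in
lemma gw_eq_qParam {x : J → ℤ} {N : ℕ} (h : ∑ j, ((x j : ℚ) ^ 2 / n j) = 2 * N) (τ : ℂ) :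
    gw n τ x = Function.Periodic.qParam 1 τ ^ N := by
  simp only [gw, gs, Function.Periodic.qParam, Complex.ofReal_one, div_one]
  rw [← Complex.exp_sum, ← Complex.exp_nat_mul]
  congr 1
  have h' : ∑ j, ((x j : ℂ) ^ 2 / n j) = 2 * N := by
    have := congrArg (fun q : ℚ => (q : ℂ)) h
    push_cast at this
    exact this
  rw [show ((N : ℕ) : ℂ) * (2 * Real.pi * I * τ) = (Real.pi * I * τ) * (2 * N) by ring, ← h', Finset.mul_sum]
  refine Finset.sum_congr rfl fun j _ => ?_
  ring

/-- The `q`-expansion of the theta series of an even lattice. -/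
lemma hasSum_Theta (N : (J → ℤ) → ℕ) (hN : ∀ x ∈ M, ∑ j, ((x j : ℚ) ^ 2 / n j) = 2 * N x) {τ : ℂ} (hτ : 0 < τ.im) :
    HasSum (fun m : ℕ => ((Nat.card {x : J → ℤ // x ∈ M ∧ N x = m} : ℕ) : ℂ) • Function.Periodic.qParam 1 τ ^ m) (Theta n M τ) := by
  classical
  have hs : Summable fun x : J → ℤ => if x ∈ M then gw n τ x else 0 := by
    refine Summable.of_norm ((summable_gw hτ (n := n)).of_nonneg_of_le (fun _ => norm_nonneg _) fun x => ?_)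
    split_ifs
    · exact le_rfl
    · simp
  have := HasSum.tsum_fiberwise (f := fun x : J → ℤ => if x ∈ M then gw n τ x else 0) (a := Theta n M τ)
    (by have := hs.hasSum; unfold Theta; convert this) N
  refine (congrArg (HasSum · (Theta n M τ)) (funext fun m => ?_)).mpr this
  let s : Set (J → ℤ) := {x | x ∈ M ∧ N x = m}
  have e1 := tsum_subtype (N ⁻¹' {m}) (fun x : J → ℤ => if x ∈ M then gw n τ x else 0)
  have e2 := tsum_subtype s (fun _ : J → ℤ => Function.Periodic.qParam 1 τ ^ m)
  rw [tsum_const] at e2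
  rw [e1]
  have e3 : Nat.card {x : J → ℤ // x ∈ M ∧ N x = m} = Nat.card s := rfl
  rw [e3, smul_eq_mul, ← nsmul_eq_mul, e2]
  refine tsum_congr fun x => ?_
  by_cases hx : x ∈ M <;> by_cases hm : N x = m <;>
    simp [Set.indicator, s, hx, hm]
  rw [gw_eq_qParam (hN x hx), hm]

/-- The constant in the transformation is 1, by evaluation at the fixed point `i`. -/
lemma Theta_S_inv {w : ℕ} (hcard : Fintype.card J = 2 * w) (hw : (-I) ^ w = 1)
    (hper : ∀ x : J → ℤ, (∀ j, (n j : ℤ) ∣ x j) → x ∈ M)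
    (hdual : ∀ y : J → ℤ, (∀ x ∈ M, ∏ j, (ZMod.stdAddChar ((x j : ZMod (n j)) * (y j : ZMod (n j))) : ℂ) = 1) ↔ y ∈ M)
    {τ : ℂ} (hτ : 0 < τ.im) : τ ^ w * Theta n M τ = Theta n M (-1 / τ) := by
  obtain ⟨κ, hκ⟩ := Theta_S_aux hcard hw hper hdual
  have h1 := hκ I (by simp)
  have hI : (-1 : ℂ) / I = I := by
    rw [div_eq_iff Complex.I_ne_zero, Complex.I_mul_I]
  have hIw : I ^ w = 1 := by
    have : I ^ w * (-I) ^ w = 1 := by rw [← mul_pow]; simp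
    rwa [hw, mul_one] at this
  rw [hI, hIw, one_mul] at h1
  have : κ = 1 := by
    have := mul_right_cancel₀ (Theta_I_ne M (n := n)) ((one_mul _).trans h1)
    exact this.symm
  rw [hκ τ hτ, this, one_mul]

omit [∀ j, NeZero (n j)] in
lemma Theta_T_inv (N : (J → ℤ) → ℕ) (hN : ∀ x ∈ M, ∑ j, ((x j : ℚ) ^ 2 / n j) = 2 * N x) (τ : ℂ) :
    Theta n M (τ + 1) = Theta n M τ := by
  unfold Theta
  refine tsum_congr fun x => ?_
  split_ifs with hx
  · rw [gw_eq_qParam (hN x hx), gw_eq_qParam (hN x hx)]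
    congr 1
    simp only [Function.Periodic.qParam, Complex.ofReal_one, div_one]
    rw [mul_add, Complex.exp_add, mul_one, Complex.exp_two_pi_mul_I, mul_one]
  · rfl

lemma differentiableAt_Theta
    (hdual : ∀ y : J → ℤ, (∀ x ∈ M, ∏ j, (ZMod.stdAddChar ((x j : ZMod (n j)) * (y j : ZMod (n j))) : ℂ) = 1) ↔ y ∈ M) :
    DifferentiableOn ℂ (Theta n M) {τ | 0 < τ.im} := by
  have e : ∀ τ ∈ {τ : ℂ | 0 < τ.im}, Theta n M τ = (Fintype.card (Cd n M) : ℂ)⁻¹ *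
      ∑ c : Cd n M, ∏ j, jacobiTheta₂ (((c.1 j).val : ℤ) / n j) (τ / n j) := fun τ hτ => by
    rw [sum_jacobi hdual hτ, inv_mul_cancel_left₀]
    exact_mod_cast Fintype.card_ne_zero
  refine DifferentiableOn.congr (fun τ hτ => ?_) e
  refine (DifferentiableAt.const_mul (DifferentiableAt.fun_sum fun c _ => DifferentiableAt.fun_finsetProd fun j _ => ?_) _).differentiableWithinAt
  exact DifferentiableAt.comp τ (differentiableAt_jacobiTheta₂_snd _ (im_div_nat (n j) hτ)) (by fun_prop)

/-- The theta series of an even unimodular lattice is a modular form of level one, whose Fourier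
coefficients count the vectors of given norm. -/
theorem exists_thetaForm {w : ℕ} (hcard : Fintype.card J = 2 * w) (hw : (-I) ^ w = 1)
    (hper : ∀ x : J → ℤ, (∀ j, (n j : ℤ) ∣ x j) → x ∈ M)
    (hdual : ∀ y : J → ℤ, (∀ x ∈ M, ∏ j, (ZMod.stdAddChar ((x j : ZMod (n j)) * (y j : ZMod (n j))) : ℂ) = 1) ↔ y ∈ M)
    (N : (J → ℤ) → ℕ) (hN : ∀ x ∈ M, ∑ j, ((x j : ℚ) ^ 2 / n j) = 2 * N x) :
    ∃ f : ModularForm 𝒮ℒ (w : ℤ), ∀ m, (qExpansion 1 f).coeff m = (Nat.card {x : J → ℤ // x ∈ M ∧ N x = m} : ℕ) := by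
  let F : ℍ → ℂ := fun τ => Theta n M τ
  have hS : F ∣[(w : ℤ)] ModularGroup.S = F := by
    funext τ
    rw [ModularForm.SL_slash_apply, ModularGroup.denom_S, UpperHalfPlane.modular_S_smul, zpow_neg, zpow_natCast]
    have h := Theta_S_inv hcard hw hper hdual τ.im_pos
    have hne : (τ : ℂ) ^ w ≠ 0 := pow_ne_zero _ τ.ne_zero
    simp only [F]
    have e : (-(τ : ℂ))⁻¹ = -1 / (τ : ℂ) := by
      rw [inv_neg, neg_div, one_div]
    rw [e, ← h]
    field_simp
  have hT : F ∣[(w : ℤ)] ModularGroup.T = F := by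
    funext τ
    rw [ModularForm.SL_slash_apply, UpperHalfPlane.modular_T_smul]
    have hd : denom (ModularGroup.T : GL (Fin 2) ℝ) τ = 1 := by
      rw [ModularGroup.denom_apply]; simp [ModularGroup.T]
    simp only [F, hd, one_zpow, mul_one, UpperHalfPlane.coe_vadd]
    rw [add_comm]
    exact_mod_cast Theta_T_inv N hN _
  have hG := slash_action_generators_SL2Z hS hT
  have hsum : ∀ τ : ℍ, HasSum (fun m : ℕ => ((Nat.card {x : J → ℤ // x ∈ M ∧ N x = m} : ℕ) : ℂ) • Function.Periodic.qParam 1 τ ^ m) (F τ) :=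
    fun τ => hasSum_Theta N hN τ.im_pos
  let f : ModularForm 𝒮ℒ (w : ℤ) :=
    { toFun := F
      slash_action_eq' := fun γ hγ => by
        obtain ⟨A, rfl⟩ := hγ
        exact hG A
      holo' := by
        rw [UpperHalfPlane.mdifferentiable_iff]
        refine (differentiableAt_Theta hdual).congr fun z hz => ?_
        simp [F, ofComplex_apply_of_im_pos hz]
      bdd_at_cusps' := fun hc => by
        rw [Subgroup.IsArithmetic.isCusp_iff_isCusp_SL2Z] at hc
        rw [OnePoint.isBoundedAt_iff_forall_SL2Z hc]
        intro γ _
        rw [hG]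
        exact UpperHalfPlane.isBoundedAtImInfty_of_hasSum_qExpansion one_pos hsum }
  refine ⟨f, fun m => ?_⟩
  exact (ModularFormClass.qExpansion_coeff_unique (f := f) one_pos one_mem_strictPeriods_SL hsum m).symm
end ThetaForm

/-! ### The number of minimal vectors, from extremality -/

/-- The denominators of the diagonal form `Σ s²/14 + Σ d²/10`. -/
def nn : P1 ⊕ P1 → ℕ := Sum.elim (fun _ => 14) (fun _ => 10)

instance (j : P1 ⊕ P1) : NeZero (nn j) := by cases j <;> exact ⟨by simp [nn]⟩

/-- Splitting a vector indexed by `P¹ ⊔ P¹` into a pair. -/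
def spl : (P1 ⊕ P1 → ℤ) ≃ ZZ where
  toFun x := (fun ν => x (.inl ν), fun ν => x (.inr ν))
  invFun z := Sum.elim z.1 z.2
  left_inv x := by funext j; cases j <;> rfl
  right_inv z := rfl

/-- The model of `L_Q` as a subgroup of `ℤ^(P¹ ⊔ P¹)`. -/
def MMg : AddSubgroup (P1 ⊕ P1 → ℤ) where
  carrier := {x | spl x ∈ MM}
  zero_mem' := mem_MM_of_dvd (fun _ => dvd_zero _) (fun _ => dvd_zero _)
  add_mem' := fun hx hy => add_mem_MM hx hy
  neg_mem' := fun hx => neg_mem_MM hx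

lemma mem_MMg (x) : x ∈ MMg ↔ spl x ∈ MM := Iff.rfl

lemma sum_nn (x y : P1 ⊕ P1 → ℤ) : ∑ j, ((x j * y j : ℤ) : ℚ) / nn j = bil (spl x) (spl y) / 70 := by
  rw [Fintype.sum_sum_type]
  simp only [nn, Sum.elim_inl, Sum.elim_inr, bil]
  rw [← Finset.sum_add_distrib, Int.cast_sum, Finset.sum_div]
  refine Finset.sum_congr rfl fun ν _ => ?_
  rw [show (spl x).1 ν = x (.inl ν) from rfl, show (spl x).2 ν = x (.inr ν) from rfl,
    show (spl y).1 ν = y (.inl ν) from rfl, show (spl y).2 ν = y (.inr ν) from rfl]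
  push_cast
  ring

lemma prod_chr (x y : P1 ⊕ P1 → ℤ) :
    (∏ j, (ZMod.stdAddChar ((x j : ZMod (nn j)) * (y j : ZMod (nn j))) : ℂ) = 1) ↔ (70 : ℤ) ∣ bil (spl x) (spl y) := by
  have h1 : ∀ j, (ZMod.stdAddChar ((x j : ZMod (nn j)) * (y j : ZMod (nn j))) : ℂ)
      = Complex.exp (2 * Real.pi * Complex.I * (((x j * y j : ℤ) : ℂ) / nn j)) := by
    intro j
    have : (x j : ZMod (nn j)) * (y j : ZMod (nn j)) = ((x j * y j : ℤ) : ZMod (nn j)) := by push_cast; rfl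
    rw [this, ZMod.stdAddChar_coe, mul_div_assoc]
  have h2 : ∑ j, ((x j * y j : ℤ) : ℂ) / nn j = bil (spl x) (spl y) / 70 := by
    have := congrArg (fun q : ℚ => (q : ℂ)) (sum_nn x y)
    simpa only [Rat.cast_sum, Rat.cast_div, Rat.cast_intCast, Rat.cast_natCast, Rat.cast_ofNat] using this
  rw [Finset.prod_congr rfl fun j _ => h1 j, ← Complex.exp_sum, ← Finset.mul_sum, h2, Complex.exp_eq_one_iff]
  constructor
  · rintro ⟨k, hk⟩
    refine ⟨k, ?_⟩
    have h3 : (2 * Real.pi * Complex.I : ℂ) ≠ 0 := Complex.two_pi_I_ne_zero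
    have h4 : (bil (spl x) (spl y) : ℂ) / 70 = k := by
      apply mul_left_cancel₀ h3; rw [hk]; ring
    have h5 : (bil (spl x) (spl y) : ℂ) = 70 * k := by rw [← h4]; ring
    exact_mod_cast h5
  · rintro ⟨k, hk⟩
    refine ⟨k, ?_⟩
    rw [hk]; push_cast; ring

/-- The set of minimal vectors of the model. -/
def SM : Set ZZ := {x | x ∈ MM ∧ bil x x = 420}

/-- Since the theta series is a modular form of weight `32`, it is determined by its first three
coefficients, and so is the number of vectors of norm `6`. -/
theorem card_SM (hmin : ∀ x ∈ MM, x ≠ 0 → 420 ≤ bil x x) : Nat.card SM = 2611200 := by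
  have hcard : Fintype.card (P1 ⊕ P1) = 2 * 32 := by
    simp [P1, ZMod.card]
  have hw : (-Complex.I) ^ 32 = 1 := by
    rw [show 32 = 4 * 8 by rfl, pow_mul, show (-Complex.I) ^ 4 = 1 by
      rw [neg_pow, Complex.I_pow_four]; norm_num, one_pow]
  let N : (P1 ⊕ P1 → ℤ) → ℕ := fun x => (bil (spl x) (spl x) / 140).toNat
  have hpos : ∀ x : ZZ, 0 ≤ bil x x := fun x => Finset.sum_nonneg fun ν _ => by
    nlinarith [mul_self_nonneg (x.1 ν), mul_self_nonneg (x.2 ν)]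
  have hN' : ∀ x ∈ MMg, bil (spl x) (spl x) = 140 * N x := by
    intro x hx
    have h1 := bil_self_dvd hx
    have h2 := hpos (spl x)
    simp only [N]
    omega
  have hN : ∀ x ∈ MMg, ∑ j, ((x j : ℚ) ^ 2 / nn j) = 2 * N x := by
    intro x hx
    have h1 := sum_nn x x
    rw [hN' x hx] at h1
    have : ∑ j, ((x j : ℚ) ^ 2 / nn j) = ∑ j, ((x j * x j : ℤ) : ℚ) / nn j :=
      Finset.sum_congr rfl fun j _ => by push_cast; ring
    rw [this, h1]; push_cast; ring
  have hper : ∀ x : P1 ⊕ P1 → ℤ, (∀ j, (nn j : ℤ) ∣ x j) → x ∈ MMg := fun x hx =>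
    mem_MM_of_dvd (fun ν => hx (.inl ν)) (fun ν => hx (.inr ν))
  have hdual : ∀ y : P1 ⊕ P1 → ℤ, (∀ x ∈ MMg, ∏ j, (ZMod.stdAddChar ((x j : ZMod (nn j)) * (y j : ZMod (nn j))) : ℂ) = 1) ↔ y ∈ MMg := by
    intro y
    constructor
    · intro h
      refine mem_MM_of_dual fun x hx => ?_
      have := (prod_chr (spl.symm x) y).1 (h _ (by rw [mem_MMg, Equiv.apply_symm_apply]; exact hx))
      rwa [Equiv.apply_symm_apply] at this
    · intro hy x hx
      exact (prod_chr x y).2 (bil_dvd hx hy)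
  obtain ⟨f, hf⟩ := exists_thetaForm hcard hw hper hdual N hN
  have h0 : ∀ x ∈ MMg, x ≠ 0 → 3 ≤ N x := by
    intro x hx hx0
    have h1 := hmin (spl x) hx (fun h => hx0 (spl.injective h))
    have h2 := hN' x hx
    omega
  have hN0 : N 0 = 0 := by
    have : bil (spl 0) (spl 0) = 0 := by
      rw [show spl 0 = 0 from rfl]; simp [bil]
    simp [N, this]
  have c0 : (UpperHalfPlane.qExpansion 1 f).coeff 0 = 1 := by
    rw [hf, Nat.card_eq_one_iff_exists.2, Nat.cast_one]
    refine ⟨⟨0, MMg.zero_mem, hN0⟩, fun ⟨x, hx, hx0⟩ => Subtype.ext ?_⟩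
    by_contra h
    have := h0 x hx h
    omega
  have ce : ∀ m : ℕ, 0 < m → m < 3 → (UpperHalfPlane.qExpansion 1 f).coeff m = 0 := by
    intro m hm hm3
    have : IsEmpty {x : P1 ⊕ P1 → ℤ // x ∈ MMg ∧ N x = m} := ⟨fun ⟨x, hx, hxm⟩ => by
      by_cases h : x = 0
      · rw [h, hN0] at hxm; omega
      · have := h0 x hx h; omega⟩
    rw [hf, Nat.card_of_isEmpty, Nat.cast_zero]
  have c3 := extremal_coeff f c0 (ce 1 (by norm_num) (by norm_num)) (ce 2 (by norm_num) (by norm_num))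
  rw [hf] at c3
  have c3' : Nat.card {x : P1 ⊕ P1 → ℤ // x ∈ MMg ∧ N x = 3} = 2611200 := by exact_mod_cast c3
  rw [← c3']
  refine Nat.card_congr (spl.symm.subtypeEquiv fun x => ?_)
  have e : spl (spl.symm x) = x := Equiv.apply_symm_apply _ _
  constructor
  · rintro ⟨hx, h⟩
    refine ⟨by rw [mem_MMg, e]; exact hx, ?_⟩
    simp only [N, e, h]; rfl
  · rintro ⟨hx, h⟩
    have h1 := hN' _ hx
    rw [e, h] at h1
    rw [mem_MMg, e] at hx
    exact ⟨hx, h1⟩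

/-! ### The action of `SL₂(F₃₁) × {±1}` -/

instance fact31 : Fact (Nat.Prime 31) := ⟨by norm_num⟩

/-- The group `SL₂(F₃₁)`. -/
abbrev SL : Type := Matrix.SpecialLinearGroup (Fin 2) (ZMod 31)

/-- The Legendre character. -/
def chi (a : ZMod 31) : ℤ := quadraticChar (ZMod 31) a

lemma chi_mul (a b) : chi (a * b) = chi a * chi b := map_mul (quadraticChar (ZMod 31)) a b
lemma chi_zero : chi 0 = 0 := by simp [chi]
lemma chi_one : chi 1 = 1 := by simp [chi]
lemma chi_sq {a} (h : a ≠ 0) : chi a * chi a = 1 := by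
  rw [← sq]; exact quadraticChar_sq_one h
lemma chi_inv (a) : chi a⁻¹ = chi a := by
  by_cases h : a = 0
  · simp [h]
  · have h1 : chi a * chi a⁻¹ = 1 := by rw [← chi_mul, mul_inv_cancel₀ h, chi_one]
    have h2 := chi_sq h
    have h3 : chi a ≠ 0 := fun h0 => by rw [h0] at h2; simp at h2
    exact mul_left_cancel₀ h3 (h1.trans h2.symm)
set_option maxRecDepth 100000 in
lemma chi_neg_one : chi (-1) = -1 := by
  unfold chi; rw [quadraticChar_apply]; decide +kernel

/-- The extension of a function on `P¹(F₃₁)` to a function on `F₃₁²` which is homogeneous with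
respect to the Legendre character. -/
def hat (x : P1 → ℤ) (u : ZMod 31 × ZMod 31) : ℤ :=
  if u.2 = 0 then chi u.1 * x none else chi u.2 * x (some (u.1 / u.2))

/-- Representatives of the points of `P¹(F₃₁)`. -/
def rp : P1 → ZMod 31 × ZMod 31
  | none => (1, 0)
  | some n => (n, 1)

/-- Row vectors times matrices. -/
def mulr (u : ZMod 31 × ZMod 31) (g : SL) : ZMod 31 × ZMod 31 :=
  (u.1 * g.1 0 0 + u.2 * g.1 1 0, u.1 * g.1 0 1 + u.2 * g.1 1 1)

lemma hat_rp (x P) : hat x (rp P) = x P := by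
  cases P <;> simp [hat, rp, chi_one]

lemma hat_smul (x) (l a b : ZMod 31) : hat x (l * a, l * b) = chi l * hat x (a, b) := by
  by_cases hl : l = 0
  · simp [hl, hat, chi_zero]
  · by_cases hb : b = 0
    · simp [hat, hb, chi_mul, mul_assoc]
    · simp [hat, hb, hl, chi_mul, mul_assoc, mul_div_mul_left]

/-- The action of `SL₂(F₃₁)` on functions on `P¹(F₃₁)`. -/
def sact (g : SL) (x : P1 → ℤ) : P1 → ℤ := fun P => hat x (mulr (rp P) g)

lemma hat_sact (g x u) : hat (sact g x) u = hat x (mulr u g) := by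
  obtain ⟨a, b⟩ := u
  by_cases hb : b = 0
  · have : mulr (a, b) g = (a * (mulr (1, 0) g).1, a * (mulr (1, 0) g).2) := by
      simp [mulr, hb]
    rw [this, hat_smul, hat, if_pos hb]
    rfl
  · have : mulr (a, b) g = (b * (mulr (a / b, 1) g).1, b * (mulr (a / b, 1) g).2) := by
      have h : b * (a / b) = a := by field_simp
      simp only [mulr, one_mul, mul_add, ← mul_assoc, h]
    rw [this, hat_smul]
    conv_lhs => rw [hat]
    simp [hb, sact, rp]

lemma mulr_mul (u g h) : mulr u (g * h) = mulr (mulr u g) h := by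
  simp only [mulr, Matrix.SpecialLinearGroup.coe_mul, Matrix.mul_apply, Fin.sum_univ_two]
  exact Prod.ext (by ring) (by ring)

lemma sact_mul (g h x) : sact (g * h) x = sact g (sact h x) := by
  funext P
  rw [sact, sact, hat_sact, mulr_mul]

lemma sact_one (x) : sact 1 x = x := by
  funext P
  have : mulr (rp P) 1 = rp P := by simp [mulr]
  rw [sact, this, hat_rp]

/-- The translation by `c`. -/
def TT (c : ZMod 31) : SL := ⟨!![1, 0; c, 1], by simp [Matrix.det_fin_two]⟩
/-- The inversion. -/
def SS : SL := ⟨!![0, -1; 1, 0], by simp [Matrix.det_fin_two]⟩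

lemma sl_mul (g h : SL) (i j) : (g * h).1 i j = g.1 i 0 * h.1 0 j + g.1 i 1 * h.1 1 j := by
  change (g.1 * h.1) i j = _
  rw [Matrix.mul_apply, Fin.sum_univ_two]
lemma sl_ext {g h : SL} (h1 : g.1 0 0 = h.1 0 0) (h2 : g.1 0 1 = h.1 0 1) (h3 : g.1 1 0 = h.1 1 0)
    (h4 : g.1 1 1 = h.1 1 1) : g = h := by
  apply Subtype.ext
  ext i j
  fin_cases i <;> fin_cases j <;> assumption
lemma TT_val (c) : (TT c).1 = !![1, 0; c, 1] := rfl
lemma SS_val : SS.1 = !![0, -1; 1, 0] := rfl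

/-- The group `SL₂(F₃₁)` is generated by the translations and the inversion. -/
lemma SL_induction {p : SL → Prop} (hT : ∀ c, p (TT c)) (hS : p SS)
    (hmul : ∀ g h, p g → p h → p (g * h)) (g : SL) : p g := by
  have hU : ∀ b, p (SS * TT b * (SS * SS * SS)) := fun b =>
    hmul _ _ (hmul _ _ hS (hT b)) (hmul _ _ (hmul _ _ hS hS) hS)
  have key : ∀ g : SL, g.1 0 1 ≠ 0 → p g := by
    intro g hb
    have e : g = TT ((g.1 1 1 - 1) / g.1 0 1) * (SS * TT (-g.1 0 1) * (SS * SS * SS)) * TT ((g.1 0 0 - 1) / g.1 0 1) := by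
      have hd := g.2
      rw [Matrix.det_fin_two] at hd
      apply sl_ext <;>
        simp only [sl_mul, TT_val, SS_val, Matrix.of_apply, Matrix.cons_val', Matrix.cons_val_zero,
          Matrix.cons_val_one, Matrix.cons_val_fin_one] <;>
        field_simp <;> first | (ring1) | linear_combination (-g.1 0 1) * hd
    rw [e]
    exact hmul _ _ (hmul _ _ (hT _) (hU _)) (hT _)
  by_cases hb : g.1 0 1 = 0
  · have hd := g.2
    rw [Matrix.det_fin_two, hb, zero_mul, sub_zero] at hd
    have ha : g.1 0 0 ≠ 0 := left_ne_zero_of_mul_eq_one hd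
    have e : g = (g * SS) * (SS * SS * SS) := by
      apply sl_ext <;> simp [sl_mul, SS_val]
    rw [e]
    refine hmul _ _ (key _ ?_) (hmul _ _ (hmul _ _ hS hS) hS)
    simpa [sl_mul, SS_val] using ha
  · exact key g hb

lemma sact_TT_some (c x i) : sact (TT c) x (some i) = x (some (i + c)) := by
  simp [sact, rp, mulr, TT, hat, chi_one]
lemma sact_TT_none (c x) : sact (TT c) x none = x none := by
  simp [sact, rp, mulr, TT, hat, chi_one]
lemma sact_SS_none (x) : sact SS x none = -x (some 0) := by
  simp [sact, rp, mulr, SS, hat, chi_neg_one]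
lemma sact_SS_zero (x) : sact SS x (some 0) = x none := by
  simp [sact, rp, mulr, SS, hat, chi_one]
lemma sact_SS_some (x) {i} (hi : i ≠ 0) : sact SS x (some i) = chi (-i) * x (some (-i⁻¹)) := by
  simp [sact, rp, mulr, SS, hat, hi]

/-- The inversion as a permutation of `P¹(F₃₁)`. -/
def sperm : P1 ≃ P1 := Function.Involutive.toPerm
  (fun P => match P with
    | none => some 0
    | some i => if i = 0 then none else some (-i⁻¹))
  (fun P => by
    rcases P with _ | i
    · simp
    · by_cases h : i = 0
      · simp [h]
      · simp [h, inv_neg])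

lemma sperm_none : sperm none = some 0 := rfl
lemma sperm_zero : sperm (some 0) = none := by
  change (if (0 : ZMod 31) = 0 then none else some (-(0 : ZMod 31)⁻¹)) = _
  rw [if_pos rfl]
lemma sperm_some {i} (h : i ≠ 0) : sperm (some i) = some (-i⁻¹) := by
  change (if i = 0 then none else _) = _
  rw [if_neg h]

/-- The action is by isometries. It suffices to check the generators. -/
lemma sum_sact (g : SL) : ∀ x y : P1 → ℤ, ∑ P, sact g x P * sact g y P = ∑ P, x P * y P := by
  induction g using SL_induction with
  | hT c =>
    intro x y
    refine Fintype.sum_equiv (Equiv.optionCongr (Equiv.addRight c)) _ _ fun P => ?_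
    cases P <;> simp [sact_TT_some, sact_TT_none]
  | hS =>
    intro x y
    refine Fintype.sum_equiv sperm _ _ fun P => ?_
    rcases P with _ | i
    · rw [sperm_none, sact_SS_none, sact_SS_none, neg_mul_neg]
    · by_cases h : i = 0
      · rw [h, sact_SS_zero, sact_SS_zero, sperm_zero]
      · have h2 := chi_sq (neg_ne_zero.2 h)
        rw [sperm_some h, sact_SS_some _ h, sact_SS_some _ h]
        linear_combination (x (some (-i⁻¹)) * y (some (-i⁻¹))) * h2
  | hmul g h hg hh =>
    intro x y
    simp only [sact_mul, hg, hh]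

/-- The group acting on the lattice. -/
abbrev GG : Type := SL × ℤˣ

/-- The action on the model; the second factor changes the sign of the second component. -/
def act (γ : GG) (x : ZZ) : ZZ := (sact γ.1 x.1, fun P => (γ.2 : ℤ) * sact γ.1 x.2 P)

lemma hat_mul (c : ℤ) (x u) : hat (fun P => c * x P) u = c * hat x u := by
  unfold hat; split_ifs <;> ring

lemma sact_cmul (g) (c : ℤ) (x) : sact g (fun P => c * x P) = fun P => c * sact g x P := by
  funext P; exact hat_mul _ _ _

lemma act_mul (γ δ : GG) (x : ZZ) : act (γ * δ) x = act γ (act δ x) := by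
  simp only [act, Prod.fst_mul, Prod.snd_mul, sact_mul, sact_cmul, Units.val_mul, mul_assoc]

lemma act_one (x : ZZ) : act 1 x = x := by
  simp [act, sact_one]

lemma act_inv_act (γ : GG) (x : ZZ) : act γ⁻¹ (act γ x) = x := by
  rw [← act_mul, inv_mul_cancel, act_one]

lemma bil_act (γ : GG) (x y : ZZ) : bil (act γ x) (act γ y) = bil x y := by
  have h1 := sum_sact γ.1 x.1 y.1
  have h2 := sum_sact γ.1 x.2 y.2
  have hu : (γ.2 : ℤ) * γ.2 = 1 := by
    rw [← Units.val_mul, Int.units_mul_self, Units.val_one]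
  simp only [bil, act, Finset.sum_add_distrib, ← Finset.mul_sum, h1]
  congr 2
  rw [← h2]
  refine Finset.sum_congr rfl fun P _ => ?_
  linear_combination (sact γ.1 x.2 P * sact γ.1 y.2 P) * hu

/-! ### Invariance of the lattice under the group -/

/-- Entry of a list, with a default value. -/
def nth {α : Type} (d : α) (l : List α) : ℕ → α := List.rec (fun _ => d) (fun a _ ih n => Nat.rec a (fun m _ => ih m) n) l
/-- Inverses modulo 31. -/
def invs : List ℕ := [0, 1, 16, 21, 8, 25, 26, 9, 4, 7, 28, 17, 13, 12, 20, 29, 2, 11, 19, 18, 14, 3, 24, 27, 22, 5, 6, 23, 10, 15, 30]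
/-- Quadratic residuosity modulo 31. -/
def chis : List Bool := [true, true, true, false, true, true, false, true, true, true, true, false, false, false, true, false, true, false, true, true, true, false, false, false, false, true, false, false, true, false, false]

set_option maxRecDepth 100000 in
lemma chi_eq : ∀ i : ZMod 31, i ≠ 0 → chi i = if nth true chis i.val then 1 else -1 := by
  simp only [chi, quadraticChar_apply]
  decide +kernel

set_option maxRecDepth 100000 in
lemma inv_eq_aux : ∀ i : ZMod 31, i ≠ 0 → i * (nth 0 invs i.val : ℕ) = 1 := by decide +kernel

lemma inv_eq (i : ZMod 31) (h : i ≠ 0) : i⁻¹ = (nth 0 invs i.val : ℕ) :=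
  inv_eq_of_mul_eq_one_right (inv_eq_aux i h)

/-- The entries of the code generators, as a function of the difference. -/
def vt : List ℕ := [1, 3, 3, 7, 3, 3, 7, 3, 3, 3, 3, 7, 7, 7, 3, 7, 3, 7, 3, 3, 3, 7, 7, 7, 7, 3, 7, 7, 3, 7, 7]

set_option maxRecDepth 100000 in
lemma vgen_eq_aux : ∀ i : ZMod 31, vgen 0 (some i) = (nth 0 vt i.val : ℕ) := by decide +kernel

lemma vgen_eq (μ i : ZMod 31) : vgen μ (some i) = (nth 0 vt (i - μ).val : ℕ) := by
  rw [← vgen_eq_aux]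
  have := vgen_trans 0 (i - μ) μ
  rwa [zero_add, sub_add_cancel] at this

set_option maxRecDepth 100000 in
/-- Orthogonality to all the generators of the images of the generators under the inversion, with
natural numbers as representatives modulo 35. -/
lemma SS_check : ∀ ν μ : ZMod 31, ((∑ i : ZMod 31, (if i = 0 then 58 * nth 0 vt (0 - μ).val else
    (if nth true chis (-i).val then 1 else 34) * nth 0 vt (-((nth 0 invs i.val : ℕ) : ZMod 31) - ν).val
      * nth 0 vt (i - μ).val)) + 12 * nth 0 vt (0 - ν).val) % 35 = 0 := by
  decide +kernel

/-- The inversion on words. -/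
def sword (w : P1 → ZMod 35) : P1 → ZMod 35
  | none => 6 * w (some 0)
  | some i => if i = 0 then 29 * w none else ((chi (-i) : ℤ) : ZMod 35) * w (some (-i⁻¹))

lemma dot_sword_vgen (ν μ) : dot (sword (vgen ν)) (vgen μ) = 0 := by
  have h := SS_check ν μ
  rw [← Nat.dvd_iff_mod_eq_zero, ← ZMod.natCast_eq_zero_iff, Nat.cast_add, Nat.cast_sum] at h
  rw [← h, dot, Fintype.sum_option, add_comm]
  refine congrArg₂ (· + ·) ?_ ?_
  · refine Finset.sum_congr rfl fun i _ => ?_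
    by_cases hi : i = 0
    · subst hi
      have e2 : vgen ν none = 2 := rfl
      simp only [sword, if_true, vgen_eq μ, e2]
      push_cast
      ring
    · simp only [sword, if_neg hi, chi_eq _ (neg_ne_zero.2 hi), inv_eq i hi, vgen_eq]
      have e : ((34 : ℕ) : ZMod 35) = -1 := by decide
      rw [Nat.cast_mul, Nat.cast_mul]
      split_ifs
      · rw [Int.cast_one, Nat.cast_one]
      · rw [e, Int.cast_neg, Int.cast_one]
  · have e2 : vgen μ none = 2 := rfl
    simp only [sword, vgen_eq ν, e2]
    push_cast
    ring

lemma sword_add (w w') : sword (w + w') = sword w + sword w' := by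
  funext P
  rcases P with _ | i
  · simp [sword, mul_add]
  · by_cases h : i = 0
    · simp [sword, h, mul_add]
    · simp [sword, h, mul_add]

lemma sword_neg (w) : sword (-w) = -sword w := by
  funext P
  rcases P with _ | i
  · simp [sword]
  · by_cases h : i = 0
    · simp [sword, h]
    · simp [sword, h]

lemma sword_mem {w} (hw : w ∈ Qcode) : sword w ∈ Qcode := by
  induction hw using AddSubgroup.closure_induction with
  | mem x hx =>
    obtain ⟨ν, rfl⟩ := hx
    exact (mem_Qcode_iff _).2 fun μ => dot_sword_vgen ν μ
  | zero =>
    have : sword 0 = 0 := by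
      have := sword_add 0 0
      rw [add_zero] at this
      simpa using this
    rw [this]; exact Qcode.zero_mem
  | add x y _ _ hx hy => rw [sword_add]; exact Qcode.add_mem hx hy
  | neg x _ hx => rw [sword_neg]; exact Qcode.neg_mem hx

lemma act_mem_of {g : SL} (h : ∀ x ∈ MM, act (g, 1) x ∈ MM) (ε : ℤˣ) {x} (hx : x ∈ MM) :
    act (g, ε) x ∈ MM := by
  have h1 := h x hx
  rcases Int.units_eq_one_or ε with rfl | rfl
  · exact h1
  · refine ⟨fun ν => ?_, ?_⟩
    · have := h1.1 ν
      simp only [act, Units.val_one, Units.val_neg, one_mul, neg_mul] at this ⊢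
      obtain ⟨k, hk⟩ := this
      exact ⟨k + sact g x.2 ν, by linarith⟩
    · have : word (act (g, -1) x) = (29 : ZMod 35) • word (act (g, 1) x) := by
        funext ν
        simp only [word, act, Units.val_one, Units.val_neg, Pi.smul_apply, smul_eq_mul]
        push_cast
        have e : (35 : ZMod 35) = 0 := by decide
        linear_combination (-12 * (sact g x.1 ν : ZMod 35) + 18 * sgn ν * sact g x.2 ν) * e
      rw [this]
      exact smul_mem_Q _ h1.2

lemma act_fst_mem (g : SL) : ∀ x ∈ MM, act (g, 1) x ∈ MM := by
  induction g using SL_induction with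
  | hT c =>
    intro x hx
    have key : ∀ i, (act (TT c, 1) x).1 (some i) = x.1 (some (i + c)) ∧
        (act (TT c, 1) x).2 (some i) = x.2 (some (i + c)) := fun i => by
      simp [act, sact_TT_some]
    have key' : (act (TT c, 1) x).1 none = x.1 none ∧ (act (TT c, 1) x).2 none = x.2 none := by
      simp [act, sact_TT_none]
    refine ⟨fun ν => ?_, (mem_Qcode_iff _).2 fun μ => ?_⟩
    · rcases ν with _ | i
      · rw [key'.1, key'.2]; exact hx.1 _
      · rw [(key i).1, (key i).2]; exact hx.1 _
    · rw [← (mem_Qcode_iff _).1 hx.2 (μ + c)]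
      refine Fintype.sum_equiv (Equiv.optionCongr (Equiv.addRight c)) _ _ fun P => ?_
      rcases P with _ | i
      · simp only [word, key'.1, key'.2]; rfl
      · simp only [word, (key i).1, (key i).2]
        rw [← vgen_trans μ i c]; rfl
  | hS =>
    intro x hx
    have h0 : (act (SS, 1) x).1 none = - x.1 (some 0) ∧ (act (SS, 1) x).2 none = - x.2 (some 0) := by
      simp [act, sact_SS_none]
    have h1 : (act (SS, 1) x).1 (some 0) = x.1 none ∧ (act (SS, 1) x).2 (some 0) = x.2 none := by
      simp [act, sact_SS_zero]
    have h2 : ∀ i, i ≠ 0 → (act (SS, 1) x).1 (some i) = chi (-i) * x.1 (some (-i⁻¹)) ∧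
        (act (SS, 1) x).2 (some i) = chi (-i) * x.2 (some (-i⁻¹)) := fun i hi => by
      simp [act, sact_SS_some _ hi]
    have e : (35 : ZMod 35) = 0 := by decide
    refine ⟨fun ν => ?_, ?_⟩
    · rcases ν with _ | i
      · rw [h0.1, h0.2]
        have := hx.1 (some 0)
        obtain ⟨k, hk⟩ := this
        exact ⟨-k, by linarith⟩
      · by_cases hi : i = 0
        · rw [hi, h1.1, h1.2]; exact hx.1 _
        · rw [(h2 i hi).1, (h2 i hi).2, ← mul_sub]; exact (hx.1 _).mul_left _
    · have : word (act (SS, 1) x) = sword (word x) := by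
        funext ν
        rcases ν with _ | i
        · simp only [word, h0.1, h0.2, sword, sgn]
          simp only [if_true, reduceCtorEq, if_false]
          push_cast
          linear_combination (-3 * (x.1 (some 0) : ZMod 35) + 3 * x.2 (some 0)) * e
        · by_cases hi : i = 0
          · simp only [hi, word, h1.1, h1.2, sword, sgn]
            simp only [if_true, reduceCtorEq, if_false]
            push_cast
            linear_combination (-12 * (x.1 none : ZMod 35) - 18 * x.2 none) * e
          · simp only [word, (h2 i hi).1, (h2 i hi).2, sword, sgn, hi]
            simp only [reduceCtorEq, if_false]
            push_cast
            ring
      rw [this]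
      exact sword_mem hx.2
  | hmul g h hg hh =>
    intro x hx
    have : act (g * h, 1) x = act (g, 1) (act (h, 1) x) := by
      rw [← act_mul]; rfl
    rw [this]
    exact hg _ (hh _ hx)

lemma act_mem (γ : GG) {x} (hx : x ∈ MM) : act γ x ∈ MM :=
  act_mem_of (act_fst_mem γ.1) γ.2 hx

/-! ### A parametrization of the group by a Bruhat-type decomposition -/

/-- Coset representatives, indexed by the projective line. -/
def hh : P1 → SL
  | none => 1
  | some n => ⟨!![n, 1; -1, 0], by simp [Matrix.det_fin_two]⟩

/-- Lower triangular matrices. -/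
def bb (a : ZMod 31) (μ : {μ : ZMod 31 // μ ≠ 0}) : SL :=
  ⟨!![μ.1, 0; -(μ.1 * a), μ.1⁻¹], by simp [Matrix.det_fin_two, μ.2]⟩

lemma hh_some_val (n) : (hh (some n)).1 = !![n, 1; -1, 0] := rfl
lemma bb_val (a μ) : (bb a μ).1 = !![μ.1, 0; -(μ.1 * a), μ.1⁻¹] := rfl

/-- The product `h_n⁻¹ b`, written out. -/
def hb (p : P1 × ZMod 31 × {μ : ZMod 31 // μ ≠ 0}) : SL :=
  match p with
  | (none, a, μ) => bb a μ
  | (some n, a, μ) => ⟨!![μ.1 * a, -μ.1⁻¹; μ.1 - n * (μ.1 * a), n * μ.1⁻¹], by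
      have := μ.2; simp [Matrix.det_fin_two]; field_simp; ring⟩

lemma hh_mul_hb (n a μ) : hh n * hb (n, a, μ) = bb a μ := by
  rcases n with _ | n
  · exact one_mul _
  · apply sl_ext <;> rw [sl_mul] <;> simp [hh_some_val, bb_val, hb]

/-- Every group element is uniquely the product of the inverse of an `h_n` and a triangular matrix. -/
lemma hb_bijective : Function.Bijective hb := by
  refine ⟨?_, fun g => ?_⟩
  · rintro ⟨n, a, μ, hμ⟩ ⟨n', a', μ', hμ'⟩ h
    have e : ∀ i j, (hb (n, a, ⟨μ, hμ⟩)).1 i j = (hb (n', a', ⟨μ', hμ'⟩)).1 i j := fun i j => by rw [h]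
    have e00 := e 0 0
    have e01 := e 0 1
    have e10 := e 1 0
    have e11 := e 1 1
    rcases n with _ | n <;> rcases n' with _ | n' <;>
      simp [hb, bb_val] at e00 e01 e10 e11
    · subst e00
      simp [hμ] at e10
      simp [e10]
    · exact absurd e01 hμ'
    · exact absurd e01 hμ
    · subst e01
      simp [hμ] at e00 e11
      simp [e00, e11]
  · have hd := g.2
    rw [Matrix.det_fin_two] at hd
    by_cases hb0 : g.1 0 1 = 0
    · rw [hb0, zero_mul, sub_zero] at hd
      have ha : g.1 0 0 ≠ 0 := left_ne_zero_of_mul_eq_one hd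
      refine ⟨(none, -g.1 1 0 / g.1 0 0, ⟨g.1 0 0, ha⟩), ?_⟩
      apply sl_ext <;> simp [hb, bb_val, hb0]
      · field_simp
      · exact inv_eq_of_mul_eq_one_right hd
    · refine ⟨(some (-g.1 1 1 / g.1 0 1), -g.1 0 0 * g.1 0 1, ⟨-(g.1 0 1)⁻¹, neg_ne_zero.2 (inv_ne_zero hb0)⟩), ?_⟩
      apply sl_ext <;> simp [hb]
      · field_simp
      · field_simp
        linear_combination hd
      · field_simp

lemma sact_bb_some (a μ y i) : sact (bb a μ) y (some i) = chi μ.1 * y (some (μ.1 ^ 2 * (i - a))) := by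
  have h := μ.2
  have e : (i * μ.1 + -(μ.1 * a)) / μ.1⁻¹ = μ.1 ^ 2 * (i - a) := by field_simp; ring
  simp [sact, rp, mulr, bb_val, hat, h, chi_inv, e]

lemma sact_bb_none (a μ y) : sact (bb a μ) y none = chi μ.1 * y none := by
  simp [sact, rp, mulr, bb_val, hat]

lemma sact_hh_none (y P) : sact (hh none) y P = y P := congrFun (sact_one y) P
lemma sact_hh_some_none (n y) : sact (hh (some n)) y none = y (some n) := by
  simp [sact, rp, mulr, hh_some_val, hat, chi_one]
lemma sact_hh_some_zero (n y) : sact (hh (some n)) y (some 0) = -y none := by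
  simp [sact, rp, mulr, hh_some_val, hat, chi_neg_one]
lemma sact_hh_some_some (n y) {i} (hi : i ≠ 0) :
    sact (hh (some n)) y (some i) = chi i * y (some (n - i⁻¹)) := by
  have e : (i * n - 1) / i = n - i⁻¹ := by field_simp
  simp [sact, rp, mulr, hh_some_val, hat, hi, ← e, sub_eq_add_neg]

/-- The sum of products of two functions on the projective line. -/
def dotZ (x y : P1 → ℤ) : ℤ := ∑ P, x P * y P

/-- The function `y` composed with the affine map `i ↦ q (i - a)`. -/
def aff (a q : ZMod 31) (y : P1 → ℤ) : P1 → ℤ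
  | none => y none
  | some i => y (some (q * (i - a)))

/-- The inner product with an image under a group element, for the decomposition of `hb`. -/
lemma dotZ_hb (n a μ x y) : dotZ x (sact (hb (n, a, μ)) y) =
    chi μ.1 * dotZ (sact (hh n) x) (aff a (μ.1 ^ 2) y) := by
  rw [dotZ, ← sum_sact (hh n)]
  simp only [← sact_mul, hh_mul_hb, dotZ, Finset.mul_sum]
  refine Finset.sum_congr rfl fun P _ => ?_
  rcases P with _ | i
  · rw [sact_bb_none]; simp only [aff]; ring
  · rw [sact_bb_some]; simp only [aff]; ring

lemma bil_eq_dotZ (x y : ZZ) : bil x y = 5 * dotZ x.1 y.1 + 7 * dotZ x.2 y.2 := by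
  simp only [bil, dotZ, Finset.sum_add_distrib, Finset.mul_sum]

/-- The nonzero squares modulo 31. -/
def qrs : List ℕ := [1,2,4,5,7,8,9,10,14,16,18,19,20,25,28]

set_option maxRecDepth 100000 in
lemma units_map : ((Finset.univ : Finset (ZMod 31)).filter (· ≠ 0)).val.map
    (fun μ => (nth true chis μ.val, μ ^ 2)) =
    ((qrs.map fun q : ℕ => (true, (q : ZMod 31))) ++ (qrs.map fun q : ℕ => (false, (q : ZMod 31))) : List _) := by
  decide +kernel

/-- Scalars enter only through their quadratic character and their squares, and each nonzero square
arises once with each sign because `-1` is not a square. -/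
lemma sum_units (F : ℤ → ZMod 31 → ℕ) :
    ∑ μ : {μ : ZMod 31 // μ ≠ 0}, F (chi μ.1) (μ.1 ^ 2) =
      (qrs.map fun q : ℕ => F 1 (q : ZMod 31) + F (-1) (q : ZMod 31)).sum := by
  have h := congrArg (fun s : Multiset (Bool × ZMod 31) =>
    (s.map fun p => F (if p.1 then 1 else -1) p.2).sum) units_map
  simp only [Multiset.map_map, Multiset.map_coe, Multiset.sum_coe, List.map_append, List.map_map,
    List.sum_append] at h
  rw [List.sum_map_add]
  refine Eq.trans ?_ h
  rw [← Finset.sum_subtype (p := fun μ : ZMod 31 => μ ≠ 0)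
    (Finset.univ.filter (· ≠ 0)) (by simp) (f := fun μ => F (chi μ) (μ ^ 2))]
  refine Finset.sum_congr rfl fun μ hμ => ?_
  rw [chi_eq μ (by simpa using hμ)]
  rfl

/-- A sum over the group, by means of the parametrization. -/
lemma sum_GG (f : ℤ → ℕ) (x y : ZZ) : ∑ γ : GG, f (bil x (act γ y)) =
    ∑ n : P1, ∑ a : ZMod 31, (qrs.map fun q : ℕ =>
      (fun A B => f (A + B) + f (-(A + B)) + f (A - B) + f (B - A))
        (5 * dotZ (sact (hh n) x.1) (aff a (q : ZMod 31) y.1))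
        (7 * dotZ (sact (hh n) x.2) (aff a (q : ZMod 31) y.2))).sum := by
  rw [Fintype.sum_prod_type, ← (Equiv.ofBijective hb hb_bijective).sum_comp, Fintype.sum_prod_type]
  refine Finset.sum_congr rfl fun n _ => ?_
  rw [Fintype.sum_prod_type]
  refine Finset.sum_congr rfl fun a _ => ?_
  have h := sum_units fun σ q =>
    f (σ * (5 * dotZ (sact (hh n) x.1) (aff a q y.1) + 7 * dotZ (sact (hh n) x.2) (aff a q y.2)))
    + f (σ * (5 * dotZ (sact (hh n) x.1) (aff a q y.1) - 7 * dotZ (sact (hh n) x.2) (aff a q y.2)))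
  refine Eq.trans (Finset.sum_congr rfl fun μ _ => ?_) (h.trans ?_)
  · have e : ∀ ε : ℤˣ, bil x (act (hb (n, a, μ), ε) y) = chi μ.1 * (5 * dotZ (sact (hh n) x.1) (aff a (μ.1 ^ 2) y.1)
        + ε * (7 * dotZ (sact (hh n) x.2) (aff a (μ.1 ^ 2) y.2))) := fun ε => by
      have e2 : dotZ x.2 (fun P => (ε : ℤ) * sact (hb (n, a, μ)) y.2 P) = ε * dotZ x.2 (sact (hb (n, a, μ)) y.2) := by
        simp only [dotZ, Finset.mul_sum]
        exact Finset.sum_congr rfl fun P _ => by ring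
      rw [bil_eq_dotZ]
      simp only [act]
      rw [e2, dotZ_hb, dotZ_hb]; ring
    have hu : (Finset.univ : Finset ℤˣ) = {1, -1} := rfl
    simp only [Equiv.ofBijective_apply, e]
    rw [hu, Finset.sum_pair (by decide)]
    simp only [Units.val_one, Units.val_neg, one_mul, neg_mul, sub_eq_add_neg]
  · refine congrArg List.sum (List.map_congr_left fun q _ => ?_)
    simp only [one_mul, neg_mul, neg_sub]
    ring

/-! ### Packed arithmetic -/

/-- Evaluation of `f` at `n`; forces `n` to be a numeral when the kernel computes with it. -/
def fr {α : Type} (n : ℕ) (f : ℕ → α) : α := Nat.rec (f 0) (fun m _ => f (Nat.succ m)) n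
/-- The number with `n` base-65536 digits, all equal to 1. -/
def ones (n : ℕ) : ℕ := Nat.div (Nat.sub (Nat.pow 65536 n) 1) 65535
/-- The number of base-65536 digits of `X` that are at least 32768, among the first `n`. -/
def cnt (n X : ℕ) : ℕ := Nat.mod (Nat.shiftRight (Nat.land X (Nat.mul 32768 (ones n))) 15) 65535
/-- Concatenation of blocks of `n` bits. -/
def cat (n : ℕ) (f : ℕ → ℕ) (l : List ℕ) : ℕ :=
  List.rec 0 (fun a _ acc => Nat.add (f a) (Nat.shiftLeft acc n)) l
/-- The sum of a function over a list. -/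
def sumL (f : ℕ → ℕ) (l : List ℕ) : ℕ := List.rec 0 (fun a _ acc => Nat.add (f a) acc) l

lemma fr_eq {α : Type} (n : ℕ) (f : ℕ → α) : fr n f = f n := by cases n <;> rfl

lemma sumL_eq (f l) : sumL f l = (l.map f).sum := by
  induction l with
  | nil => rfl
  | cons a l ih => rw [List.map_cons, List.sum_cons, ← ih]; rfl

/-- The number whose base-65536 digits are the values of `g` on the list. -/
def pk {ι : Type} : List ι → (ι → ℕ) → ℕ
  | [], _ => 0
  | x :: L, g => g x + 65536 * pk L g

section
variable {ι : Type}

lemma pk_add (L : List ι) (g h : ι → ℕ) : pk L g + pk L h = pk L (fun x => g x + h x) := by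
  induction L with
  | nil => rfl
  | cons x L ih => simp only [pk, ← ih]; ring

lemma pk_mul (c : ℕ) (L : List ι) (g : ι → ℕ) : c * pk L g = pk L (fun x => c * g x) := by
  induction L with
  | nil => rfl
  | cons x L ih => simp only [pk, ← ih]; ring

lemma pk_congr (L : List ι) (g h : ι → ℕ) (H : ∀ x ∈ L, g x = h x) : pk L g = pk L h := by
  induction L with
  | nil => rfl
  | cons x L ih =>
    simp only [pk, H x List.mem_cons_self, ih fun y hy => H y (List.mem_cons_of_mem _ hy)]

lemma pk_sub (L : List ι) (g h : ι → ℕ) (H : ∀ x ∈ L, h x ≤ g x) :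
    pk L g - pk L h = pk L (fun x => g x - h x) := by
  rw [Nat.sub_eq_iff_eq_add', pk_add]
  · exact pk_congr _ _ _ fun x hx => (Nat.add_sub_of_le (H x hx)).symm
  · have : pk L g = pk L h + pk L (fun x => g x - h x) := by
      rw [pk_add]; exact pk_congr _ _ _ fun x hx => (Nat.add_sub_of_le (H x hx)).symm
    omega

lemma pk_zero (L : List ι) : pk L (fun _ => 0) = 0 := by
  induction L with
  | nil => rfl
  | cons x L ih => simp only [pk, ih]

lemma pk_sum {κ : Type} (l : List κ) (L : List ι) (g : κ → ι → ℕ) :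
    (l.map fun k => pk L (g k)).sum = pk L (fun x => (l.map fun k => g k x).sum) := by
  induction l with
  | nil => exact (pk_zero L).symm
  | cons k l ih => simp only [List.map_cons, List.sum_cons, ih, pk_add]

lemma pk_append (L M : List ι) (g : ι → ℕ) : pk (L ++ M) g = pk L g + 65536 ^ L.length * pk M g := by
  induction L with
  | nil => simp [pk]
  | cons x L ih => simp only [List.cons_append, pk, ih, List.length_cons]; ring

lemma pk_map {κ : Type} (L : List κ) (f : κ → ι) (g : ι → ℕ) : pk (L.map f) g = pk L (g ∘ f) := by
  induction L with
  | nil => rfl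
  | cons x L ih => simp only [List.map_cons, pk, ih, Function.comp]

lemma cat_eq (k : ℕ) (f : ℕ → ℕ) (l : List ℕ) (Ls : ℕ → List ι) (g : ι → ℕ)
    (hk : ∀ a, (Ls a).length = k) (hf : ∀ a ∈ l, f a = pk (Ls a) g) :
    cat (16 * k) f l = pk (l.flatMap Ls) g := by
  induction l with
  | nil => rfl
  | cons a l ih =>
    have h : cat (16 * k) f (a :: l) = f a + (cat (16 * k) f l) <<< (16 * k) := rfl
    rw [h, Nat.shiftLeft_eq, ih fun b hb => hf b (List.mem_cons_of_mem _ hb), List.flatMap_cons,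
      pk_append, hk, hf a List.mem_cons_self, pow_mul, mul_comm]
    norm_num

lemma ones_zero : ones 0 = 0 := rfl

lemma ones_mul (n : ℕ) : 65535 * ones n + 1 = 65536 ^ n := by
  have h : 65535 ∣ 65536 ^ n - 1 := by simpa using Nat.sub_dvd_pow_sub_pow 65536 1 n
  have h1 : 1 ≤ 65536 ^ n := Nat.one_le_pow _ _ (by norm_num)
  change 65535 * ((65536 ^ n - 1) / 65535) + 1 = _
  rw [Nat.mul_div_cancel' h]; omega

lemma ones_succ (n : ℕ) : ones (n + 1) = 1 + 65536 * ones n := by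
  have h1 := ones_mul n
  have h2 := ones_mul (n + 1)
  rw [pow_succ] at h2
  omega

lemma ones_eq (L : List ι) : ones L.length = pk L (fun _ => 1) := by
  induction L with
  | nil => rw [List.length_nil, ones_zero]; rfl
  | cons x L ih => rw [List.length_cons, ones_succ, ih]; rfl

lemma land_step (a b X m : ℕ) (ha : a < 65536) (hb : b < 65536) :
    (a + 65536 * X) &&& (b + 65536 * m) = (a &&& b) + 65536 * (X &&& m) := by
  have e : (65536 : ℕ) = 2 ^ 16 := by norm_num
  have hab : a &&& b < 2 ^ 16 := lt_of_le_of_lt Nat.and_le_left (by rwa [← e])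
  rw [← Nat.mod_add_div ((a + 65536 * X) &&& (b + 65536 * m)) (2 ^ 16), Nat.and_mod_two_pow,
    Nat.and_div_two_pow, ← e, Nat.add_mul_mod_self_left, Nat.add_mul_mod_self_left,
    Nat.add_mul_div_left _ _ (by norm_num), Nat.add_mul_div_left _ _ (by norm_num),
    Nat.mod_eq_of_lt ha, Nat.mod_eq_of_lt hb, Nat.div_eq_of_lt ha, Nat.div_eq_of_lt hb, zero_add, zero_add]

lemma land_top (a : ℕ) (ha : a < 65536) : a &&& 32768 = if 32768 ≤ a then 32768 else 0 := by
  have e : (32768 : ℕ) = 2 ^ 15 := by norm_num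
  conv_lhs => rw [e]
  rw [Nat.and_two_pow, Nat.testBit_eq_decide_div_mod_eq]
  by_cases h : 32768 ≤ a
  · have : a / 2 ^ 15 = 1 := by omega
    rw [this, if_pos h]; rfl
  · have : a / 2 ^ 15 = 0 := by omega
    rw [this, if_neg h]; rfl

/-- Masking with `32768 = 2 ^ 15` in each digit selects the digits that are at least 32768. -/
lemma land_pk (L : List ι) (g : ι → ℕ) (hg : ∀ x ∈ L, g x < 65536) :
    pk L g &&& (32768 * ones L.length) = 32768 * pk L (fun x => if 32768 ≤ g x then 1 else 0) := by
  induction L with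
  | nil => simp [pk]
  | cons x L ih =>
    have hx := hg x List.mem_cons_self
    have e : 32768 * ones (x :: L).length = 32768 + 65536 * (32768 * ones L.length) := by
      rw [List.length_cons, ones_succ]; ring
    rw [e]
    simp only [pk]
    rw [land_step _ _ _ _ hx (by norm_num), ih fun y hy => hg y (List.mem_cons_of_mem _ hy),
      land_top _ hx]
    split_ifs <;> ring

/-- As `65536 ≡ 1` modulo 65535, a packed number is congruent to the sum of its digits. -/
lemma pk_mod (L : List ι) (g : ι → ℕ) : pk L g ≡ (L.map g).sum [MOD 65535] := by
  induction L with
  | nil => rfl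
  | cons x L ih =>
    simp only [pk, List.map_cons, List.sum_cons]
    refine Nat.ModEq.add_left _ ?_
    simpa using Nat.ModEq.mul (show 65536 ≡ 1 [MOD 65535] from rfl) ih

/-- The count of the digits that are at least 32768: it is less than 65535, so its residue suffices. -/
lemma cnt_eq (L : List ι) (g : ι → ℕ) (hg : ∀ x ∈ L, g x < 65536) (hL : L.length < 65535) :
    cnt L.length (pk L g) = (L.map fun x => if 32768 ≤ g x then 1 else 0).sum := by
  have h : cnt L.length (pk L g) = ((pk L g &&& (32768 * ones L.length)) >>> 15) % 65535 := rfl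
  rw [h, land_pk L g hg, Nat.shiftRight_eq_div_pow, show (2 : ℕ) ^ 15 = 32768 from rfl,
    Nat.mul_div_cancel_left _ (by norm_num : 0 < 32768),
    pk_mod L _, Nat.mod_eq_of_lt]
  refine lt_of_le_of_lt ?_ hL
  clear hg hL h
  induction L with
  | nil => simp
  | cons x L ih =>
    simp only [List.map_cons, List.sum_cons, List.length_cons]
    split_ifs <;> omega
end

/-! ### Counting inner products over group orbits -/

/-- The `j`-th hexadecimal digit. -/
def nb (r j : ℕ) : ℕ := Nat.mod (Nat.shiftRight r (Nat.mul 4 j)) 16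
/-- The integers from 0 to 30. -/
def rng : List ℕ := [0,1,2,3,4,5,6,7,8,9,10,11,12,13,14,15,16,17,18,19,20,21,22,23,24,25,26,27,28,29,30]
/-- The integers from 0 to 31. -/
def rng32 : List ℕ := [0,1,2,3,4,5,6,7,8,9,10,11,12,13,14,15,16,17,18,19,20,21,22,23,24,25,26,27,28,29,30,31]
/-- The digits at position `i` of all the members of the list, packed. -/
def Lp (ls : List ℕ) (i : ℕ) : ℕ := cat 16 (fun r => nb r i) ls
/-- The digits at positions `q * i`, for all `q`, packed. -/
def Uq (ls : List ℕ) (n blk i : ℕ) : ℕ :=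
  cat (Nat.mul 16 n) (fun q => fr (Nat.add blk (Nat.mod (Nat.mul q i) 31)) (Lp ls)) qrs
/-- The digits which the transforms of the list have at position `i`, packed. -/
def Row (ls : List ℕ) (n blk i : ℕ) : ℕ :=
  bif Nat.beq i 31 then cat (Nat.mul 240 n) (fun _ => cat (Nat.mul 16 n) (fun _ => Lp ls (Nat.add blk 31)) qrs) rng
  else cat (Nat.mul 240 n) (fun a => fr (Nat.mod (Nat.sub (Nat.add i 31) a) 31) (Uq ls n blk)) rng
/-- The digit at position `i` of the transform of `v` by the coset representative `n`. -/
def yv (v blk n i : ℕ) : ℕ :=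
  bif Nat.beq n 31 then nb v (Nat.add blk i) else
  bif Nat.beq i 31 then nb v (Nat.add blk n) else
  bif Nat.beq i 0 then Nat.sub 16 (nb v (Nat.add blk 31)) else
  bif nth true chis i then nb v (Nat.add blk (Nat.mod (Nat.sub (Nat.add n 31) (nth 0 invs i)) 31)) else
    Nat.sub 16 (nb v (Nat.add blk (Nat.mod (Nat.sub (Nat.add n 31) (nth 0 invs i)) 31)))
/-- The packed sums of `y_i * Row_i`. -/
def dotR (ls : List ℕ) (n v blk h : ℕ) : ℕ :=
  sumL (fun i => fr (yv v blk h i) (fun y => Nat.mul y (Row ls n blk i))) rng32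
/-- The packed sums of the `Row_i`. -/
def sumR (ls : List ℕ) (n blk : ℕ) : ℕ := sumL (fun i => Row ls n blk i) rng32
/-- The sum of the `y_i`. -/
def sumY (v blk h : ℕ) : ℕ := sumL (fun i => yv v blk h i) rng32
/-- The packed inner products, shifted by 4096. -/
def form (ls : List ℕ) (n v blk h : ℕ) : ℕ :=
  Nat.sub (Nat.add (dotR ls n v blk h) (Nat.mul 6144 (ones (Nat.mul 465 n))))
    (Nat.add (Nat.mul 8 (sumR ls n blk)) (Nat.mul (Nat.mul 8 (sumY v blk h)) (ones (Nat.mul 465 n))))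
/-- The number of lanes and signs with inner product at least `T`. -/
def cnt4' (N A B T O : ℕ) : ℕ :=
    Nat.add (cnt N (Nat.sub (Nat.add (Nat.add A B) (Nat.mul 65536 O)) (Nat.mul (Nat.add T 81920) O)))
   (Nat.add (cnt N (Nat.sub (Nat.add (Nat.mul 65536 O) (Nat.mul 16384 O)) (Nat.add (Nat.add A B) (Nat.mul T O))))
   (Nat.add (cnt N (Nat.sub (Nat.add A (Nat.mul 40960 O)) (Nat.add B (Nat.mul T O))))
    (cnt N (Nat.sub (Nat.add B (Nat.mul 24576 O)) (Nat.add A (Nat.mul T O))))))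
/-- The contribution of a coset representative to `cntv`. -/
def cnt4 (ls : List ℕ) (n v T h : ℕ) : ℕ := cnt4' (Nat.mul 465 n) (Nat.mul 5 (form ls n v 0 h)) (Nat.mul 7 (form ls n v 32 h)) T (ones (Nat.mul 465 n))
/-- The number of pairs of a member of the list and a group element whose inner product with `v` is at least `T`. -/
def cntv (ls : List ℕ) (n v T : ℕ) : ℕ := sumL (cnt4 ls n v T) rng32

/-- The position of a point of the projective line in a list. -/
def idx : P1 → ℕ
  | none => 31
  | some i => i.val

/-- The vector encoded by a block of 32 hexadecimal digits, each shifted by 8. -/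
def dec (r blk : ℕ) : P1 → ℤ := fun P => (nb r (blk + idx P) : ℤ) - 8

/-- The pair of vectors encoded by 64 hexadecimal digits. -/
def dec2 (r : ℕ) : ZZ := (dec r 0, dec r 32)

lemma nb_lt (r j : ℕ) : nb r j < 16 := Nat.mod_lt _ (by norm_num)

lemma sum_ZMod (f : ℕ → ℕ) : ∑ i : ZMod 31, f i.val = (rng.map f).sum := by
  have h : ∑ i : ZMod 31, f i.val = ∑ i ∈ Finset.range 31, f i := Fin.sum_univ_eq_sum_range f 31
  rw [h]
  simp only [Finset.sum_range_succ, Finset.sum_range_zero, rng, List.map_cons, List.map_nil,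
    List.sum_cons, List.sum_nil]
  ring

lemma sumL_rng32 (f : ℕ → ℕ) : sumL f rng32 = ∑ P : P1, f (idx P) := by
  rw [sumL_eq, Fintype.sum_option]
  simp only [idx]
  rw [sum_ZMod]
  simp only [rng, rng32, List.map_cons, List.map_nil, List.sum_cons, List.sum_nil]
  ring

/-- The lanes of the packed computation: a translation, a square and a member of the list. -/
def lanes (ls : List ℕ) : List (ℕ × ℕ × ℕ) :=
  rng.flatMap fun a => qrs.flatMap fun q => ls.map fun r => (a, q, r)

lemma length_flatMap_const {α β : Type} (l : List α) (f : α → List β) (k : ℕ)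
    (h : ∀ a, (f a).length = k) : (l.flatMap f).length = l.length * k := by
  induction l with
  | nil => simp
  | cons a l ih => rw [List.flatMap_cons, List.length_append, ih, h, List.length_cons]; ring

lemma length_lane (ls : List ℕ) (a : ℕ) :
    (qrs.flatMap fun q => ls.map fun r => (a, q, r)).length = 15 * ls.length :=
  length_flatMap_const _ _ _ fun q => by rw [List.length_map]

lemma length_lanes (ls : List ℕ) : (lanes ls).length = 465 * ls.length := by
  rw [lanes, length_flatMap_const _ _ _ (length_lane ls)]
  simp only [rng, List.length_cons, List.length_nil]; ring

lemma lanes_lt {ls : List ℕ} {l} (hl : l ∈ lanes ls) : l.1 < 31 := by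
  simp only [lanes, List.mem_flatMap, List.mem_map] at hl
  obtain ⟨a, ha, q, -, r, -, rfl⟩ := hl
  have h : ∀ a ∈ rng, a < 31 := by decide
  exact h a ha

/-- The digit at position `i` of the transform of `r` in a lane. -/
def ent (blk i : ℕ) (l : ℕ × ℕ × ℕ) : ℕ :=
  nb l.2.2 (blk + if i = 31 then 31 else (l.2.1 * ((i + 31 - l.1) % 31)) % 31)

lemma Lp_eq (ls : List ℕ) (i : ℕ) : Lp ls i = pk ls fun r => nb r i := by
  have := cat_eq 1 (fun r => nb r i) ls (fun r => [r]) (fun r => nb r i) (fun _ => rfl)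
    (fun _ _ => by simp [pk])
  rw [List.flatMap_singleton'] at this
  exact this

lemma Row_eq (ls : List ℕ) (blk i : ℕ) : Row ls ls.length blk i = pk (lanes ls) (ent blk i) := by
  have e1 : Nat.mul 16 ls.length = 16 * ls.length := rfl
  have e2 : Nat.mul 240 ls.length = 16 * (15 * ls.length) := by
    change 240 * ls.length = _; ring
  unfold Row lanes
  by_cases hi : i = 31
  · subst hi
    have : Nat.beq 31 31 = true := rfl
    rw [this, cond_true, e1, e2]
    refine cat_eq _ _ _ _ _ (length_lane ls) fun a _ => cat_eq _ _ _ _ _ (fun q => by rw [List.length_map])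
      fun q _ => ?_
    rw [Lp_eq, pk_map]
    exact pk_congr _ _ _ fun r _ => rfl
  · have : Nat.beq i 31 = false := by
      cases h : Nat.beq i 31
      · rfl
      · exact absurd (Nat.eq_of_beq_eq_true h) hi
    rw [this, cond_false, e2]
    refine cat_eq _ _ _ _ _ (length_lane ls) fun a _ => ?_
    rw [fr_eq]
    unfold Uq
    rw [e1]
    refine cat_eq _ _ _ _ _ (fun q => by rw [List.length_map]) fun q _ => ?_
    rw [fr_eq, Lp_eq, pk_map]
    refine pk_congr _ _ _ fun r _ => ?_
    simp only [ent, Function.comp, if_neg hi]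
    rfl

lemma ent_eq (blk : ℕ) (P : P1) (l : ℕ × ℕ × ℕ) (hl : l.1 < 31) :
    (ent blk (idx P) l : ℤ) - 8 = aff (l.1 : ZMod 31) (l.2.1 : ZMod 31) (dec l.2.2 blk) P := by
  rcases P with _ | i
  · rfl
  · have hi : i.val < 31 := i.val_lt
    have e : ent blk (idx (some i)) l = nb l.2.2 (blk + (l.2.1 * ((i.val + 31 - l.1) % 31)) % 31) := by
      unfold ent; rw [show idx (some i) = i.val from rfl, if_neg hi.ne]
    rw [e]
    simp only [aff, dec, idx]
    congr 4
    rw [← ZMod.val_natCast]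
    congr 1
    push_cast
    rw [ZMod.natCast_mod, Nat.cast_sub (by omega)]
    push_cast
    rw [ZMod.natCast_zmod_val]
    have : (31 : ZMod 31) = 0 := by decide
    rw [this, add_zero]

lemma yv_eq (v blk : ℕ) (n P : P1) : (yv v blk (idx n) (idx P) : ℤ) - 8 = sact (hh n) (dec v blk) P := by
  rcases n with _ | n
  · rw [sact_hh_none]; rfl
  · have hn : n.val < 31 := n.val_lt
    have b : ∀ k : ℕ, k < 31 → Nat.beq k 31 = false := by decide
    unfold yv
    rw [show idx (some n) = n.val from rfl, b _ hn, cond_false]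
    rcases P with _ | i
    · rw [sact_hh_some_none]; rfl
    · have hi : i.val < 31 := i.val_lt
      rw [show idx (some i) = i.val from rfl, b _ hi, cond_false]
      by_cases h0 : i = 0
      · subst h0
        rw [sact_hh_some_zero, ZMod.val_zero, show Nat.beq 0 0 = true from rfl, cond_true]
        have := nb_lt v (Nat.add blk 31)
        change ((16 - nb v (blk + 31) : ℕ) : ℤ) - 8 = -((nb v (blk + 31) : ℤ) - 8)
        change nb v (blk + 31) < 16 at this
        omega
      · have hv : i.val ≠ 0 := (ZMod.val_ne_zero i).2 h0
        have b0 : Nat.beq i.val 0 = false := by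
          cases h : Nat.beq i.val 0
          · rfl
          · exact absurd (Nat.eq_of_beq_eq_true h) hv
        rw [b0, cond_false, sact_hh_some_some _ _ h0, chi_eq i h0]
        have hinv : nth 0 invs i.val ≤ 31 := by
          have : ∀ k < 31, nth 0 invs k ≤ 31 := by decide
          exact this _ hi
        have e : (Nat.mod (Nat.sub (Nat.add n.val 31) (nth 0 invs i.val)) 31) = idx (some (n - i⁻¹)) := by
          change (n.val + 31 - nth 0 invs i.val) % 31 = (n - i⁻¹).val
          rw [← ZMod.val_natCast]
          congr 1
          rw [Nat.cast_sub (by omega), inv_eq i h0]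
          push_cast
          rw [ZMod.natCast_zmod_val]
          have : (31 : ZMod 31) = 0 := by decide
          rw [this, add_zero]
        rw [e]
        have := nb_lt v (Nat.add blk (idx (some (n - i⁻¹))))
        change nb v (blk + idx (some (n - i⁻¹))) < 16 at this
        cases nth true chis i.val
        · change ((16 - nb v (blk + idx (some (n - i⁻¹))) : ℕ) : ℤ) - 8 = (if (false : Bool) = true then 1 else -1) * ((nb v (blk + idx (some (n - i⁻¹))) : ℤ) - 8)
          rw [if_neg (by decide)]
          omega
        · change ((nb v (blk + idx (some (n - i⁻¹))) : ℕ) : ℤ) - 8 = (if (true : Bool) = true then 1 else -1) * ((nb v (blk + idx (some (n - i⁻¹))) : ℤ) - 8)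
          rw [if_pos rfl, one_mul]

lemma yv_le (v blk n i : ℕ) : yv v blk n i ≤ 16 := by
  have h := nb_lt v
  unfold yv
  have h2 : ∀ k : ℕ, Nat.sub 16 k ≤ 16 := fun k => Nat.sub_le _ _
  cases Nat.beq n 31 <;> cases Nat.beq i 31 <;> cases Nat.beq i 0 <;> cases nth true chis i <;>
    first | exact h2 _ | exact (h _).le

lemma pk_fsum {ι κ : Type} (s : Finset κ) (L : List ι) (g : κ → ι → ℕ) :
    ∑ k ∈ s, pk L (g k) = pk L (fun x => ∑ k ∈ s, g k x) := by
  classical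
  induction s using Finset.induction_on with
  | empty => exact (pk_zero L).symm
  | insert a s ha ih =>
    rw [Finset.sum_insert ha, ih, pk_add]
    exact pk_congr _ _ _ fun x _ => (Finset.sum_insert (f := fun k => g k x) ha).symm

/-- The inner product computed in a lane. -/
def ld (v blk : ℕ) (n : P1) (l : ℕ × ℕ × ℕ) : ℤ :=
  dotZ (sact (hh n) (dec v blk)) (aff (l.1 : ZMod 31) (l.2.1 : ZMod 31) (dec l.2.2 blk))

lemma ld_eq (v blk : ℕ) (n : P1) (l : ℕ × ℕ × ℕ) (hl : l.1 < 31) : ld v blk n l =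
    ∑ P, ((yv v blk (idx n) (idx P) : ℤ) - 8) * ((ent blk (idx P) l : ℤ) - 8) := by
  simp only [yv_eq, ent_eq _ _ _ hl, ld, dotZ]

lemma card_P1 : Fintype.card P1 = 32 := by simp [ZMod.card]

lemma ld_abs (v blk : ℕ) (n : P1) (l : ℕ × ℕ × ℕ) (hl : l.1 < 31) : |ld v blk n l| ≤ 2048 := by
  rw [ld_eq _ _ _ _ hl]
  refine (Finset.abs_sum_le_sum_abs _ _).trans ?_
  have : ∀ P ∈ (Finset.univ : Finset P1),
      |((yv v blk (idx n) (idx P) : ℤ) - 8) * ((ent blk (idx P) l : ℤ) - 8)| ≤ 64 := fun P _ => by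
    have h1 := yv_le v blk (idx n) (idx P)
    have h2 : ent blk (idx P) l < 16 := nb_lt _ _
    rw [abs_mul]
    have a1 : |(yv v blk (idx n) (idx P) : ℤ) - 8| ≤ 8 := by rw [abs_le]; omega
    have a2 : |(ent blk (idx P) l : ℤ) - 8| ≤ 8 := by rw [abs_le]; omega
    calc _ ≤ (8 : ℤ) * 8 := mul_le_mul a1 a2 (abs_nonneg _) (by norm_num)
      _ = 64 := by norm_num
  refine (Finset.sum_le_card_nsmul _ _ _ this).trans ?_
  rw [Finset.card_univ, card_P1]; norm_num

/-- Entries are stored with the offset 8. The offset 4096 keeps the digits nonnegative, and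
`6144 = 4096 + 32 * 64`. -/
lemma lane_identity (Y E : P1 → ℕ) : ((∑ P, Y P * E P : ℕ) : ℤ) + 6144 =
    (∑ P, ((Y P : ℤ) - 8) * ((E P : ℤ) - 8) + 4096) + (8 * (∑ P, E P : ℕ) + 8 * (∑ P, Y P : ℕ)) := by
  have h : ∑ P, ((Y P : ℤ) - 8) * ((E P : ℤ) - 8) =
      ∑ P, ((Y P : ℤ) * E P - 8 * E P - 8 * Y P + 64) := Finset.sum_congr rfl fun P _ => by ring
  rw [h, Finset.sum_add_distrib, Finset.sum_sub_distrib, Finset.sum_sub_distrib, ← Finset.mul_sum,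
    ← Finset.mul_sum, Finset.sum_const, Finset.card_univ, card_P1]
  push_cast
  ring

/-- The packed inner products with the images of the members of a list. -/
lemma form_eq (ls : List ℕ) (v blk : ℕ) (n : P1) : form ls ls.length v blk (idx n) =
    pk (lanes ls) fun l => (ld v blk n l + 4096).toNat := by
  have h1 : dotR ls ls.length v blk (idx n) =
      pk (lanes ls) fun l => ∑ P, yv v blk (idx n) (idx P) * ent blk (idx P) l := by
    unfold dotR
    rw [sumL_rng32, ← pk_fsum]
    refine Finset.sum_congr rfl fun P _ => ?_
    rw [fr_eq, Row_eq]
    exact pk_mul _ _ _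
  have h2 : sumR ls ls.length blk = pk (lanes ls) fun l => ∑ P, ent blk (idx P) l := by
    unfold sumR
    rw [sumL_rng32, ← pk_fsum]
    exact Finset.sum_congr rfl fun P _ => Row_eq _ _ _
  have h3 : sumY v blk (idx n) = ∑ P, yv v blk (idx n) (idx P) := sumL_rng32 _
  have h4 : ones (Nat.mul 465 ls.length) = pk (lanes ls) fun _ => 1 := by
    rw [← ones_eq, length_lanes]; rfl
  unfold form
  rw [h1, h2, h3, h4]
  change (_ + 6144 * _) - (8 * _ + (8 * _) * _) = _
  rw [pk_mul, pk_mul, pk_mul, pk_add, pk_add]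
  have key : ∀ l ∈ lanes ls, ((∑ P, yv v blk (idx n) (idx P) * ent blk (idx P) l : ℕ) : ℤ) + 6144 =
      (ld v blk n l + 4096) + (8 * (∑ P, ent blk (idx P) l : ℕ) + 8 * (∑ P, yv v blk (idx n) (idx P) : ℕ)) := by
    intro l hl
    rw [ld_eq _ _ _ _ (lanes_lt hl)]
    exact lane_identity _ _
  rw [pk_sub]
  · refine pk_congr _ _ _ fun l hl => ?_
    have := key l hl
    have h5 := abs_le.1 (ld_abs v blk n l (lanes_lt hl))
    omega
  · intro l hl
    have := key l hl
    have h5 := abs_le.1 (ld_abs v blk n l (lanes_lt hl))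
    omega

/-! ### The meaning of the packed counts -/

lemma fsum_lsum {κ α : Type} (s : Finset κ) (l : List α) (f : κ → α → ℕ) :
    ∑ k ∈ s, (l.map (f k)).sum = (l.map fun r => ∑ k ∈ s, f k r).sum := by
  induction l with
  | nil => simp
  | cons r l ih => simp only [List.map_cons, List.sum_cons, Finset.sum_add_distrib, ih]

lemma lsum_lsum {κ α : Type} (s : List κ) (l : List α) (f : κ → α → ℕ) :
    (s.map fun k => (l.map (f k)).sum).sum = (l.map fun r => (s.map fun k => f k r).sum).sum := by
  induction l with
  | nil => simp
  | cons r l ih => simp only [List.map_cons, List.sum_cons, List.sum_map_add, ih]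

lemma sum_map_flatMap {α β : Type} (l : List α) (g : α → List β) (f : β → ℕ) :
    ((l.flatMap g).map f).sum = (l.map fun a => ((g a).map f).sum).sum := by
  induction l with
  | nil => rfl
  | cons a l ih => simp only [List.flatMap_cons, List.map_append, List.sum_append, List.map_cons, List.sum_cons, ih]

lemma sum_lanes (ls : List ℕ) (f : ℕ × ℕ × ℕ → ℕ) : ((lanes ls).map f).sum =
    (ls.map fun r => ∑ a : ZMod 31, (qrs.map fun q => f (a.val, q, r)).sum).sum := by
  have h : ∀ r, ∑ a : ZMod 31, (qrs.map fun q => f (a.val, q, r)).sum =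
      (rng.map fun a => (qrs.map fun q => f (a, q, r)).sum).sum := fun r =>
    sum_ZMod fun a => (qrs.map fun q => f (a, q, r)).sum
  simp only [h, lanes, sum_map_flatMap, List.map_map]
  rw [← lsum_lsum rng ls]
  refine congrArg List.sum (List.map_congr_left fun a _ => ?_)
  exact lsum_lsum _ _ _

/-- The indicator function of the integers that are at least `T`. -/
def ind (T : ℕ) (z : ℤ) : ℕ := if (T : ℤ) ≤ z then 1 else 0

/-- With the digits shifted by `32768 - T`, the packed count is the number of values at least `T`. -/
lemma cnt_lanes (ls : List ℕ) (hls : ls.length ≤ 100) (T : ℕ) (g : ℕ × ℕ × ℕ → ℕ) (z : ℕ × ℕ × ℕ → ℤ)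
    (hg : ∀ l ∈ lanes ls, (g l : ℤ) = z l - T + 32768) (hz : ∀ l ∈ lanes ls, |z l| ≤ 24576) (hT : T ≤ 8000) :
    cnt (Nat.mul 465 ls.length) (pk (lanes ls) g) = ((lanes ls).map fun l => ind T (z l)).sum := by
  have e : Nat.mul 465 ls.length = (lanes ls).length := (length_lanes ls).symm
  rw [e, cnt_eq]
  · refine congrArg List.sum (List.map_congr_left fun l hl => ?_)
    have := hg l hl
    unfold ind
    refine if_congr ?_ rfl rfl
    omega
  · intro l hl
    have := hg l hl
    have := abs_le.1 (hz l hl)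
    omega
  · rw [length_lanes]; omega

/-- The count for the four combinations of signs of the two components. -/
lemma cnt4_eq (ls : List ℕ) (hls : ls.length ≤ 100) (v T : ℕ) (hT : T ≤ 8000) (n : P1) :
    cnt4 ls ls.length v T (idx n) = ((lanes ls).map fun l =>
      (fun A B => ind T (A + B) + ind T (-(A + B)) + ind T (A - B) + ind T (B - A))
        (5 * ld v 0 n l) (7 * ld v 32 n l)).sum := by
  have hO : ones (Nat.mul 465 ls.length) = pk (lanes ls) fun _ => 1 := by
    rw [← ones_eq, length_lanes]; rfl
  have hb : ∀ l ∈ lanes ls, |ld v 0 n l| ≤ 2048 ∧ |ld v 32 n l| ≤ 2048 := fun l hl =>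
    ⟨ld_abs _ _ _ _ (lanes_lt hl), ld_abs _ _ _ _ (lanes_lt hl)⟩
  unfold cnt4
  rw [hO, form_eq, form_eq]
  unfold cnt4'
  change cnt _ ((5 * _ + 7 * _ + 65536 * _) - ((T + 81920) * _)) + (cnt _ ((65536 * _ + 16384 * _) - (5 * _ + 7 * _ + T * _))
    + (cnt _ ((5 * _ + 40960 * _) - (7 * _ + T * _)) + cnt _ ((7 * _ + 24576 * _) - (5 * _ + T * _)))) = _
  simp only [pk_mul, pk_add]
  rw [pk_sub, pk_sub, pk_sub, pk_sub]
  · rw [cnt_lanes ls hls T _ (fun l => 5 * ld v 0 n l + 7 * ld v 32 n l) ?_ ?_ hT,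
      cnt_lanes ls hls T _ (fun l => -(5 * ld v 0 n l + 7 * ld v 32 n l)) ?_ ?_ hT,
      cnt_lanes ls hls T _ (fun l => 5 * ld v 0 n l - 7 * ld v 32 n l) ?_ ?_ hT,
      cnt_lanes ls hls T _ (fun l => 7 * ld v 32 n l - 5 * ld v 0 n l) ?_ ?_ hT]
    · simp only [List.sum_map_add]; ring
    all_goals
      intro l hl
      have h := hb l hl
      have h1 := abs_le.1 h.1
      have h2 := abs_le.1 h.2
      try rw [abs_le]
      omega
  all_goals
    intro l hl
    have h := hb l hl
    have h1 := abs_le.1 h.1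
    have h2 := abs_le.1 h.2
    omega

/-- The meaning of the packed count. -/
lemma cntv_eq (ls : List ℕ) (hls : ls.length ≤ 100) (v T : ℕ) (hT : T ≤ 8000) :
    cntv ls ls.length v T = (ls.map fun r => ∑ γ : GG, ind T (bil (dec2 v) (act γ (dec2 r)))).sum := by
  unfold cntv
  rw [sumL_rng32]
  simp only [cnt4_eq ls hls v T hT, sum_lanes]
  rw [fsum_lsum]
  refine congrArg List.sum (List.map_congr_left fun r _ => ?_)
  rw [sum_GG (ind T)]
  refine Finset.sum_congr rfl fun n _ => Finset.sum_congr rfl fun a _ => ?_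
  simp only [ld, dec2, ZMod.natCast_zmod_val]

/-! ### Orbit counting -/

section Orbit
open Classical
variable {G X : Type} [Group G] [Fintype G]

/-- The weighted number of pairs of a list member `q` and a group element `γ` such that `γ q`
satisfies `p`. -/
noncomputable def cntG (a : G → X → X) (L : List (ℕ × X)) (p : X → Prop) : ℕ :=
  (L.map fun q => q.1 * (Finset.univ.filter fun γ : G => p (a γ q.2)).card).sum

/-- The union of the orbits of the list members. -/
noncomputable def ImgG (a : G → X → X) (L : List (ℕ × X)) : Finset X :=
  (L.toFinset ×ˢ Finset.univ).image fun q : (ℕ × X) × G => a q.2 q.1.2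

lemma mem_ImgG {a : G → X → X} {L : List (ℕ × X)} {x : X} :
    x ∈ ImgG a L ↔ ∃ q ∈ L, ∃ γ : G, a γ q.2 = x := by
  simp only [ImgG, Finset.mem_image, Finset.mem_product, List.mem_toFinset, Finset.mem_univ, and_true]
  constructor
  · rintro ⟨⟨q, γ⟩, h, h'⟩; exact ⟨q, h, γ, h'⟩
  · rintro ⟨q, h, γ, h'⟩; exact ⟨⟨q, γ⟩, h, h'⟩

/-- Weighted counts as sums over the images. -/
lemma cntG_fiber (a : G → X → X) (L : List (ℕ × X)) (A : Finset X) (hA : ∀ q ∈ L, ∀ γ, a γ q.2 ∈ A)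
    (p : X → Prop) : cntG a L p = ∑ x ∈ A.filter p, cntG a L (fun y => y = x) := by
  induction L with
  | nil => simp [cntG]
  | cons q L ih =>
    have h1 := ih fun q' hq' => hA q' (List.mem_cons_of_mem _ hq')
    have h2 : (Finset.univ.filter fun γ : G => p (a γ q.2)).card =
        ∑ x ∈ A.filter p, (Finset.univ.filter fun γ : G => a γ q.2 = x).card := by
      rw [Finset.card_eq_sum_card_fiberwise (f := fun γ => a γ q.2) (t := A.filter p)]
      · refine Finset.sum_congr rfl fun x hx => ?_
        congr 1
        ext γ
        simp only [Finset.mem_filter, Finset.mem_univ, true_and, and_iff_right_iff_imp]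
        rintro rfl
        exact (Finset.mem_filter.1 hx).2
      · intro γ hγ
        have hγ' := (Finset.mem_filter.1 (Finset.mem_coe.1 hγ)).2
        exact Finset.mem_coe.2 (Finset.mem_filter.2 ⟨hA q List.mem_cons_self γ, hγ'⟩)
    simp only [cntG, List.map_cons, List.sum_cons] at h1 ⊢
    rw [h1, h2, Finset.sum_add_distrib, Finset.mul_sum]

variable {a : G → X → X} (ha : ∀ g h x, a (g * h) x = a g (a h x)) (ha1 : ∀ x, a 1 x = x)
include ha ha1

/-- The weight with which a vector is hit is constant on orbits. -/
lemma cntG_act (L : List (ℕ × X)) (δ : G) (x : X) :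
    cntG a L (fun y => y = a δ x) = cntG a L (fun y => y = x) := by
  unfold cntG
  congr 1
  refine List.map_congr_left fun q _ => ?_
  congr 1
  refine Finset.card_bij' (fun γ _ => δ⁻¹ * γ) (fun γ _ => δ * γ) ?_ ?_ ?_ ?_
  · intro γ hγ
    simp only [Finset.mem_filter, Finset.mem_univ, true_and] at hγ ⊢
    rw [ha, hγ, ← ha, inv_mul_cancel, ha1]
  · intro γ hγ
    simp only [Finset.mem_filter, Finset.mem_univ, true_and] at hγ ⊢
    rw [ha, hγ]
  · intro γ _; simp
  · intro γ _; simp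

/-- If every vector of a union of orbits is hit with the same total weight `N`, weighted counts over
the group are `N` times counts of vectors. -/
lemma cntG_eq {L : List (ℕ × X)} {N : ℕ} (h : ∀ q ∈ L, cntG a L (fun y => y = q.2) = N) (p : X → Prop) :
    cntG a L p = N * ((ImgG a L).filter p).card := by
  rw [cntG_fiber a L (ImgG a L) (fun q hq γ => mem_ImgG.2 ⟨q, hq, γ, rfl⟩) p]
  rw [Finset.sum_congr rfl (g := fun _ => N)]
  · simp [mul_comm]
  · intro x hx
    obtain ⟨q, hq, γ, rfl⟩ := mem_ImgG.1 (Finset.mem_filter.1 hx).1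
    rw [cntG_act ha ha1, h q hq]

omit ha ha1 [Group G] in
lemma cntG_congr {L : List (ℕ × X)} {p q : X → Prop} (h : ∀ l ∈ L, ∀ γ, p (a γ l.2) ↔ q (a γ l.2)) :
    cntG a L p = cntG a L q := by
  unfold cntG
  congr 1
  refine List.map_congr_left fun l hl => ?_
  simp only [h l hl]

omit ha ha1 [Group G] in
lemma cntG_true (L : List (ℕ × X)) : cntG a L (fun _ => True) = (L.map fun q => q.1).sum * Fintype.card G := by
  unfold cntG
  rw [← List.sum_map_mul_right]
  congr 1
  refine List.map_congr_left fun q _ => ?_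
  simp [Finset.card_univ]

omit ha ha1 [Group G] in
lemma sum_ind (T : ℕ) (f : G → ℤ) : ∑ γ : G, ind T (f γ) = (Finset.univ.filter fun γ => (T : ℤ) ≤ f γ).card := by
  rw [Finset.card_filter]
  rfl

omit ha ha1 [Group G] in
lemma cntG_nil (p) : cntG a [] p = 0 := rfl

omit ha ha1 [Group G] in
lemma cntG_append (L L' : List (ℕ × X)) (p) : cntG a (L ++ L') p = cntG a L p + cntG a L' p := by
  simp [cntG]

omit ha ha1 [Group G] in
lemma cntG_ind {Y : Type} (f : Y → X) (w : ℕ) (l : List Y) (T : ℕ) (g : X → ℤ) :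
    cntG a (l.map fun r => (w, f r)) (fun x => (T : ℤ) ≤ g x) =
      w * (l.map fun r => ∑ γ : G, ind T (g (a γ (f r)))).sum := by
  unfold cntG
  rw [List.map_map, ← List.sum_map_mul_left]
  congr 1
  refine List.map_congr_left fun r _ => ?_
  simp only [Function.comp]
  rw [sum_ind]

end Orbit

/-- The weighted count for the group `GG`. -/
noncomputable def cntL (L : List (ℕ × ZZ)) (p : ZZ → Prop) : ℕ := cntG act L p

/-- The union of the orbits under `GG`. -/
noncomputable def Img (L : List (ℕ × ZZ)) : Finset ZZ := ImgG act L

lemma mem_Img {L : List (ℕ × ZZ)} {x : ZZ} : x ∈ Img L ↔ ∃ q ∈ L, ∃ γ : GG, act γ q.2 = x := mem_ImgG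

lemma bil_sub_self (x y : ZZ) : bil (x - y) (x - y) = bil x x - 2 * bil x y + bil y y := by
  unfold bil
  rw [Finset.mul_sum, ← Finset.sum_sub_distrib, ← Finset.sum_add_distrib]
  refine Finset.sum_congr rfl fun ν _ => ?_
  simp only [Prod.fst_sub, Prod.snd_sub, Pi.sub_apply]; ring

lemma eq_zero_of_bil {x : ZZ} (h : bil x x ≤ 0) : x = 0 := by
  have h0 : ∀ ν ∈ (Finset.univ : Finset P1), 0 ≤ 5 * (x.1 ν * x.1 ν) + 7 * (x.2 ν * x.2 ν) := fun ν _ => by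
    nlinarith [mul_self_nonneg (x.1 ν), mul_self_nonneg (x.2 ν)]
  have h1 := (Finset.sum_eq_zero_iff_of_nonneg h0).1 (le_antisymm h (Finset.sum_nonneg h0))
  have h2 : ∀ ν, x.1 ν = 0 ∧ x.2 ν = 0 := fun ν => by
    have := h1 ν (Finset.mem_univ _)
    constructor <;> nlinarith [mul_self_nonneg (x.1 ν), mul_self_nonneg (x.2 ν)]
  exact Prod.ext (funext fun ν => (h2 ν).1) (funext fun ν => (h2 ν).2)

/-- Equality of vectors of the same norm `n` can be tested by the inner product being at least `n`. -/
lemma eq_iff_bil {x y : ZZ} {n : ℤ} (hx : bil x x = n) (hy : bil y y = n) : y = x ↔ n ≤ bil x y := by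
  constructor
  · rintro rfl; exact hx.ge
  · intro h
    have := eq_zero_of_bil (x := x - y) (by rw [bil_sub_self, hx, hy]; linarith)
    exact (sub_eq_zero.1 this).symm

/-- The weighted list of vectors encoded by weighted lists of numbers. -/
def decW (W : List (ℕ × List ℕ)) : List (ℕ × ZZ) := W.flatMap fun q => q.2.map fun r => (q.1, dec2 r)

/-- The weighted sum of the packed counts. -/
def totW (W : List (ℕ × List ℕ)) (v T : ℕ) : ℕ := (W.map fun q => q.1 * cntv q.2 q.2.length v T).sum

lemma mem_decW {W : List (ℕ × List ℕ)} {q} : q ∈ decW W ↔ ∃ w ∈ W, ∃ r ∈ w.2, (w.1, dec2 r) = q := by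
  simp [decW]

lemma totW_eq (W : List (ℕ × List ℕ)) (hW : ∀ w ∈ W, w.2.length ≤ 100) (v T : ℕ) (hT : T ≤ 8000) :
    totW W v T = cntL (decW W) (fun x => (T : ℤ) ≤ bil (dec2 v) x) := by
  induction W with
  | nil => rfl
  | cons w W ih =>
    have h1 := ih fun q hq => hW q (List.mem_cons_of_mem _ hq)
    have h2 := cntv_eq w.2 (hW w List.mem_cons_self) v T hT
    unfold totW cntL decW at h1 ⊢
    rw [List.map_cons, List.sum_cons, List.flatMap_cons, cntG_append, h1, h2, cntG_ind]

open Classical in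
/-- The packed arithmetic counts the vectors in a union of orbits of vectors of the same norm. -/
lemma totW_count {W : List (ℕ × List ℕ)} {N n : ℕ} (hn : n ≤ 8000) (hW : ∀ w ∈ W, w.2.length ≤ 100)
    (hb : ∀ w ∈ W, ∀ r ∈ w.2, bil (dec2 r) (dec2 r) = n)
    (hN : ∀ w ∈ W, ∀ r ∈ w.2, totW W r n = N) (p : ZZ → Prop) :
    cntL (decW W) p = N * ((Img (decW W)).filter p).card := by
  refine cntG_eq act_mul act_one (fun q hq => ?_) p
  obtain ⟨w, hw, r, hr, rfl⟩ := mem_decW.1 hq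
  rw [← hN w hw r hr, totW_eq W hW r n hn]
  refine cntG_congr fun q' hq' γ => ?_
  obtain ⟨w', hw', r', hr', rfl⟩ := mem_decW.1 hq'
  exact eq_iff_bil (hb w hw r hr) (by rw [bil_act]; exact hb w' hw' r' hr')

/-! ### Membership of the representatives -/

/-- A number whose class modulo 35 is the letter at position `i` of the word of the decoded pair. -/
def wn (r i : ℕ) : ℕ :=
  bif Nat.beq i 31 then Nat.add (Nat.add (Nat.mul 15 (nb r i)) (Nat.mul 21 (nb r (Nat.add 32 i)))) 27
  else Nat.add (Nat.add (Nat.mul 15 (nb r i)) (Nat.mul 14 (nb r (Nat.add 32 i)))) 13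

/-- The inner product of the word with `v_μ`. -/
def wdot (r μ : ℕ) : ℕ :=
  sumL (fun i => Nat.mul (fr i (wn r)) (bif Nat.beq i 31 then 2 else fr (Nat.mod (Nat.sub (Nat.add i 31) μ) 31) (nth 0 vt))) rng32

/-- The check that the decoded pair lies in `MM`. -/
def memChk (r : ℕ) : Prop :=
  (∀ μ ∈ rng, Nat.mod (wdot r μ) 35 = 0) ∧ ∀ i ∈ rng32, Nat.mod (Nat.add (nb r i) (nb r (Nat.add 32 i))) 2 = 0

instance (r : ℕ) : Decidable (memChk r) := by unfold memChk; infer_instance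

/-- The check of the norm of the decoded pair. -/
def normChk (r n : ℕ) : Prop :=
  sumL (fun i => (fun a b => Nat.add (Nat.mul 5 (Nat.add (Nat.mul a a) 64)) (Nat.mul 7 (Nat.add (Nat.mul b b) 64)))
     (nb r i) (nb r (Nat.add 32 i))) rng32 =
  Nat.add n (sumL (fun i => Nat.add (Nat.mul 80 (nb r i)) (Nat.mul 112 (nb r (Nat.add 32 i)))) rng32)

instance (r n : ℕ) : Decidable (normChk r n) := by unfold normChk; infer_instance

lemma dec2_fst (r : ℕ) (P : P1) : (dec2 r).1 P = (nb r (idx P) : ℤ) - 8 := by simp [dec2, dec]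
lemma dec2_snd (r : ℕ) (P : P1) : (dec2 r).2 P = (nb r (32 + idx P) : ℤ) - 8 := by simp [dec2, dec]

lemma normChk_eq {r n : ℕ} (h : normChk r n) : bil (dec2 r) (dec2 r) = n := by
  unfold normChk at h
  rw [sumL_rng32, sumL_rng32] at h
  have h' := congrArg (Nat.cast (R := ℤ)) h
  change ((_ : ℕ) : ℤ) = ((n + _ : ℕ) : ℤ) at h'
  rw [Nat.cast_add, Nat.cast_sum, Nat.cast_sum, ← sub_eq_iff_eq_add, ← Finset.sum_sub_distrib] at h'
  rw [← h', bil]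
  refine Finset.sum_congr rfl fun P _ => ?_
  rw [dec2_fst, dec2_snd]
  simp only [Nat.add_eq, Nat.mul_eq]
  push_cast
  ring

lemma idx_rng32 (P : P1) : idx P ∈ rng32 := by
  have : ∀ P : P1, idx P ∈ rng32 := by decide
  exact this P
lemma val_rng (μ : ZMod 31) : μ.val ∈ rng := by
  have : ∀ μ : ZMod 31, μ.val ∈ rng := by decide
  exact this μ

lemma wn_eq (r : ℕ) (P : P1) : ((wn r (idx P) : ℕ) : ZMod 35) = word (dec2 r) P := by
  have e35 : (35 : ZMod 35) = 0 := by decide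
  unfold word
  rw [dec2_fst, dec2_snd]
  rcases P with _ | i
  · have h : wn r (idx none) = 15 * nb r 31 + 21 * nb r (32 + 31) + 27 := rfl
    rw [h]
    simp only [sgn, if_true, idx]
    push_cast
    linear_combination (9 : ZMod 35) * e35
  · have hb : Nat.beq i.val 31 = false := by
      cases hh : Nat.beq i.val 31 with
      | false => rfl
      | true => have := Nat.eq_of_beq_eq_true hh; have := i.val_lt; omega
    have h : wn r (idx (some i)) = 15 * nb r i.val + 14 * nb r (32 + i.val) + 13 := by
      simp only [wn, idx, hb, cond_false, Nat.add_eq, Nat.mul_eq]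
    rw [h]
    simp only [sgn, reduceCtorEq, if_false, idx]
    push_cast
    linear_combination ((nb r (32 + i.val) : ZMod 35) - 1) * e35

lemma wdot_eq (r : ℕ) (μ : ZMod 31) : ((wdot r μ.val : ℕ) : ZMod 35) = dot (word (dec2 r)) (vgen μ) := by
  have h : wdot r μ.val = ∑ P : P1, wn r (idx P) * (bif Nat.beq (idx P) 31 then 2 else
      nth 0 vt ((idx P + 31 - μ.val) % 31)) := by
    unfold wdot
    rw [sumL_rng32]
    simp only [fr_eq]
    rfl
  rw [h, Nat.cast_sum]
  unfold dot
  refine Finset.sum_congr rfl fun P _ => ?_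
  rw [Nat.cast_mul, wn_eq]
  refine congrArg _ ?_
  rcases P with _ | i
  · rfl
  · have hb : Nat.beq i.val 31 = false := by
      cases hh : Nat.beq i.val 31 with
      | false => rfl
      | true => have := Nat.eq_of_beq_eq_true hh; have := i.val_lt; omega
    rw [vgen_eq]
    simp only [idx, hb, cond_false]
    have key : (i.val + 31 - μ.val) % 31 = (i - μ).val := by
      have h3 := μ.val_lt
      have e : (((i.val + 31 - μ.val : ℕ)) : ZMod 31) = i - μ := by
        have h31 : (31 : ZMod 31) = 0 := by decide
        rw [Nat.cast_sub (by omega), Nat.cast_add, ZMod.natCast_zmod_val, ZMod.natCast_zmod_val]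
        change i + 31 - μ = _
        rw [h31, add_zero]
      rw [← e, ZMod.val_natCast]
    rw [key]

lemma memChk_mem {r : ℕ} (h : memChk r) : dec2 r ∈ MM := by
  refine ⟨fun P => ?_, (mem_Qcode_iff _).2 fun μ => ?_⟩
  · have h1 := h.2 _ (idx_rng32 P)
    change (nb r (idx P) + nb r (32 + idx P)) % 2 = 0 at h1
    rw [dec2_fst, dec2_snd]
    omega
  · have h1 := h.1 _ (val_rng μ)
    change wdot r μ.val % 35 = 0 at h1
    rw [← Nat.dvd_iff_mod_eq_zero, ← ZMod.natCast_eq_zero_iff] at h1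
    exact (wdot_eq r μ).symm.trans h1

/-! ### The orbits of minimal vectors -/

/-- Representatives of the orbits of minimal vectors of weight 465. -/
def repsA : List ℕ := [69017411934977731438563124176096871997900682950942546024687692925632200001400,
  54547162257340575944237348678340821467673838590653740396820758340532654545783,
  54093075201423898155396087359328051846142969793309363122116432463156202736005,
  55003001874506937197310288473901555759984335301665408523116000789931967940454,
  69021173789338628242981113689930683151791285256975956178981180028203078948744,
  62687026659288580885990338691354175720616461007891621535811379287042956887944,
  61305242204228730687200274563772876554031051040743250403689262488717506414440,
  55001021098573752178164601191662529609696680403092563042434033755694331033976,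
  75747546816957644366594563848087765112448336110053173522527085145354133870486,
  54517001630656896990484800551612393770067263146077943492981242482012069598582,
  69022718946342498593056326831693887383416722500524779887356054248879769024374,
  69022705168236649636553680702366310630951631664990624605613880408972600973654,
  54488731588970588442060229372464370835319605531640177793827920754848847914872,
  61755897393518519199218044802262671095659002784222671271926430971553496135541,
  69895652663300989101374233273817545584588380080065556828022437122738297010037,
  46855953133518862233337990157632481822646837401294627023875336481002477815669,
  61249027532476037010556847848990372719619836910444676377266670363244669401205,
  69388353163690890048227413638841415843762284781009414045792438936684441728614,
  46801180064033943179982176707666424324548189943113228792273192116226747893350,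
  47281874108576976508692030944132951777766707807075929830206337626919867614822,
  68566977198726097892046720370415369742865796765351692262514940089305073678182,
  69022608978391436016543609022245922488540418132970874024471162000359199111014,
  77130987179211093993997054671101449860629139007562242896283016519982270351208,
  76228026069932487943537157876326316944114674455788843910928288354648468318088,
  61810435857677948470756175837210737074404581551949465711494966691387897440377,
  69499657630402184032845242725274912151607773042828684632569447697713638897575,
  75743798737443674950517674879697199024112857103321505521554839469650395879543,
  76708504512306282863636107575755499135243172943486572197957130368739530266488,
  54573561410052150745960983605791481481271744777203826530581740521721730459495,
  69021159637045429815276614328894788031595353141998283876681846693119136389240,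
  61331634157068127958958687697287112902813474772030464973780437952679679322263,
  61755662734169030782391330258497719157657446234760000027393424696067840502168,
  61333394506680834433697962575495716295741499580952949536736605835582061967513,
  54518782301532159331540410175563942631448911402522851849253385366417257760870,
  69022719807592150506376174571838303777903072367222853392745623665651152815751,
  62660413496934479706874171506744630344232228000815977348096171987657678161802,
  69473596634603414345693560892976341998595879189799601672288763858647318497431,
  62660524384873946021409401850626117345273670073052086317447019316186164205943,
  69443560665874878000146262878459263099520967227165252292044586620506298816921,
  68992559177531844673449328018777810302038560019207377122489291239993690798216,
  61782077011509030470235982425036956240750078229616028407461914701770280900743]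
/-- Representatives of the orbits of minimal vectors of weight 155. -/
def repsB : List ℕ := [68570399625891463853354987257802949526161744719307937230765536690321475786902,
  68566962532409747261728462913518913524623012836498951759234892950832209758310,
  61757651296464795317840119223915986704580877689607424417812860785164781386104,
  68514088708595697274051459431814493349420717979670545079443689667390418294662,
  61784175140503269131892047113008468417057689235216828183897345250626663577446,
  54094835172004138411573668546008175814803276154263717219910958331750460716902]
/-- Representatives of the orbits of minimal vectors of weight 93 that are not in `S₀`. -/
def repsC : List ℕ := [70347958632371989082809202448888833090638111780558939053486639597057397520505]
/-- Representatives of the orbits of minimal vectors of weight 31. -/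
def repsD : List ℕ := [54038075589171921623460651117028102632048977678347024975569488749658330667140,
  62234713408518107995148976994498855372521125962055920600033862435859342133637,
  40046531472996214676445823761811647099797286492790340987572630139938048280435,
  47280002493479749372163960765573816737693541572414314830436198371452864006550]
/-- Representatives of the orbits of minimal vectors of weight 1. -/
def repsE : List ℕ := [75747325042744344506252686026516673054077917912570878271044552277403295512439,
  61755780927095199017580644604789807660162343983271609359782206442639630829704]
/-- Representatives of the two orbits of minimal vectors that make up `S₀`, of weight 93. -/
def repsS : List ℕ := [47281769771910749691650068001252171784789128649037048277140070374963870730342,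
  68514074477233070704878869159449361806720126640523316047666435970136150603639]

/-- The weighted list of all representatives. The weight of a vector is 465 divided by the order
of its stabilizer. -/
def WS : List (ℕ × List ℕ) := [(465, repsA), (155, repsB), (93, repsC), (93, repsS), (31, repsD), (1, repsE)]

/-- `totW WS`, with the lengths of the lists evaluated. -/
def tot (v T : ℕ) : ℕ :=
  Nat.add (Nat.mul 465 (cntv repsA 41 v T)) (Nat.add (Nat.mul 155 (cntv repsB 6 v T))
  (Nat.add (Nat.mul 93 (Nat.add (cntv repsC 1 v T) (cntv repsS 2 v T)))
  (Nat.add (Nat.mul 31 (cntv repsD 4 v T)) (cntv repsE 2 v T))))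

lemma sum_WS (c : List ℕ → ℕ → ℕ) : (WS.map fun q => q.1 * c q.2 q.2.length).sum =
    465 * c repsA 41 + (155 * c repsB 6 + (93 * (c repsC 1 + c repsS 2) + (31 * c repsD 4 + c repsE 2))) := by
  have h : (WS.map fun q => q.1 * c q.2 q.2.length).sum = 465 * c repsA 41 + (155 * c repsB 6 + (93 * c repsC 1
    + (93 * c repsS 2 + (31 * c repsD 4 + (1 * c repsE 2 + 0))))) := rfl
  rw [h]
  omega

lemma totW_WS (v T : ℕ) : totW WS v T = tot v T := sum_WS fun ls n => cntv ls n v T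

section
set_option maxRecDepth 100000

/-! The wrapping by `PLift` turns each check into a definition with a proof as its value. For the
list members outside `repsS` the number of inner products at least 3 distinguishes their type. -/

def WS_mem : PLift (∀ w ∈ WS, ∀ r ∈ w.2, memChk r) := ⟨by decide +kernel⟩
def WS_norm : PLift (∀ w ∈ WS, ∀ r ∈ w.2, normChk r 420) := ⟨by decide +kernel⟩
def tot_C : PLift (∀ r ∈ repsC ++ repsD ++ repsE, tot r 420 = 465 ∧ tot r 210 ≠ 465 * 305) := ⟨by decide +kernel⟩

def tot_A0 : PLift (∀ r ∈ repsA.take 6, tot r 420 = 465 ∧ tot r 210 ≠ 465 * 305) := ⟨by decide +kernel⟩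
def tot_A1 : PLift (∀ r ∈ (repsA.drop 6).take 6, tot r 420 = 465 ∧ tot r 210 ≠ 465 * 305) := ⟨by decide +kernel⟩
def tot_A2 : PLift (∀ r ∈ ((repsA.drop 6).drop 6).take 6, tot r 420 = 465 ∧ tot r 210 ≠ 465 * 305) := ⟨by decide +kernel⟩
def tot_A3 : PLift (∀ r ∈ (((repsA.drop 6).drop 6).drop 6).take 6, tot r 420 = 465 ∧ tot r 210 ≠ 465 * 305) := ⟨by decide +kernel⟩
def tot_A4 : PLift (∀ r ∈ ((((repsA.drop 6).drop 6).drop 6).drop 6).take 6, tot r 420 = 465 ∧ tot r 210 ≠ 465 * 305) := ⟨by decide +kernel⟩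
def tot_A5 : PLift (∀ r ∈ (((((repsA.drop 6).drop 6).drop 6).drop 6).drop 6).take 6, tot r 420 = 465 ∧ tot r 210 ≠ 465 * 305) := ⟨by decide +kernel⟩
def tot_A6 : PLift (∀ r ∈ ((((((repsA.drop 6).drop 6).drop 6).drop 6).drop 6).drop 6), tot r 420 = 465 ∧ tot r 210 ≠ 465 * 305) := ⟨by decide +kernel⟩
def tot_B : PLift (∀ r ∈ repsB, tot r 420 = 465 ∧ tot r 210 ≠ 465 * 305) := ⟨by decide +kernel⟩
/-- Weighted counts of the minimal vectors with inner product at least 6, 1, 2, 3, 4 with a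
representative in `repsS`. -/
def tot_S : PLift (∀ r ∈ repsS, tot r 420 = 465 ∧ tot r 70 = 465 * 616904 ∧ tot r 140 = 465 * 38648 ∧
    tot r 210 = 465 * 305 ∧ tot r 280 = 465) := ⟨by decide +kernel⟩
/-- Counts within the orbits of `repsS`; `40 = 5 * 8`. -/
def cnt_S : PLift (∀ r ∈ repsS, cntv repsS 2 r 420 = 5 ∧ cntv repsS 2 r 280 = 5 ∧ cntv repsS 2 r 210 = 40) := ⟨by decide +kernel⟩

lemma forall_of_take {α : Type} {p : α → Prop} {l : List α} (n : ℕ) (h1 : ∀ r ∈ l.take n, p r)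
    (h2 : ∀ r ∈ l.drop n, p r) : ∀ r ∈ l, p r := fun r hr => by
  rw [← List.take_append_drop n l] at hr
  exact (List.mem_append.1 hr).elim (h1 r) (h2 r)

lemma tot_A : ∀ r ∈ repsA, tot r 420 = 465 ∧ tot r 210 ≠ 465 * 305 :=
  forall_of_take 6 tot_A0.down (forall_of_take 6 tot_A1.down (forall_of_take 6 tot_A2.down (forall_of_take 6 tot_A3.down
    (forall_of_take 6 tot_A4.down (forall_of_take 6 tot_A5.down tot_A6.down)))))

lemma tot_AB : ∀ r ∈ repsA ++ repsB ++ (repsC ++ repsD ++ repsE), tot r 420 = 465 ∧ tot r 210 ≠ 465 * 305 := by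
  intro r hr
  rcases List.mem_append.1 hr with hr | hr
  · exact (List.mem_append.1 hr).elim (tot_A r) (tot_B.down r)
  · exact tot_C.down r hr

end

/-! ### Counting code words of small weight -/

/-- A position of a word: the list of the admissible pairs of a residue and its cost, and the row of
the encoding matrix. -/
abbrev Coord : Type := List (ℕ × ℕ) × ℕ

/-- The number of choices of residues of total cost at most the argument. -/
def lenE (L : List Coord) : ℕ → ℕ :=
  List.rec (fun _ => 1) (fun c _ ih b => List.rec 0 (fun o _ acc =>
    bif Nat.ble o.2 b then Nat.add (fr (Nat.sub b o.2) ih) acc else acc) c.1) L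
/-- The contribution of a chosen residue to the `j`-th encoded coordinate; the coordinate with
number 16 is the cost. -/
def ct (r : ℕ) (o : ℕ × ℕ) (j : ℕ) : ℕ := bif Nat.beq j 16 then o.2 else Nat.mul (nb r j) o.1
/-- The packed values of `g j` at the encoded coordinates, shifted by `r`, of all the choices of
residues of total cost at most `b`. -/
def KT (md : ℕ → ℕ) (g : ℕ → ℕ → ℕ) (L : List Coord) : ℕ → ℕ → ℕ → ℕ :=
  List.rec (fun _ j r => g j r) (fun c cs ih b j r => List.rec 0 (fun o _ acc =>
    bif Nat.ble o.2 b then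
      fr (Nat.sub b o.2) (fun b' =>
      fr (Nat.mod (Nat.add r (ct c.2 o j)) (md j)) (fun r' =>
        Nat.add (ih b' j r') (Nat.shiftLeft acc (Nat.mul 16 (lenE cs b'))))) else acc) c.1) L
/-- An upper bound for the number of base-65536 digits that are at least 32768, computed in
chunks. -/
def cntC (k : ℕ) : ℕ → ℕ → ℕ :=
  Nat.rec (fun n _ => n) (fun _ ih n X => bif Nat.ble n 32768 then cnt n X else
    fr (Nat.shiftRight X 524288) (fun Y =>
      Nat.add (cnt 32768 (Nat.sub X (Nat.shiftLeft Y 524288))) (ih (Nat.sub n 32768) Y))) k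
/-- The numbers of the encoded coordinates. -/
def js : List ℕ := [0,1,2,3,4,5,6,7,8,9,10,11,12,13,14,15,16]
/-- The packed sums over `js`. -/
def sumK (md : ℕ → ℕ) (g : ℕ → ℕ → ℕ) (L : List Coord) (b : ℕ) (R : ℕ → ℕ) : ℕ :=
  sumL (fun j => fr (Nat.mod (R j) (md j)) (fun r => KT md g L b j r)) js
/-- The number of choices for which the values add up to at most `T`. -/
def leaf (md : ℕ → ℕ) (g : ℕ → ℕ → ℕ) (T : ℕ) (L : List Coord) (b : ℕ) (R : ℕ → ℕ) : ℕ :=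
  fr (lenE L b) (fun n => cntC 64 n (Nat.sub (Nat.mul (Nat.add 32768 T) (ones n)) (sumK md g L b R)))
/-- The same for the concatenation of `D` and `L`, by a search over `D`. -/
def scan (md : ℕ → ℕ) (g : ℕ → ℕ → ℕ) (T : ℕ) (L D : List Coord) : ℕ → (ℕ → ℕ) → ℕ :=
  List.rec (fun b R => leaf md g T L b R) (fun c _ ih b R => List.rec 0 (fun o _ acc =>
    bif Nat.ble o.2 b then fr (Nat.sub b o.2) (fun b' =>
      Nat.add (ih b' (fun j => Nat.add (R j) (ct c.2 o j))) acc) else acc) c.1) D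

/-- The encoded coordinates of all the choices of residues of total cost at most `b`. -/
def en : List Coord → ℕ → List (ℕ → ℕ)
  | [], _ => [fun _ => 0]
  | c :: cs, b => c.1.flatMap fun o =>
      if o.2 ≤ b then (en cs (b - o.2)).map fun f j => ct c.2 o j + f j else []

/-- The total value of a choice. -/
def totg (md : ℕ → ℕ) (g : ℕ → ℕ → ℕ) (f : ℕ → ℕ) : ℕ := (js.map fun j => g j (f j % md j)).sum

lemma ble_ite {α : Type} (a b : ℕ) (x y : α) : (bif Nat.ble a b then x else y) = if a ≤ b then x else y := by
  by_cases h : a ≤ b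
  · rw [Nat.ble_eq_true_of_le h, if_pos h, cond_true]
  · rw [Bool.eq_false_iff.2 fun h2 => h (Nat.le_of_ble_eq_true h2), if_neg h, cond_false]

lemma lenE_eq (L : List Coord) : ∀ b, lenE L b = (en L b).length := by
  induction L with
  | nil => intro b; rfl
  | cons c cs ih =>
    intro b
    obtain ⟨os, r⟩ := c
    have key : ∀ os : List (ℕ × ℕ), (List.rec 0 (fun o _ acc =>
        bif Nat.ble o.2 b then Nat.add (fr (Nat.sub b o.2) (lenE cs)) acc else acc) os : ℕ) =
        (os.flatMap fun o => if o.2 ≤ b then (en cs (b - o.2)).map fun f j => ct r o j + f j else []).length := by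
      intro os
      induction os with
      | nil => rfl
      | cons o os ih2 =>
        simp only [ble_ite] at ih2 ⊢
        rw [List.flatMap_cons, List.length_append, ← ih2, fr_eq]
        by_cases h : o.2 ≤ b
        · rw [if_pos h, if_pos h, List.length_map, ← ih]; rfl
        · rw [if_neg h, if_neg h, List.length_nil, zero_add]
    exact key os

/-- The recursion computes the packed list of values over `en`. -/
lemma KT_eq (md g) (L : List Coord) (j : ℕ) : ∀ b r, r < md j →
    KT md g L b j r = pk (en L b) fun f => g j ((r + f j) % md j) := by
  induction L with
  | nil =>
    intro b r hr
    change g j r = g j ((r + 0) % md j) + 65536 * 0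
    rw [add_zero, Nat.mod_eq_of_lt hr]; rfl
  | cons c cs ih =>
    intro b r hr
    obtain ⟨os, row⟩ := c
    have key : ∀ os : List (ℕ × ℕ), (List.rec 0 (fun o _ acc =>
        bif Nat.ble o.2 b then
          fr (Nat.sub b o.2) (fun b' =>
          fr (Nat.mod (Nat.add r (ct row o j)) (md j)) (fun r' =>
            Nat.add (KT md g cs b' j r') (Nat.shiftLeft acc (Nat.mul 16 (lenE cs b'))))) else acc) os : ℕ) =
        pk (os.flatMap fun o => if o.2 ≤ b then (en cs (b - o.2)).map fun f j => ct row o j + f j else [])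
          fun f => g j ((r + f j) % md j) := by
      intro os
      induction os with
      | nil => rfl
      | cons o os ih2 =>
        simp only [ble_ite, fr_eq] at ih2 ⊢
        rw [List.flatMap_cons, pk_append, ← ih2]
        by_cases h : o.2 ≤ b
        · rw [if_pos h, if_pos h, List.length_map, pk_map, lenE_eq]
          simp only [Nat.add_eq, Nat.sub_eq]
          have e1 : ∀ m, Nat.mul 16 m = 16 * m := fun _ => rfl
          have e2 : ∀ x y, Nat.shiftLeft x y = x * 2 ^ y := Nat.shiftLeft_eq
          have e3 : ∀ x y, Nat.mod x y = x % y := fun _ _ => rfl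
          rw [e1, e2, e3, ih _ _ (Nat.mod_lt _ (by omega)), pow_mul, show (2 : ℕ) ^ 16 = 65536 by norm_num,
            mul_comm (65536 ^ _)]
          refine congrArg (· + _) (pk_congr _ _ _ fun f _ => ?_)
          simp only [Function.comp, Nat.mod_add_mod, add_assoc]
        · rw [if_neg h, if_neg h, pk, List.length_nil, zero_add, pow_zero, one_mul]
    exact key os

/-- The number of members of a list that satisfy a condition. -/
def nOf {α : Type} (p : α → Prop) [DecidablePred p] (L : List α) : ℕ := (L.map fun x => if p x then 1 else 0).sum

lemma nOf_le_length {α : Type} (p : α → Prop) [DecidablePred p] (L : List α) : nOf p L ≤ L.length := by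
  induction L with
  | nil => exact le_rfl
  | cons x L ih =>
    simp only [nOf, List.map_cons, List.sum_cons, List.length_cons] at ih ⊢
    split_ifs <;> omega

lemma nOf_append {α : Type} (p : α → Prop) [DecidablePred p] (L M : List α) : nOf p (L ++ M) = nOf p L + nOf p M := by
  simp only [nOf, List.map_append, List.sum_append]

lemma pk_lt {ι : Type} (L : List ι) (g : ι → ℕ) (hg : ∀ x ∈ L, g x < 65536) : pk L g < 65536 ^ L.length := by
  induction L with
  | nil => simp [pk]
  | cons x L ih =>
    have h1 := hg x List.mem_cons_self
    have h2 := ih fun y hy => hg y (List.mem_cons_of_mem _ hy)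
    simp only [pk, List.length_cons, pow_succ]
    omega

lemma pk_shift {ι : Type} (m : ℕ) (L : List ι) (g : ι → ℕ) (hg : ∀ x ∈ L, g x < 65536) (hm : m ≤ L.length) :
    pk L g >>> (16 * m) = pk (L.drop m) g ∧
      pk L g - (pk L g >>> (16 * m)) <<< (16 * m) = pk (L.take m) g := by
  have hl : (L.take m).length = m := List.length_take_of_le hm
  have e : pk L g = pk (L.take m) g + 65536 ^ m * pk (L.drop m) g := by
    conv_lhs => rw [← List.take_append_drop m L]
    rw [pk_append, hl]
  have h1 := pk_lt (L.take m) g fun x hx => hg x (List.mem_of_mem_take hx)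
  rw [hl] at h1
  have hp : (2 : ℕ) ^ (16 * m) = 65536 ^ m := by rw [pow_mul]; norm_num
  have h2 : pk L g >>> (16 * m) = pk (L.drop m) g := by
    rw [Nat.shiftRight_eq_div_pow, hp, e, Nat.add_mul_div_left _ _ (by positivity), Nat.div_eq_of_lt h1, zero_add]
  refine ⟨h2, ?_⟩
  rw [h2, Nat.shiftLeft_eq, hp, e, mul_comm (pk (L.drop m) g), Nat.add_sub_cancel]

lemma cntC_ge (k : ℕ) {ι : Type} : ∀ (L : List ι) (g : ι → ℕ), (∀ x ∈ L, g x < 65536) →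
    nOf (fun x => 32768 ≤ g x) L ≤ cntC k L.length (pk L g) := by
  induction k with
  | zero => intro L g _; exact nOf_le_length _ L
  | succ k ih =>
    intro L g hg
    have h : ∀ n X, cntC (k + 1) n X = bif Nat.ble n 32768 then cnt n X else
      fr (X >>> 524288) (fun Y => cnt 32768 (X - Y <<< 524288) + cntC k (n - 32768) Y) := fun _ _ => rfl
    rw [h, ble_ite, fr_eq]
    split_ifs with hn
    · rw [cnt_eq L g hg (by omega)]; exact le_rfl
    · have hl : (L.take 32768).length = 32768 := List.length_take_of_le (by omega)
      have hd : (L.drop 32768).length = L.length - 32768 := List.length_drop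
      obtain ⟨e1, e2⟩ := pk_shift 32768 L g hg (by omega)
      rw [show 16 * 32768 = 524288 by norm_num] at e1 e2
      rw [e2, e1, ← hd]
      have c1 := cnt_eq (L.take 32768) g (fun x hx => hg x (List.mem_of_mem_take hx)) (by omega)
      rw [hl] at c1
      rw [c1]
      conv_lhs => rw [← List.take_append_drop 32768 L]
      rw [nOf_append]
      exact Nat.add_le_add le_rfl (ih _ _ fun x hx => hg x (List.mem_of_mem_drop hx))

/-- The total value of a choice is at most `T` exactly if `32768 + T` minus it is at least 32768, and the
number of such digits is what `leaf` computes. -/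
lemma leaf_ge (md g T) (L : List Coord) (b : ℕ) (R : ℕ → ℕ) (hmd : ∀ j, 0 < md j)
    (hg : ∀ j r, r < md j → g j r ≤ 1900) (hT : T < 32768) :
    nOf (fun f => totg md g (fun j => R j + f j) ≤ T) (en L b) ≤ leaf md g T L b R := by
  have hs : sumK md g L b R = pk (en L b) fun f => totg md g (fun j => R j + f j) := by
    unfold sumK totg
    rw [sumL_eq, ← pk_sum]
    refine congrArg _ (List.map_congr_left fun j _ => ?_)
    rw [fr_eq, show Nat.mod (R j) (md j) = R j % md j from rfl, KT_eq _ _ _ _ _ _ (Nat.mod_lt _ (hmd j))]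
    refine pk_congr _ _ _ fun f _ => ?_
    change g j ((R j % md j + f j) % md j) = _
    rw [Nat.mod_add_mod]
  have hb : ∀ f : ℕ → ℕ, totg md g (fun j => R j + f j) ≤ 32768 := by
    intro f
    have h : ∀ j, g j ((R j + f j) % md j) ≤ 1900 := fun j => hg _ _ (Nat.mod_lt _ (hmd j))
    have h2 : totg md g (fun j => R j + f j) ≤ (js.map fun _ => 1900).sum :=
      List.sum_le_sum fun j _ => h j
    exact h2.trans (by decide)
  unfold leaf
  rw [fr_eq, hs, lenE_eq]
  change _ ≤ cntC 64 _ ((32768 + T) * ones _ - _)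
  rw [ones_eq, pk_mul, pk_sub _ _ _ fun f _ => by have := hb f; omega]
  refine le_trans (le_of_eq ?_) (cntC_ge 64 (en L b) _ fun f _ => by omega)
  unfold nOf
  refine congrArg _ (List.map_congr_left fun f _ => ?_)
  have := hb f
  by_cases h : totg md g (fun j => R j + f j) ≤ T
  · rw [if_pos h, if_pos (by omega)]
  · rw [if_neg h, if_neg (by omega)]

/-- The search over `D` splits the choices for `D ++ L` according to the choices at `D`. -/
lemma scan_ge (md g T) (L D : List Coord) (hmd : ∀ j, 0 < md j)
    (hg : ∀ j r, r < md j → g j r ≤ 1900) (hT : T < 32768) : ∀ b R,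
    nOf (fun f => totg md g (fun j => R j + f j) ≤ T) (en (D ++ L) b) ≤ scan md g T L D b R := by
  induction D with
  | nil => intro b R; exact leaf_ge md g T L b R hmd hg hT
  | cons c cs ih =>
    intro b R
    obtain ⟨os, row⟩ := c
    have key : ∀ os : List (ℕ × ℕ), nOf (fun f => totg md g (fun j => R j + f j) ≤ T)
        (os.flatMap fun o => if o.2 ≤ b then (en (cs ++ L) (b - o.2)).map fun f j => ct row o j + f j else []) ≤
      (List.rec 0 (fun o _ acc => bif Nat.ble o.2 b then fr (Nat.sub b o.2) (fun b' =>
        Nat.add (scan md g T L cs b' (fun j => Nat.add (R j) (ct row o j))) acc) else acc) os : ℕ) := by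
      intro os
      induction os with
      | nil => exact le_rfl
      | cons o os ih2 =>
        simp only [ble_ite, fr_eq] at ih2 ⊢
        rw [List.flatMap_cons, nOf_append]
        by_cases h : o.2 ≤ b
        · rw [if_pos h, if_pos h]
          refine Nat.add_le_add ?_ ih2
          refine le_trans (le_of_eq ?_) (ih (b - o.2) fun j => R j + ct row o j)
          simp only [nOf, List.map_map, Function.comp_def, add_assoc]
        · rw [if_neg h, if_neg h]
          exact le_trans (by simp [nOf]) ih2
    exact key os

/-- Every choice of admissible residues of total cost at most `b` is enumerated. -/
lemma mem_en (opts : ℕ → List (ℕ × ℕ)) (row : ℕ → ℕ) (a c : ℕ → ℕ) (l : List ℕ) :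
    (∀ i ∈ l, (a i, c i) ∈ opts i) → ∀ b, (l.map c).sum ≤ b →
    (fun j => (l.map fun i => ct (row i) (a i, c i) j).sum) ∈ en (l.map fun i => (opts i, row i)) b := by
  induction l with
  | nil => intro _ b _; exact List.mem_singleton.2 rfl
  | cons i l ih =>
    intro h b hb
    rw [List.map_cons, List.sum_cons] at hb
    rw [List.map_cons, en, List.mem_flatMap]
    refine ⟨(a i, c i), h i List.mem_cons_self, ?_⟩
    rw [if_pos (by simp only; omega), List.mem_map]
    exact ⟨_, ih (fun k hk => h k (List.mem_cons_of_mem _ hk)) _ (by simp only; omega), rfl⟩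

/-- The integers from 0 to 15. -/
def rng16 : List ℕ := [0,1,2,3,4,5,6,7,8,9,10,11,12,13,14,15]

/-- The words in a set are counted by `scan`, if the positions `I` determine the positions `J` and
conversely, and if the cost of a word is bounded by `h` on `I` and by `T` in total. -/
lemma card_le_scan {p : ℕ} [NeZero p] {I J : ℕ → P1} {row row' : ℕ → ℕ} {cst : P1 → ℕ → ℕ}
    {opts : ℕ → List (ℕ × ℕ)} {md g T h} {L D : List Coord} (A : Finset (P1 → ZMod p))
    (hmd : ∀ j, 0 < md j) (hmdp : ∀ j ∈ rng16, md j = p) (hg : ∀ j r, r < md j → g j r ≤ 1900)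
    (hT : T < 32768)
    (hDL : D ++ L = rng16.map fun i => (opts i, row i))
    (hIJ : ∀ P : P1, (∃ i ∈ rng16, I i = P) ∨ ∃ j ∈ rng16, J j = P)
    (hopts : ∀ i ∈ rng16, ∀ r < p, cst (I i) r ≤ h → (r, cst (I i) r) ∈ opts i)
    (hgc : ∀ j ∈ rng16, ∀ r < p, g j r ≤ cst (J j) r) (hg16 : ∀ r, g 16 r ≤ r)
    (hrel : ∀ w ∈ A, ∀ j ∈ rng16, w (J j) = (rng16.map fun i => (nb (row i) j : ZMod p) * w (I i)).sum)
    (hrel' : ∀ w ∈ A, ∀ i ∈ rng16, w (I i) = (rng16.map fun j => (nb (row' j) i : ZMod p) * w (J j)).sum)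
    (hh : ∀ w ∈ A, (rng16.map fun i => cst (I i) (w (I i)).val).sum ≤ h)
    (hc : ∀ w ∈ A, (rng16.map fun i => cst (I i) (w (I i)).val).sum +
      (rng16.map fun j => cst (J j) (w (J j)).val).sum ≤ T) :
    A.card ≤ scan md g T L D h (fun _ => 0) := by
  classical
  -- the encoded coordinates of a word
  let F : (P1 → ZMod p) → ℕ → ℕ := fun w j =>
    (rng16.map fun i => ct (row i) ((w (I i)).val, cst (I i) (w (I i)).val) j).sum
  have n16 : ∀ j ∈ rng16, Nat.beq j 16 = false := by decide
  have hF : ∀ w ∈ A, ∀ j ∈ rng16, F w j % p = (w (J j)).val := by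
    intro w hw j hj
    rw [hrel w hw j hj, ← ZMod.val_natCast]
    congr 1
    simp only [F, ct, n16 j hj, cond_false]
    rw [Nat.cast_list_sum, List.map_map]
    refine congrArg _ (List.map_congr_left fun i _ => ?_)
    simp only [Function.comp, Nat.mul_eq]
    push_cast
    rw [ZMod.natCast_zmod_val]
  have hF16 : ∀ w, F w 16 = (rng16.map fun i => cst (I i) (w (I i)).val).sum := fun w => rfl
  have hmem : ∀ w ∈ A, F w ∈ en (D ++ L) h := by
    intro w hw
    rw [hDL]
    refine mem_en opts row (fun i => (w (I i)).val) (fun i => cst (I i) (w (I i)).val) rng16 (fun i hi => ?_) h (hh w hw)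
    refine hopts i hi _ (ZMod.val_lt _) ((List.single_le_sum (fun _ _ => Nat.zero_le _) _ ?_).trans (hh w hw))
    exact List.mem_map_of_mem (f := fun i => cst (I i) (w (I i)).val) hi
  have htot : ∀ w ∈ A, totg md g (F w) ≤ T := by
    intro w hw
    have e : totg md g (F w) = (rng16.map fun j => g j (F w j % md j)).sum + g 16 (F w 16 % md 16) := by
      simp only [totg, js, rng16, List.map_cons, List.map_nil, List.sum_cons, List.sum_nil]; ring
    rw [e]
    refine le_trans ?_ (hc w hw)
    rw [add_comm]
    refine Nat.add_le_add (((hg16 _).trans (Nat.mod_le _ _)).trans (hF16 w).le) (List.sum_le_sum fun j hj => ?_)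
    rw [hmdp j hj, hF w hw j hj]
    exact hgc j hj _ (ZMod.val_lt _)
  have hinj : Set.InjOn F A := by
    intro w hw w' hw' hww
    have hJ : ∀ j ∈ rng16, w (J j) = w' (J j) := fun j hj => by
      apply ZMod.val_injective p
      rw [← hF w hw j hj, ← hF w' hw' j hj, hww]
    have hI : ∀ i ∈ rng16, w (I i) = w' (I i) := fun i hi => by
      rw [hrel' w hw i hi, hrel' w' hw' i hi]
      exact congrArg _ (List.map_congr_left fun j hj => by rw [hJ j hj])
    funext P
    rcases hIJ P with ⟨i, hi, rfl⟩ | ⟨j, hj, rfl⟩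
    · exact hI i hi
    · exact hJ j hj
  have hs := scan_ge md g T L D hmd hg hT h (fun _ => 0)
  simp only [zero_add] at hs
  refine le_trans ?_ hs
  rw [← Finset.card_image_of_injOn hinj]
  have hsub : A.image F ⊆ ((en (D ++ L) h).filter fun f => totg md g f ≤ T).toFinset := by
    intro f hf
    obtain ⟨w, hw, rfl⟩ := Finset.mem_image.1 hf
    rw [List.mem_toFinset, List.mem_filter]
    exact ⟨hmem w hw, decide_eq_true (htot w hw)⟩
  refine (Finset.card_le_card hsub).trans ((List.toFinset_card_le _).trans (le_of_eq ?_))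
  generalize en (D ++ L) h = M
  induction M with
  | nil => rfl
  | cons f M ih =>
    simp only [nOf, List.map_cons, List.sum_cons, List.filter_cons] at ih ⊢
    by_cases hf : totg md g f ≤ T
    · rw [if_pos hf, if_pos (decide_eq_true hf), List.length_cons, ih, add_comm]
    · rw [if_neg hf, if_neg (by simpa using hf), ih, zero_add]

/-! ### The residues of the model vectors modulo 5 and 7 -/

/-- The rows of the encoding matrix modulo 5 from the first half to the second of the positions. -/
def P50 : List ℕ := [4900272792040251956, 3751552448367706148, 2306968922055844900, 2323857614688109120,
  2594076696804336640, 1441472955367559732, 293635661481852964, 4626375563571962916,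
  4846718740740588096, 2464105833005519635, 4621256460566938146, 4764813092660191776,
  1442015277400404802, 302307638576677124, 4765127539344683556,
  1445727030531601202]
/-- The rows of the encoding matrix modulo 5 from the second half to the first of the positions. -/
def P51 : List ℕ := [3536173568676069649, 2522353621427819314, 2540649365478912259, 2450575303312085779,
  1369678278827258899, 293635661481852964, 4698170583709647424, 4918513740745285649,
  2320516133638242849, 4693051116974252099, 4838009646525579329, 1370220255920521249,
  302307638576677124, 4836922217226833984, 1373932352649101329,
  4684888414796067617]
/-- The rows of the encoding matrix modulo 7 from the first half to the second of the positions. -/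
def P70 : List ℕ := [7283556656132395334, 4926978009110558213, 1166454302852588340, 1369446276538708800,
  5068295606129459491, 3674994690221155078, 7369301941540881427, 5936946440709624326,
  226029226633200978, 3531386179085804099, 4761187856563901281, 7282691283223581698,
  4915225033558876725, 1451285135935952436, 5982258483664463396,
  1596017217392359011]
/-- The rows of the encoding matrix modulo 7 from the second half to the first of the positions. -/
def P71 : List ℕ := [4842027404066292513, 1532351087573808131, 1230947601344775190, 4981375157174027590,
  3761915620102395475, 7003397939513025348, 6215922297318092897, 226029226633200978,
  3616467626131215648, 4707762448910798868, 6918765304486232883, 4828180958257886801,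
  1310939279320506371, 5788363593057698838, 1455548217360990258,
  7089531404568192561]

/-- The point of the projective line with a given position. -/
def pt (k : ℕ) : P1 := bif Nat.beq k 31 then none else some (k : ZMod 31)

/-- The sign at a position, as a natural number modulo 35. -/
def sg (tw : Bool) (k : ℕ) : ℕ := bif Nat.beq k 31 then (bif tw then 34 else 1) else 1

/-- The letters of the generators of `Q`. -/
def gv (μ k : ℕ) : ℕ := bif Nat.beq k 31 then 2 else fr (Nat.mod (Nat.sub (Nat.add k 31) μ) 31) (nth 0 vt)

/-- The check that, up to the factor `c`, the generators satisfy the encoding relations. -/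
def relChk (c : ℕ) (tw : Bool) (P : List ℕ) (a b : ℕ) : Prop :=
  ∀ μ ∈ rng, ∀ j ∈ rng16, Nat.mod (Nat.mul c (Nat.mul (sg tw (Nat.add b j)) (gv μ (Nat.add b j)))) 35 =
    Nat.mod (Nat.mul c (sumL (fun i => Nat.mul (nb (nth 0 P i) j) (Nat.mul (sg tw (Nat.add a i)) (gv μ (Nat.add a i)))) rng16)) 35

instance (c tw P a b) : Decidable (relChk c tw P a b) := by unfold relChk; infer_instance

section
set_option maxRecDepth 100000

def rel_50 : PLift (relChk 7 true P50 0 16) := ⟨by decide +kernel⟩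
def rel_51 : PLift (relChk 7 true P51 16 0) := ⟨by decide +kernel⟩
def rel_70 : PLift (relChk 5 false P70 0 16) := ⟨by decide +kernel⟩
def rel_71 : PLift (relChk 5 false P71 16 0) := ⟨by decide +kernel⟩

lemma gv_eq (μ : ZMod 31) (k : ℕ) (hk : k < 32) : ((gv μ.val k : ℕ) : ZMod 35) = vgen μ (pt k) := by
  unfold gv pt
  cases hb : Nat.beq k 31 with
  | true => rfl
  | false =>
    rw [cond_false, cond_false, fr_eq, vgen_eq]
    have key : (k + 31 - μ.val) % 31 = ((k : ZMod 31) - μ).val := by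
      have h3 := μ.val_lt
      have e : (((k + 31 - μ.val : ℕ)) : ZMod 31) = k - μ := by
        have h31 : (31 : ZMod 31) = 0 := by decide
        rw [Nat.cast_sub (by omega), Nat.cast_add, ZMod.natCast_zmod_val]
        change (k : ZMod 31) + 31 - μ = _
        rw [h31, add_zero]
      rw [← e, ZMod.val_natCast]
    rw [← key]
    rfl

lemma list_sum_mul {R : Type} [CommSemiring R] (l : List ℕ) (c : R) (f : ℕ → R) :
    c * (l.map f).sum = (l.map fun i => c * f i).sum := by
  induction l with
  | nil => simp
  | cons a l ih => simp only [List.map_cons, List.sum_cons, mul_add, ih]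

lemma list_sum_add {R : Type} [CommSemiring R] (l : List ℕ) (f g : ℕ → R) :
    (l.map fun i => f i + g i).sum = (l.map f).sum + (l.map g).sum := by
  induction l with
  | nil => simp
  | cons a l ih => simp only [List.map_cons, List.sum_cons, ih]; ring

/-- The encoding relations hold, up to the factor `c`, for all words of `Q`. -/
lemma rel_Q {c : ℕ} {tw : Bool} {P : List ℕ} {a b : ℕ} (h : relChk c tw P a b) (ha : a ≤ 16) (hb : b ≤ 16)
    {w} (hw : w ∈ Qcode) : ∀ j ∈ rng16, (c : ZMod 35) * ((sg tw (b + j) : ZMod 35) * w (pt (b + j))) =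
      c * (rng16.map fun i => (nb (nth 0 P i) j : ZMod 35) * ((sg tw (a + i) : ZMod 35) * w (pt (a + i)))).sum := by
  have r16 : ∀ j ∈ rng16, j < 16 := by decide
  intro j hj
  induction hw using AddSubgroup.closure_induction with
  | mem x hx =>
    obtain ⟨μ, rfl⟩ := hx
    have h1 := h _ (val_rng μ) j hj
    have h2 := congrArg (Nat.cast (R := ZMod 35)) h1
    simp only [Nat.add_eq, Nat.mul_eq] at h2
    have e3 : ∀ x y, Nat.mod x y = x % y := fun _ _ => rfl
    rw [e3, e3, ZMod.natCast_mod, ZMod.natCast_mod, sumL_eq, Nat.cast_mul, Nat.cast_mul, Nat.cast_mul,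
      Nat.cast_list_sum, List.map_map, gv_eq _ _ (by have := r16 j hj; omega)] at h2
    rw [h2]
    refine congrArg _ (congrArg _ (List.map_congr_left fun i hi => ?_))
    simp only [Function.comp]
    rw [Nat.cast_mul, Nat.cast_mul, gv_eq _ _ (by have := r16 i hi; omega)]
  | zero => simp
  | add x y _ _ hx hy =>
    simp only [Pi.add_apply, mul_add] at hx hy ⊢
    rw [list_sum_add, mul_add, hx, hy]
  | neg x _ hx =>
    simp only [Pi.neg_apply, mul_neg] at hx ⊢
    rw [hx, ← mul_neg]
    refine congrArg _ ?_
    induction rng16 with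
    | nil => simp
    | cons a l ih => simp only [List.map_cons, List.sum_cons, neg_add, ih]

/-- The encoding relations. -/
def rel {p : ℕ} (P : List ℕ) (a b : ℕ) (w : P1 → ZMod p) : Prop :=
  ∀ j ∈ rng16, w (pt (b + j)) = (rng16.map fun i => (nb (nth 0 P i) j : ZMod p) * w (pt (a + i))).sum

/-- The residues modulo `p` of an integral vector. -/
def resd (p : ℕ) (e : P1 → ℤ) : P1 → ZMod p := fun P => (e P : ZMod p)

lemma rel_of_dvd {p c : ℕ} (hpc : c * p = 35) {P : List ℕ} {a b : ℕ} {e : P1 → ℤ}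
    (h : ∀ j ∈ rng16, (c : ZMod 35) * (e (pt (b + j)) : ZMod 35) =
      c * (rng16.map fun i => (nb (nth 0 P i) j : ZMod 35) * (e (pt (a + i)) : ZMod 35)).sum) :
    rel P a b (resd p e) := by
  intro j hj
  have h1 := h j hj
  have e1 : ((c * (e (pt (b + j)) - (rng16.map fun i => (nb (nth 0 P i) j : ℤ) * e (pt (a + i))).sum) : ℤ) : ZMod 35) = 0 := by
    rw [Int.cast_mul, Int.cast_sub, Int.cast_list_sum, List.map_map, mul_sub, sub_eq_zero, Int.cast_natCast, h1]
    refine congrArg _ (congrArg _ (List.map_congr_left fun i hi => ?_))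
    simp only [Function.comp]
    push_cast
    rfl
  have e2 := (ZMod.intCast_zmod_eq_zero_iff_dvd _ 35).1 e1
  have hc : (c : ℤ) ≠ 0 := by rintro hc; have : c = 0 := by exact_mod_cast hc
                              subst this; omega
  have e3 : (p : ℤ) ∣ e (pt (b + j)) - (rng16.map fun i => (nb (nth 0 P i) j : ℤ) * e (pt (a + i))).sum := by
    have : ((35 : ℕ) : ℤ) = c * p := by exact_mod_cast hpc.symm
    rw [this] at e2
    exact (mul_dvd_mul_iff_left hc).1 e2
  have e4 := (ZMod.intCast_zmod_eq_zero_iff_dvd _ p).2 e3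
  rw [Int.cast_sub, Int.cast_list_sum, List.map_map, sub_eq_zero] at e4
  change ((e (pt (b + j)) : ℤ) : ZMod p) = _
  rw [e4]
  refine congrArg _ (List.map_congr_left fun i hi => ?_)
  simp only [Function.comp, resd]
  push_cast
  rfl

/-- The residues modulo 7 of the first component satisfy the encoding relations: multiplication by 5
isolates the part modulo 7 of the word. -/
lemma rel_fst {x : ZZ} (hx : x ∈ MM) : rel P70 0 16 (resd 7 x.1) ∧ rel P71 16 0 (resd 7 x.1) := by
  have e35 : (35 : ZMod 35) = 0 := by decide
  have key : ∀ k, ((5 : ℕ) : ZMod 35) * ((sg false k : ZMod 35) * word x (pt k)) = (5 : ℕ) * (x.1 (pt k) : ZMod 35) := by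
    intro k
    have h1 : sg false k = 1 := by unfold sg; cases Nat.beq k 31 <;> rfl
    rw [h1]
    simp only [word]
    push_cast
    linear_combination (2 * (x.1 (pt k) : ZMod 35) - 3 * (sgn (pt k) * x.2 (pt k) : ZMod 35)) * e35
  constructor
  · refine rel_of_dvd (c := 5) rfl fun j hj => ?_
    have := rel_Q rel_70.down (by norm_num) (by norm_num) hx.2 j hj
    rw [key, list_sum_mul] at this
    rw [this, list_sum_mul]
    refine congrArg _ (List.map_congr_left fun i hi => ?_)
    linear_combination (nb (nth 0 P70 i) j : ZMod 35) * key (0 + i)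
  · refine rel_of_dvd (c := 5) rfl fun j hj => ?_
    have := rel_Q rel_71.down (by norm_num) (by norm_num) hx.2 j hj
    rw [key, list_sum_mul] at this
    rw [this, list_sum_mul]
    refine congrArg _ (List.map_congr_left fun i hi => ?_)
    linear_combination (nb (nth 0 P71 i) j : ZMod 35) * key (16 + i)

/-- The residues modulo 5 of the second component satisfy the encoding relations; multiplication by 7
isolates the part modulo 5 of the word. -/
lemma rel_snd {x : ZZ} (hx : x ∈ MM) : rel P50 0 16 (resd 5 x.2) ∧ rel P51 16 0 (resd 5 x.2) := by
  have e35 : (35 : ZMod 35) = 0 := by decide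
  have key : ∀ k, ((7 : ℕ) : ZMod 35) * ((sg true k : ZMod 35) * word x (pt k)) = -((7 : ℕ) * (x.2 (pt k) : ZMod 35)) := by
    intro k
    have h1 : ((sg true k : ℕ) : ZMod 35) = sgn (pt k) := by
      unfold sg pt sgn; cases Nat.beq k 31 <;> simp; decide
    have h2 : ((sgn (pt k) : ℤ) : ZMod 35) * sgn (pt k) = 1 := by
      exact_mod_cast congrArg (Int.cast (R := ZMod 35)) (sgn_sq (pt k))
    rw [h1]
    simp only [word]
    push_cast
    linear_combination (3 * (sgn (pt k) * x.1 (pt k) : ZMod 35) - 4 * x.2 (pt k)) * e35 - 147 * (x.2 (pt k) : ZMod 35) * h2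
  constructor
  · refine rel_of_dvd (c := 7) rfl fun j hj => ?_
    have := rel_Q rel_50.down (by norm_num) (by norm_num) hx.2 j hj
    rw [key, list_sum_mul, neg_eq_iff_eq_neg] at this
    rw [this, list_sum_mul, ← neg_one_mul, list_sum_mul]
    refine congrArg _ (List.map_congr_left fun i hi => ?_)
    linear_combination -(nb (nth 0 P50 i) j : ZMod 35) * key (0 + i)
  · refine rel_of_dvd (c := 7) rfl fun j hj => ?_
    have := rel_Q rel_51.down (by norm_num) (by norm_num) hx.2 j hj
    rw [key, list_sum_mul, neg_eq_iff_eq_neg] at this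
    rw [this, list_sum_mul, ← neg_one_mul, list_sum_mul]
    refine congrArg _ (List.map_congr_left fun i hi => ?_)
    linear_combination -(nb (nth 0 P51 i) j : ZMod 35) * key (16 + i)

end

/-! ### The computations -/

section
set_option maxRecDepth 100000

/-- The modulus of the encoded coordinate number `j`. Coordinate 16 is the cost, which stays below 1000. -/
def md (p j : ℕ) : ℕ := bif Nat.beq j 16 then 1000 else p
/-- The square of the integer of smallest absolute value with a given residue modulo 5. -/
def c5 (r : ℕ) : ℕ := nb 82960 r
/-- The square of the integer of smallest absolute value with a given residue modulo 7. -/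
def c7 (r : ℕ) : ℕ := nb 21599248 r
/-- The square of the odd (or even) integer of smallest absolute value with a given residue modulo 7. -/
def c57 (o : Bool) (r : ℕ) : ℕ :=
  Nat.mod (Nat.shiftRight (bif o then 309001574744369 else 10137566196278272) (Nat.mul 8 r)) 256
/-- The values of the encoded coordinates modulo 5; they add up to the cost of a word. -/
def g5 (j r : ℕ) : ℕ := bif Nat.beq j 16 then r else c5 r
/-- The values of the encoded coordinates modulo 7. -/
def g7 (j r : ℕ) : ℕ := bif Nat.beq j 16 then r else c7 r
/-- The residues modulo 5 and their costs. -/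
def v5 : List (ℕ × ℕ) := [(0,0),(1,1),(4,1),(2,4),(3,4)]
/-- The residues modulo 7 of cost at most 10 and their costs. -/
def v7 : List (ℕ × ℕ) := [(0,0),(1,1),(6,1),(2,4),(5,4),(3,9),(4,9)]
/-- The admissible residues modulo 7 of small odd and even integers. -/
def v57 (o : Bool) : List (ℕ × ℕ) := bif o then [(1,1),(6,1),(3,9),(4,9)] else [(0,0),(2,4),(5,4)]
/-- The list of positions with given choices of residues and encoding matrix. -/
def mk (v : ℕ → List (ℕ × ℕ)) (P : List ℕ) : List Coord := rng16.map fun i => (v i, nth 0 P i)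

/-- Representatives `(0, 2u)` for the vectors `u` of norm 20 with residues in the code modulo 5,
by their weights. -/
def reps15 : List ℕ := [61756001782438619217271609418377984286345095518602447917448914729850951469192,
  47225217778963533897495598548556944371264549108226354587409987793730987919496]
def reps5 : List ℕ := [47278222274269469873701692674857053364180619017339162445297014754501141760136,
  47338543588112514329236838685381425413651372022601521525594341063497987164296]
def reps1 : List ℕ := [75324945470683894835656982763421158325248508746618123631070061787082159327368]
/-- The parity of `u` at a position. -/
def od (r k : ℕ) : Bool := Nat.beq (Nat.mod (nb r (Nat.add 32 k)) 4) 2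
/-- The values of the encoded coordinates modulo 7, for vectors congruent to a given `u` modulo 2. -/
def g57 (rep b j r : ℕ) : ℕ := bif Nat.beq j 16 then r else c57 (od rep (Nat.add b j)) r

/-- Words of cost at most 20 have cost at most 10 on the first half or at most 9 on the second. The number
is that of the vectors `(0, 2u)`, which is 81344, and twice the zero word. -/
def scan_50 : PLift (scan (md 5) g5 20 ((mk (fun _ => v5) P50).drop 6) ((mk (fun _ => v5) P50).take 6) 10 (fun _ => 0) +
    scan (md 5) g5 20 ((mk (fun _ => v5) P51).drop 6) ((mk (fun _ => v5) P51).take 6) 9 (fun _ => 0) = 81346) :=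
  ⟨by decide +kernel⟩
/-- The zero word is the only word of total cost at most 21 and of cost at most 10 on the first half. -/
def scan_70 : PLift (scan (md 7) g7 21 ((mk (fun _ => v7) P70).drop 6) ((mk (fun _ => v7) P70).take 6) 10
    (fun _ => 0) = 1) := ⟨by decide +kernel⟩
/-- The zero word is the only word of total cost at most 21 and of cost at most 10 on the second half. -/
def scan_71 : PLift (scan (md 7) g7 21 ((mk (fun _ => v7) P71).drop 6) ((mk (fun _ => v7) P71).take 6) 10
    (fun _ => 0) = 1) := ⟨by decide +kernel⟩
/-- There is no word of cost at most 28, for the parities of `u`, and of cost at most 14 on the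
first half, or on the second. -/
def scan_57 : PLift (∀ r ∈ reps15 ++ reps5 ++ reps1,
    scan (md 7) (g57 r 16) 28 ((mk (fun i => v57 (od r i)) P70).drop 6)
      ((mk (fun i => v57 (od r i)) P70).take 6) 14 (fun _ => 0) = 0 ∧
    scan (md 7) (g57 r 0) 28 ((mk (fun i => v57 (od r (Nat.add 16 i))) P71).drop 6)
      ((mk (fun i => v57 (od r (Nat.add 16 i))) P71).take 6) 14 (fun _ => 0) = 0) := ⟨by decide +kernel⟩

/-- The weighted list of the representatives `(0, 2u)`. -/
def W5 : List (ℕ × List ℕ) := [(15, reps15), (5, reps5), (1, reps1)]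

/-- `totW W5`, with the lengths of the lists evaluated. -/
def tot5 (v T : ℕ) : ℕ :=
  Nat.add (Nat.mul 15 (cntv reps15 2 v T)) (Nat.add (Nat.mul 5 (cntv reps5 2 v T)) (cntv reps1 1 v T))

lemma sum_W5 (c : List ℕ → ℕ → ℕ) : (W5.map fun q => q.1 * c q.2 q.2.length).sum =
    15 * c reps15 2 + (5 * c reps5 2 + c reps1 1) := by
  have h : (W5.map fun q => q.1 * c q.2 q.2.length).sum = 15 * c reps15 2 + (5 * c reps5 2 +
    (1 * c reps1 1 + 0)) := rfl
  rw [h]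
  omega

lemma totW_W5 (v T : ℕ) : totW W5 v T = tot5 v T := sum_W5 fun ls n => cntv ls n v T

def W5_mem : PLift (∀ w ∈ W5, ∀ r ∈ w.2, memChk r) := ⟨by decide +kernel⟩
def W5_norm : PLift (∀ w ∈ W5, ∀ r ∈ w.2, normChk r 560) := ⟨by decide +kernel⟩
def tot_5 : PLift (∀ w ∈ W5, ∀ r ∈ w.2, tot5 r 560 = 30) := ⟨by decide +kernel⟩
/-- The first components vanish, the second ones are even and at most 4 in absolute value. -/
def W5_dig : PLift (∀ w ∈ W5, ∀ r ∈ w.2, ∀ i ∈ rng32, nb r i = 8 ∧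
    (nb r (Nat.add 32 i) = 4 ∨ nb r (Nat.add 32 i) = 6 ∨ nb r (Nat.add 32 i) = 8 ∨ nb r (Nat.add 32 i) = 10
      ∨ nb r (Nat.add 32 i) = 12)) := ⟨by decide +kernel⟩

end

/-! ### Short vectors modulo 5 and modulo 7 -/

lemma sum_halves (f : P1 → ℕ) : (rng16.map fun i => f (pt (0 + i))).sum + (rng16.map fun i => f (pt (16 + i))).sum
    = ∑ P, f P := by
  have h : ∑ P, f P = ∑ P, f (pt (idx P)) := Finset.sum_congr rfl fun P _ => by
    have : ∀ P : P1, pt (idx P) = P := by decide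
    rw [this P]
  rw [h, ← sumL_rng32 fun k => f (pt k), sumL_eq]
  simp only [rng16, rng32, List.map_cons, List.map_nil, List.sum_cons, List.sum_nil, Nat.zero_add, Nat.reduceAdd]
  ring

/-- The cost of a half of a word. -/
def hc (cst : P1 → ℕ → ℕ) (a : ℕ) {p : ℕ} (w : P1 → ZMod p) : ℕ :=
  (rng16.map fun i => cst (pt (a + i)) (w (pt (a + i))).val).sum

/-- The cost of a word is the sum of the costs of its halves. -/
lemma hc_add (cst : P1 → ℕ → ℕ) {p : ℕ} (w : P1 → ZMod p) : hc cst 0 w + hc cst 16 w = ∑ P, cst P (w P).val :=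
  sum_halves fun P => cst P (w P).val

/-- `card_le_scan` for the encoding matrices between the two halves. -/
lemma card_le_half {p : ℕ} [NeZero p] {P P' : List ℕ} {a b : ℕ} (hab : a = 0 ∧ b = 16 ∨ a = 16 ∧ b = 0)
    {cst : P1 → ℕ → ℕ} {opts : ℕ → List (ℕ × ℕ)} {g : ℕ → ℕ → ℕ} {T h : ℕ} (A : Finset (P1 → ZMod p))
    (hg : ∀ j r, r < md p j → g j r ≤ 1900) (hT : T < 32768)
    (hopts : ∀ i ∈ rng16, ∀ r < p, cst (pt (a + i)) r ≤ h → (r, cst (pt (a + i)) r) ∈ opts i)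
    (hgc : ∀ j ∈ rng16, ∀ r < p, g j r ≤ cst (pt (b + j)) r) (hg16 : ∀ r, g 16 r ≤ r)
    (hrel : ∀ w ∈ A, rel P a b w ∧ rel P' b a w)
    (hh : ∀ w ∈ A, hc cst a w ≤ h) (hc' : ∀ w ∈ A, ∑ P, cst P (w P).val ≤ T) :
    A.card ≤ scan (md p) g T ((mk opts P).drop 6) ((mk opts P).take 6) h (fun _ => 0) := by
  have hp : 0 < p := NeZero.pos p
  refine card_le_scan (I := fun i => pt (a + i)) (J := fun j => pt (b + j)) (row := nth 0 P) (row' := nth 0 P')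
    (cst := cst) (opts := opts) A (fun j => ?_) ?_ hg hT (List.take_append_drop _ _) ?_ hopts hgc hg16
    (fun w hw => (hrel w hw).1) (fun w hw => (hrel w hw).2) hh (fun w hw => ?_)
  · unfold md; cases Nat.beq j 16
    · exact hp
    · norm_num
  · have : ∀ j ∈ rng16, Nat.beq j 16 = false := by decide
    intro j hj
    rw [md, this j hj, cond_false]
  · have h1 : ∀ P : P1, (∃ i ∈ rng16, pt (0 + i) = P) ∨ ∃ j ∈ rng16, pt (16 + j) = P := by decide
    rcases hab with ⟨rfl, rfl⟩ | ⟨rfl, rfl⟩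
    · exact h1
    · exact fun P => (h1 P).symm
  · refine le_trans ?_ (hc' w hw)
    rw [← hc_add]
    rcases hab with ⟨rfl, rfl⟩ | ⟨rfl, rfl⟩
    · exact le_rfl
    · exact (Nat.add_comm _ _).le

lemma list_sum_zero (l : List ℕ) : (l.map fun _ => 0).sum = 0 := by simp

lemma rel_zero {p : ℕ} (P : List ℕ) (a b : ℕ) : rel P a b (0 : P1 → ZMod p) := by
  intro j _
  simp

lemma sq_le_of_abs {e : ℤ} {c : ℤ} (hc : 0 ≤ c) (h : c ≤ e ∨ e ≤ -c) : c * c ≤ e * e := by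
  rcases h with h | h <;> nlinarith

lemma c5_le (e : ℤ) : ((c5 (e : ZMod 5).val : ℕ) : ℤ) ≤ e * e := by
  have h := ZMod.val_intCast (n := 5) e
  push_cast at h
  have h5 : e % 5 = 0 ∨ e % 5 = 1 ∨ e % 5 = 2 ∨ e % 5 = 3 ∨ e % 5 = 4 := by omega
  have t : c5 0 = 0 ∧ c5 1 = 1 ∧ c5 2 = 4 ∧ c5 3 = 4 ∧ c5 4 = 1 := by decide
  rcases h5 with h5 | h5 | h5 | h5 | h5
  · have hv : (e : ZMod 5).val = 0 := by omega
    rw [hv, t.1]; exact sq_le_of_abs (c := 0) le_rfl (by omega)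
  · have hv : (e : ZMod 5).val = 1 := by omega
    rw [hv, t.2.1]; exact sq_le_of_abs (c := 1) (by norm_num) (by omega)
  · have hv : (e : ZMod 5).val = 2 := by omega
    rw [hv, t.2.2.1]; exact sq_le_of_abs (c := 2) (by norm_num) (by omega)
  · have hv : (e : ZMod 5).val = 3 := by omega
    rw [hv, t.2.2.2.1]; exact sq_le_of_abs (c := 2) (by norm_num) (by omega)
  · have hv : (e : ZMod 5).val = 4 := by omega
    rw [hv, t.2.2.2.2]; exact sq_le_of_abs (c := 1) (by norm_num) (by omega)

lemma mod7_cases (e : ℤ) : (e : ZMod 7).val = e % 7 ∧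
    (e % 7 = 0 ∨ e % 7 = 1 ∨ e % 7 = 2 ∨ e % 7 = 3 ∨ e % 7 = 4 ∨ e % 7 = 5 ∨ e % 7 = 6) :=
  ⟨ZMod.val_intCast (n := 7) e, by omega⟩

lemma c7_le (e : ℤ) : ((c7 (e : ZMod 7).val : ℕ) : ℤ) ≤ e * e := by
  obtain ⟨h, h7⟩ := mod7_cases e
  have t : c7 0 = 0 ∧ c7 1 = 1 ∧ c7 2 = 4 ∧ c7 3 = 9 ∧ c7 4 = 9 ∧ c7 5 = 4 ∧ c7 6 = 1 := by decide
  obtain ⟨t0, t1, t2, t3, t4, t5, t6⟩ := t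
  rcases h7 with h5 | h5 | h5 | h5 | h5 | h5 | h5
  · have hv : (e : ZMod 7).val = 0 := by omega
    rw [hv, t0]; exact sq_le_of_abs (c := 0) le_rfl (by omega)
  · have hv : (e : ZMod 7).val = 1 := by omega
    rw [hv, t1]; exact sq_le_of_abs (c := 1) (by norm_num) (by omega)
  · have hv : (e : ZMod 7).val = 2 := by omega
    rw [hv, t2]; exact sq_le_of_abs (c := 2) (by norm_num) (by omega)
  · have hv : (e : ZMod 7).val = 3 := by omega
    rw [hv, t3]; exact sq_le_of_abs (c := 3) (by norm_num) (by omega)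
  · have hv : (e : ZMod 7).val = 4 := by omega
    rw [hv, t4]; exact sq_le_of_abs (c := 3) (by norm_num) (by omega)
  · have hv : (e : ZMod 7).val = 5 := by omega
    rw [hv, t5]; exact sq_le_of_abs (c := 2) (by norm_num) (by omega)
  · have hv : (e : ZMod 7).val = 6 := by omega
    rw [hv, t6]; exact sq_le_of_abs (c := 1) (by norm_num) (by omega)

/-- A lower bound for the square of an integer of known parity and residue modulo 7. -/
lemma c57_le (o : Bool) (e : ℤ) (ho : o = true ↔ e % 2 = 1) : ((c57 o (e : ZMod 7).val : ℕ) : ℤ) ≤ e * e := by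
  obtain ⟨h, h7⟩ := mod7_cases e
  have t : ∀ r < 7, c57 true r = nth 0 [49, 1, 25, 9, 9, 25, 1] r ∧ c57 false r = nth 0 [0, 36, 4, 16, 16, 4, 36] r := by
    decide
  cases o with
  | true =>
    have h2 : e % 2 = 1 := ho.1 rfl
    rcases h7 with h5 | h5 | h5 | h5 | h5 | h5 | h5
    · have hv : (e : ZMod 7).val = 0 := by omega
      rw [hv, (t 0 (by norm_num)).1]; exact sq_le_of_abs (c := 7) (by norm_num) (by omega)
    · have hv : (e : ZMod 7).val = 1 := by omega
      rw [hv, (t 1 (by norm_num)).1]; exact sq_le_of_abs (c := 1) (by norm_num) (by omega)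
    · have hv : (e : ZMod 7).val = 2 := by omega
      rw [hv, (t 2 (by norm_num)).1]; exact sq_le_of_abs (c := 5) (by norm_num) (by omega)
    · have hv : (e : ZMod 7).val = 3 := by omega
      rw [hv, (t 3 (by norm_num)).1]; exact sq_le_of_abs (c := 3) (by norm_num) (by omega)
    · have hv : (e : ZMod 7).val = 4 := by omega
      rw [hv, (t 4 (by norm_num)).1]; exact sq_le_of_abs (c := 3) (by norm_num) (by omega)
    · have hv : (e : ZMod 7).val = 5 := by omega
      rw [hv, (t 5 (by norm_num)).1]; exact sq_le_of_abs (c := 5) (by norm_num) (by omega)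
    · have hv : (e : ZMod 7).val = 6 := by omega
      rw [hv, (t 6 (by norm_num)).1]; exact sq_le_of_abs (c := 1) (by norm_num) (by omega)
  | false =>
    have h2 : e % 2 = 0 := by
      have : ¬ e % 2 = 1 := fun h => by simpa using ho.2 h
      omega
    rcases h7 with h5 | h5 | h5 | h5 | h5 | h5 | h5
    · have hv : (e : ZMod 7).val = 0 := by omega
      rw [hv, (t 0 (by norm_num)).2]; exact sq_le_of_abs (c := 0) (by norm_num) (by omega)
    · have hv : (e : ZMod 7).val = 1 := by omega
      rw [hv, (t 1 (by norm_num)).2]; exact sq_le_of_abs (c := 6) (by norm_num) (by omega)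
    · have hv : (e : ZMod 7).val = 2 := by omega
      rw [hv, (t 2 (by norm_num)).2]; exact sq_le_of_abs (c := 2) (by norm_num) (by omega)
    · have hv : (e : ZMod 7).val = 3 := by omega
      rw [hv, (t 3 (by norm_num)).2]; exact sq_le_of_abs (c := 4) (by norm_num) (by omega)
    · have hv : (e : ZMod 7).val = 4 := by omega
      rw [hv, (t 4 (by norm_num)).2]; exact sq_le_of_abs (c := 4) (by norm_num) (by omega)
    · have hv : (e : ZMod 7).val = 5 := by omega
      rw [hv, (t 5 (by norm_num)).2]; exact sq_le_of_abs (c := 2) (by norm_num) (by omega)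
    · have hv : (e : ZMod 7).val = 6 := by omega
      rw [hv, (t 6 (by norm_num)).2]; exact sq_le_of_abs (c := 6) (by norm_num) (by omega)

/-- The residues of a short vector have small cost. -/
lemma cost_le {p : ℕ} {cst : P1 → ℕ → ℕ} {e : P1 → ℤ} {T : ℕ}
    (h : ∀ P, ((cst P (e P : ZMod p).val : ℕ) : ℤ) ≤ e P * e P) (hT : ∑ P, e P * e P ≤ T) :
    ∑ P, cst P (resd p e P).val ≤ T := by
  have h1 : ((∑ P, cst P (resd p e P).val : ℕ) : ℤ) ≤ ∑ P, e P * e P := by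
    rw [Nat.cast_sum]
    exact Finset.sum_le_sum fun P _ => h P
  exact_mod_cast h1.trans hT

lemma le_sum_sq (e : P1 → ℤ) (P : P1) : e P * e P ≤ ∑ P, e P * e P :=
  Finset.single_le_sum (f := fun P => e P * e P) (fun P _ => mul_self_nonneg _) (Finset.mem_univ P)

lemma eq_zero_of_sum_sq {e : P1 → ℤ} (h : ∑ P, e P * e P ≤ 0) : e = 0 :=
  funext fun P => by
    have := le_sum_sq e P
    exact mul_self_eq_zero.1 (le_antisymm (this.trans h) (mul_self_nonneg _))

lemma resd_eq_zero {p : ℕ} {e : P1 → ℤ} (h : resd p e = 0) (hp : ∑ P, e P * e P < p * p) : e = 0 := by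
  funext P
  have h1 : (p : ℤ) ∣ e P := (ZMod.intCast_zmod_eq_zero_iff_dvd _ _).1 (congrFun h P)
  obtain ⟨k, hk⟩ := h1
  by_contra hne
  have h2 := le_sum_sq e P
  have hk0 : k ≠ 0 := by rintro rfl; exact hne (by simpa using hk)
  have h3 : 1 ≤ k * k := by
    have := mul_self_pos.2 hk0
    omega
  rw [hk] at h2
  nlinarith [mul_self_nonneg (p : ℤ)]

lemma c7_opts {r : ℕ} (h7 : r < 7) (h : c7 r ≤ 10) : (r, c7 r) ∈ v7 := by
  have : ∀ r < 7, c7 r ≤ 10 → (r, c7 r) ∈ v7 := by decide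
  exact this r h7 h

lemma g7_le (j r : ℕ) (h : r < md 7 j) : g7 j r ≤ 1900 := by
  unfold g7
  unfold md at h
  cases hb : Nat.beq j 16 with
  | true => rw [hb, cond_true] at h; rw [cond_true]; omega
  | false =>
    rw [hb, cond_false] at h; rw [cond_false]
    have : ∀ r < 7, c7 r ≤ 1900 := by decide
    exact this r h

lemma g5_le (j r : ℕ) (h : r < md 5 j) : g5 j r ≤ 1900 := by
  unfold g5
  unfold md at h
  cases hb : Nat.beq j 16 with
  | true => rw [hb, cond_true] at h; rw [cond_true]; omega
  | false =>
    rw [hb, cond_false] at h; rw [cond_false]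
    have : ∀ r < 5, c5 r ≤ 1900 := by decide
    exact this r h

lemma g57_le (rep b j r : ℕ) (h : r < md 7 j) : g57 rep b j r ≤ 1900 := by
  unfold g57
  unfold md at h
  cases hb : Nat.beq j 16 with
  | true => rw [hb, cond_true] at h; rw [cond_true]; omega
  | false =>
    rw [hb, cond_false] at h; rw [cond_false]
    have : ∀ o, ∀ r < 7, c57 o r ≤ 1900 := by decide
    exact this _ r h

lemma beq16 {j : ℕ} (hj : j ∈ rng16) : Nat.beq j 16 = false := by
  have : ∀ j ∈ rng16, Nat.beq j 16 = false := by decide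
  exact this j hj

/-- Vectors with residues in the code modulo 7 that have small norm vanish. -/
lemma small7 {e : P1 → ℤ} (h : rel P70 0 16 (resd 7 e) ∧ rel P71 16 0 (resd 7 e)) (hn : ∑ P, e P * e P ≤ 21) :
    e = 0 := by
  classical
  refine resd_eq_zero (p := 7) ?_ (by push_cast; linarith)
  have hcost := cost_le (p := 7) (cst := fun _ => c7) (fun P => c7_le (e P)) (T := 21) (by exact_mod_cast hn)
  have hsum := hc_add (fun _ => c7) (resd 7 e)
  have z0 : hc (fun _ => c7) 0 (0 : P1 → ZMod 7) = 0 := by decide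
  have z16 : hc (fun _ => c7) 16 (0 : P1 → ZMod 7) = 0 := by decide
  have zs := hc_add (fun _ => c7) (0 : P1 → ZMod 7)
  let A : Finset (P1 → ZMod 7) := {0, resd 7 e}
  have hA : ∀ {q : (P1 → ZMod 7) → Prop}, q 0 → q (resd 7 e) → ∀ w ∈ A, q w := by
    intro q h0 h1 w hw
    rcases Finset.mem_insert.1 hw with rfl | hw
    · exact h0
    · rw [Finset.mem_singleton.1 hw]; exact h1
  have fin : A.card ≤ 1 → resd 7 e = 0 := fun hle =>
    (Finset.card_le_one.1 hle 0 (by simp [A]) _ (by simp [A])).symm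
  have hgc : ∀ j ∈ rng16, ∀ r < 7, g7 j r ≤ c7 r := fun j hj r _ => by
    rw [g7, beq16 hj, cond_false]
  have g16 : ∀ r, g7 16 r ≤ r := fun r => le_rfl
  rcases Nat.lt_or_ge 10 (hc (fun _ => c7) 0 (resd 7 e)) with hb | hb
  · refine fin ((card_le_half (P := P71) (P' := P70) (a := 16) (b := 0) (Or.inr ⟨rfl, rfl⟩) (cst := fun _ => c7)
      (opts := fun _ => v7) (g := g7) (T := 21) (h := 10) A g7_le (by norm_num)
      (fun i _ r hr hle => c7_opts hr hle) hgc g16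
      (hA ⟨rel_zero _ _ _, rel_zero _ _ _⟩ h.symm) (hA (by omega) (by omega)) (hA (by omega) hcost)).trans_eq scan_71.down)
  · refine fin ((card_le_half (P := P70) (P' := P71) (a := 0) (b := 16) (Or.inl ⟨rfl, rfl⟩) (cst := fun _ => c7)
      (opts := fun _ => v7) (g := g7) (T := 21) (h := 10) A g7_le (by norm_num)
      (fun i _ r hr hle => c7_opts hr hle) hgc g16
      (hA ⟨rel_zero _ _ _, rel_zero _ _ _⟩ h) (hA (by omega) hb) (hA (by omega) hcost)).trans_eq scan_70.down)

lemma c57_opts {o : Bool} {r : ℕ} (h7 : r < 7) (h : c57 o r ≤ 14) : (r, c57 o r) ∈ v57 o := by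
  have : ∀ o, ∀ r < 7, c57 o r ≤ 14 → (r, c57 o r) ∈ v57 o := by decide
  exact this o r h7 h

/-- There are no small vectors with residues in the code modulo 7 that are congruent modulo 2 to one
of the `u`. -/
lemma small57 {r : ℕ} (hr : r ∈ reps15 ++ reps5 ++ reps1) {e : P1 → ℤ}
    (h : rel P70 0 16 (resd 7 e) ∧ rel P71 16 0 (resd 7 e))
    (hod : ∀ P, od r (idx P) = true ↔ e P % 2 = 1) (hn : ∑ P, e P * e P ≤ 28) : False := by
  classical
  have hcost := cost_le (p := 7) (cst := fun P => c57 (od r (idx P))) (fun P => c57_le _ (e P) (hod P)) (T := 28)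
    (by exact_mod_cast hn)
  have hsum := hc_add (fun P => c57 (od r (idx P))) (resd 7 e)
  have hA : ∀ {q : (P1 → ZMod 7) → Prop}, q (resd 7 e) → ∀ w ∈ ({resd 7 e} : Finset (P1 → ZMod 7)), q w := by
    intro q h1 w hw
    rw [Finset.mem_singleton.1 hw]; exact h1
  have i0 : ∀ i ∈ rng16, idx (pt (0 + i)) = i := by decide
  have i16 : ∀ i ∈ rng16, idx (pt (16 + i)) = 16 + i := by decide
  have key := scan_57.down r hr
  rcases Nat.lt_or_ge 14 (hc (fun P => c57 (od r (idx P))) 0 (resd 7 e)) with hb | hb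
  · have := (card_le_half (P := P71) (P' := P70) (a := 16) (b := 0) (Or.inr ⟨rfl, rfl⟩)
      (cst := fun P => c57 (od r (idx P)))
      (opts := fun i => v57 (od r (Nat.add 16 i))) (g := g57 r 0) (T := 28) (h := 14) {resd 7 e} (g57_le r 0) (by norm_num)
      (fun i hi r hr hle => by simp only [i16 i hi] at hle ⊢; exact c57_opts hr hle)
      (fun j hj r hr => by simp only [i0 j hj]; rw [g57, beq16 hj, cond_false]; simp only [Nat.add_eq, Nat.zero_add, le_refl])
      (fun r => le_rfl) (hA h.symm) (hA (by omega)) (hA hcost)).trans_eq key.2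
    simp at this
  · have := (card_le_half (P := P70) (P' := P71) (a := 0) (b := 16) (Or.inl ⟨rfl, rfl⟩)
      (cst := fun P => c57 (od r (idx P)))
      (opts := fun i => v57 (od r i)) (g := g57 r 16) (T := 28) (h := 14) {resd 7 e} (g57_le r 16) (by norm_num)
      (fun i hi r hr hle => by simp only [i0 i hi] at hle ⊢; exact c57_opts hr hle)
      (fun j hj r hr => by simp only [i16 j hj]; rw [g57, beq16 hj, cond_false]; exact le_rfl)
      (fun r => le_rfl) (hA h) (hA hb) (hA hcost)).trans_eq key.1
    simp at this

/-! ### The vectors of norm 20 modulo 5, and the minimal norm -/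

/-- The second component of the action. -/
lemma act_snd (γ : GG) (x : ZZ) : (act γ x).2 = fun P => (γ.2 : ℤ) * sact γ.1 x.2 P := rfl

lemma act_snd_mul (γ : GG) (c : ℤ) {x y : ZZ} (h : y.2 = fun P => c * x.2 P) (P : P1) :
    (act γ y).2 P = c * (act γ x).2 P := by
  simp only [act_snd, h, sact_cmul]
  ring

/-- The property of having the entries of the `2u`. -/
def dig (z : ℤ) : Prop := z = 0 ∨ z = 2 ∨ z = -2 ∨ z = 4 ∨ z = -4

lemma dig_mul {c z : ℤ} (hc : c = 0 ∨ c = 1 ∨ c = -1) (h : dig z) : dig (c * z) := by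
  unfold dig at *
  rcases hc with rfl | rfl | rfl <;> omega

lemma chi_cases (a) : chi a = 0 ∨ chi a = 1 ∨ chi a = -1 := by
  by_cases h : a = 0
  · exact Or.inl (by rw [h, chi_zero])
  · exact Or.inr (mul_self_eq_one_iff.1 (chi_sq h))

lemma dig_sact {x : P1 → ℤ} (h : ∀ P, dig (x P)) (g P) : dig (sact g x P) := by
  unfold sact hat
  split_ifs
  · exact dig_mul (chi_cases _) (h _)
  · exact dig_mul (chi_cases _) (h _)

lemma W5_dec {w} (hw : w ∈ W5) {r} (hr : r ∈ w.2) : (dec2 r).1 = 0 ∧ ∀ P, dig ((dec2 r).2 P) := by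
  have h := W5_dig.down w hw r hr
  constructor
  · funext P
    rw [dec2_fst, (h _ (idx_rng32 P)).1]
    rfl
  · intro P
    rw [dec2_snd]
    have := (h _ (idx_rng32 P)).2
    simp only [Nat.add_eq] at this
    unfold dig
    omega

lemma W5_reps {w} (hw : w ∈ W5) {r} (hr : r ∈ w.2) : r ∈ reps15 ++ reps5 ++ reps1 := by
  simp only [W5, List.mem_cons, List.not_mem_nil, or_false] at hw
  simp only [List.mem_append]
  rcases hw with rfl | rfl | rfl
  · exact Or.inl (Or.inl hr)
  · exact Or.inl (Or.inr hr)
  · exact Or.inr hr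

/-- The vectors `(0, 2u)`. -/
noncomputable def U5 : Finset ZZ := Img (decW W5)

lemma mem_U5 {y : ZZ} : y ∈ U5 ↔ ∃ w ∈ W5, ∃ r ∈ w.2, ∃ γ, act γ (dec2 r) = y := by
  unfold U5
  rw [mem_Img]
  constructor
  · rintro ⟨q, hq, γ, rfl⟩
    obtain ⟨w, hw, r, hr, rfl⟩ := mem_decW.1 hq
    exact ⟨w, hw, r, hr, γ, rfl⟩
  · rintro ⟨w, hw, r, hr, γ, rfl⟩
    exact ⟨_, mem_decW.2 ⟨w, hw, r, hr, rfl⟩, γ, rfl⟩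

lemma U5_prop {y : ZZ} (hy : y ∈ U5) : y ∈ MM ∧ bil y y = 560 ∧ y.1 = 0 ∧ ∀ P, dig (y.2 P) := by
  obtain ⟨w, hw, r, hr, γ, rfl⟩ := mem_U5.1 hy
  obtain ⟨h1, h2⟩ := W5_dec hw hr
  refine ⟨act_mem γ (memChk_mem (W5_mem.down w hw r hr)), ?_, ?_, fun P => ?_⟩
  · rw [bil_act, normChk_eq (W5_norm.down w hw r hr)]; rfl
  · funext P
    simp [act, h1, sact, hat]
  · exact dig_mul (Or.inr (by rcases Int.units_eq_one_or γ.2 with h | h <;> simp [h])) (dig_sact h2 _ _)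

lemma card_GG : Fintype.card GG = 59520 := by
  have h := sum_GG (fun _ => 1) 0 0
  have hq : (qrs.map fun _ : ℕ => 1 + 1 + 1 + 1).sum = 60 := rfl
  have hz : Fintype.card (ZMod 31) = 31 := ZMod.card 31
  rw [Fintype.card_eq_sum_ones]
  refine h.trans ?_
  simp only [hq]
  rw [Finset.sum_const, Finset.sum_const, Finset.card_univ, Finset.card_univ, card_P1, hz]
  rfl

open Classical in
/-- The number of vectors in a union of orbits all of whose vectors are hit with total weight `N`. -/
lemma card_Img {W : List (ℕ × List ℕ)} {N n : ℕ} (hn : n ≤ 8000) (hW : ∀ w ∈ W, w.2.length ≤ 100)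
    (hb : ∀ w ∈ W, ∀ r ∈ w.2, bil (dec2 r) (dec2 r) = n)
    (hN : ∀ w ∈ W, ∀ r ∈ w.2, totW W r n = N) {s : ℕ} (hs : ((decW W).map fun q => q.1).sum = s) :
    s * 59520 = N * (Img (decW W)).card := by
  have h := totW_count hn hW hb hN (fun _ => True)
  have e : s * 59520 = cntL (decW W) fun _ => True := by
    rw [← hs, ← card_GG]
    exact (cntG_true _).symm
  rw [e, h]
  congr 2
  ext x
  simp only [Finset.mem_filter, and_true]

/-- The sum of the weights is `2 * 15 + 2 * 5 + 1 = 41`, and `41 * 59520 = 30 * 81344`. -/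
lemma card_U5 : U5.card = 81344 := by
  have hW : ∀ w ∈ W5, w.2.length ≤ 100 := by decide
  have h := card_Img (W := W5) (N := 30) (n := 560) (by norm_num) hW
    (fun w hw r hr => normChk_eq (W5_norm.down w hw r hr))
    (fun w hw r hr => (totW_W5 r 560).trans (tot_5.down w hw r hr)) (s := 41) rfl
  unfold U5
  omega

lemma dig_inj {a b : ℤ} (ha : dig a) (hb : dig b) (h : ((3 * a : ℤ) : ZMod 5) = ((3 * b : ℤ) : ZMod 5)) : a = b := by
  have h' := (ZMod.intCast_eq_intCast_iff_dvd_sub _ _ _).1 h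
  unfold dig at *
  omega

/-- The residues modulo 5 of `u`, for a vector `(0, 2u)`. -/
def ph (y : ZZ) : P1 → ZMod 5 := resd 5 fun P => 3 * y.2 P

lemma mul3_mem {x : ZZ} (hx : x ∈ MM) : x + x + x ∈ MM := add_mem_MM (add_mem_MM hx hx) hx

lemma rel_ph {y : ZZ} (hy : y ∈ MM) : rel P50 0 16 (ph y) ∧ rel P51 16 0 (ph y) := by
  have h := rel_snd (mul3_mem hy)
  have e : (fun P => 3 * y.2 P) = (y + y + y).2 := by
    funext P
    simp only [Prod.snd_add, Pi.add_apply]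
    ring
  unfold ph
  rw [e]
  exact h

/-- The entries of `u` are at most 2 in absolute value, so their squares are the costs. -/
lemma cost_ph {y : ZZ} (hy : y ∈ U5) : ∑ P, c5 (ph y P).val = 20 := by
  obtain ⟨_, h1, h2, h3⟩ := U5_prop hy
  have key : ∀ z : ℤ, dig z → ((28 * c5 ((3 * z : ℤ) : ZMod 5).val : ℕ) : ℤ) = 7 * (z * z) := by
    intro z hz
    have t : c5 0 = 0 ∧ c5 1 = 1 ∧ c5 2 = 4 ∧ c5 3 = 4 ∧ c5 4 = 1 := by decide
    have hv := ZMod.val_intCast (n := 5) (3 * z)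
    push_cast at hv
    rcases hz with rfl | rfl | rfl | rfl | rfl
    · have : (((3 * 0 : ℤ)) : ZMod 5).val = 0 := by decide
      rw [this, t.1]; rfl
    · have : (((3 * 2 : ℤ)) : ZMod 5).val = 1 := by decide
      rw [this, t.2.1]; rfl
    · have : (((3 * -2 : ℤ)) : ZMod 5).val = 4 := by decide
      rw [this, t.2.2.2.2]; rfl
    · have : (((3 * 4 : ℤ)) : ZMod 5).val = 2 := by decide
      rw [this, t.2.2.1]; rfl
    · have : (((3 * -4 : ℤ)) : ZMod 5).val = 3 := by decide
      rw [this, t.2.2.2.1]; rfl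
  have h4 : ((∑ P, 28 * c5 (ph y P).val : ℕ) : ℤ) = 560 := by
    rw [Nat.cast_sum, ← h1, bil]
    refine Finset.sum_congr rfl fun P _ => ?_
    rw [h2]
    simp only [Pi.zero_apply, mul_zero, zero_add]
    exact key _ (h3 P)
  rw [← Finset.mul_sum] at h4
  omega

lemma c5_opts {h : ℕ} {r : ℕ} (h5 : r < 5) (_ : c5 r ≤ h) : (r, c5 r) ∈ v5 := by
  have : ∀ r < 5, (r, c5 r) ∈ v5 := by decide
  exact this r h5

/-- A word with residues in the code modulo 5 and of cost at most 20 vanishes or comes from one of the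
vectors `(0, 2u)`: otherwise, since its cost is at most 10 on the first half or at most 9 on the
second, there would be too many such words. -/
lemma mem_ph {w : P1 → ZMod 5} (h : rel P50 0 16 w ∧ rel P51 16 0 w) (hc5 : ∑ P, c5 (w P).val ≤ 20) :
    w = 0 ∨ ∃ y ∈ U5, ph y = w := by
  classical
  by_contra! hcon
  have z : ∑ P : P1, c5 ((0 : P1 → ZMod 5) P).val = 0 :=
    Finset.sum_eq_zero fun P _ => by rw [Pi.zero_apply, ZMod.val_zero]; rfl
  let C : Finset (P1 → ZMod 5) := insert w (insert 0 (U5.image ph))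
  have hC : ∀ v ∈ C, (rel P50 0 16 v ∧ rel P51 16 0 v) ∧ ∑ P, c5 (v P).val ≤ 20 := by
    intro v hv
    rcases Finset.mem_insert.1 hv with rfl | hv
    · exact ⟨h, hc5⟩
    rcases Finset.mem_insert.1 hv with rfl | hv
    · exact ⟨⟨rel_zero _ _ _, rel_zero _ _ _⟩, by rw [z]; norm_num⟩
    · obtain ⟨y, hy, rfl⟩ := Finset.mem_image.1 hv
      exact ⟨rel_ph (U5_prop hy).1, (cost_ph hy).le⟩
  have hcard : C.card = 81346 := by
    rw [Finset.card_insert_of_notMem, Finset.card_insert_of_notMem, Finset.card_image_of_injOn, card_U5]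
    · intro y hy z hz hyz
      obtain ⟨_, _, h1, h2⟩ := U5_prop hy
      obtain ⟨_, _, h3, h4⟩ := U5_prop hz
      exact Prod.ext (h1.trans h3.symm) (funext fun P => dig_inj (h2 P) (h4 P) (congrFun hyz P))
    · intro h0
      obtain ⟨y, hy, h1⟩ := Finset.mem_image.1 h0
      have h2 := cost_ph hy
      rw [h1, z] at h2
      omega
    · intro h0
      rcases Finset.mem_insert.1 h0 with h1 | h1
      · exact hcon.1 h1
      · obtain ⟨y, hy, h2⟩ := Finset.mem_image.1 h1
        exact hcon.2 y hy h2
  let A0 := C.filter fun v => hc (fun _ => c5) 0 v ≤ 10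
  let A1 := C.filter fun v => hc (fun _ => c5) 16 v ≤ 9
  have hgc : ∀ j ∈ rng16, ∀ r < 5, g5 j r ≤ c5 r := fun j hj r _ => by
    rw [g5, beq16 hj, cond_false]
  have g16 : ∀ r, g5 16 r ≤ r := fun r => le_rfl
  have b0 : A0.card ≤ _ := card_le_half (P := P50) (P' := P51) (a := 0) (b := 16) (Or.inl ⟨rfl, rfl⟩)
    (cst := fun _ => c5) (opts := fun _ => v5) (g := g5) (T := 20) (h := 10) A0 g5_le (by norm_num)
    (fun i _ r hr hle => c5_opts hr hle) hgc g16
    (fun v hv => (hC v (Finset.mem_filter.1 hv).1).1) (fun v hv => (Finset.mem_filter.1 hv).2)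
    (fun v hv => (hC v (Finset.mem_filter.1 hv).1).2)
  have b1 : A1.card ≤ _ := card_le_half (P := P51) (P' := P50) (a := 16) (b := 0) (Or.inr ⟨rfl, rfl⟩)
    (cst := fun _ => c5) (opts := fun _ => v5) (g := g5) (T := 20) (h := 9) A1 g5_le (by norm_num)
    (fun i _ r hr hle => c5_opts hr hle) hgc g16
    (fun v hv => (hC v (Finset.mem_filter.1 hv).1).1.symm) (fun v hv => (Finset.mem_filter.1 hv).2)
    (fun v hv => (hC v (Finset.mem_filter.1 hv).1).2)
  have hU : A0 ∪ A1 = C := by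
    refine Finset.Subset.antisymm (Finset.union_subset (Finset.filter_subset _ _) (Finset.filter_subset _ _)) ?_
    intro v hv
    have h1 := hc_add (fun _ => c5) v
    have h2 := (hC v hv).2
    rw [Finset.mem_union, Finset.mem_filter, Finset.mem_filter]
    rcases Nat.lt_or_ge 10 (hc (fun _ => c5) 0 v) with hb | hb
    · exact Or.inr ⟨hv, by omega⟩
    · exact Or.inl ⟨hv, hb⟩
  have hI : 1 ≤ (A0 ∩ A1).card := by
    have z0 : hc (fun _ => c5) 0 (0 : P1 → ZMod 5) = 0 := by decide
    have z16 : hc (fun _ => c5) 16 (0 : P1 → ZMod 5) = 0 := by decide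
    have hz : (0 : P1 → ZMod 5) ∈ C := Finset.mem_insert_of_mem (Finset.mem_insert_self _ _)
    exact Finset.card_pos.2 ⟨0, Finset.mem_inter.2 ⟨Finset.mem_filter.2 ⟨hz, by omega⟩,
      Finset.mem_filter.2 ⟨hz, by omega⟩⟩⟩
  have hk := Finset.card_union_add_card_inter A0 A1
  rw [hU, hcard] at hk
  have hs := scan_50.down
  have b2 := (Nat.add_le_add b0 b1).trans_eq hs
  omega

/-- Vectors with residues in the code modulo 5 that have small norm. -/
lemma small5 {e : P1 → ℤ} (h : rel P50 0 16 (resd 5 e) ∧ rel P51 16 0 (resd 5 e)) (hn : ∑ P, e P * e P ≤ 20) :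
    e = 0 ∨ ∃ y ∈ U5, y.2 = fun P => 2 * e P := by
  rcases mem_ph h (cost_le (p := 5) (cst := fun _ => c5) (fun P => c5_le (e P)) (T := 20)
    (by exact_mod_cast hn)) with h0 | ⟨y, hy, hye⟩
  · exact Or.inl (resd_eq_zero (p := 5) h0 (by push_cast; linarith))
  · refine Or.inr ⟨y, hy, ?_⟩
    obtain ⟨_, h1, h2, h3⟩ := U5_prop hy
    have hd : ∀ P, y.2 P * y.2 P ≤ 4 * (e P * e P) ∧ (y.2 P * y.2 P = 4 * (e P * e P) → y.2 P = 2 * e P) := by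
      intro P
      have h5 := (ZMod.intCast_eq_intCast_iff_dvd_sub _ _ _).1 (congrFun hye P)
      push_cast at h5
      obtain hP | hP | hP | hP | hP := h3 P <;> rw [hP] at h5 ⊢
      · refine ⟨by nlinarith [mul_self_nonneg (e P)], fun h => ?_⟩
        have : e P = 0 := mul_self_eq_zero.1 (by linarith)
        omega
      · have : 1 ≤ e P ∨ e P ≤ -4 := by omega
        refine ⟨by rcases this with h | h <;> nlinarith, fun h => ?_⟩
        rcases this with h | h <;> nlinarith
      · have : 4 ≤ e P ∨ e P ≤ -1 := by omega
        refine ⟨by rcases this with h | h <;> nlinarith, fun h => ?_⟩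
        rcases this with h | h <;> nlinarith
      · have : 2 ≤ e P ∨ e P ≤ -3 := by omega
        refine ⟨by rcases this with h | h <;> nlinarith, fun h => ?_⟩
        rcases this with h | h <;> nlinarith
      · have : 3 ≤ e P ∨ e P ≤ -2 := by omega
        refine ⟨by rcases this with h | h <;> nlinarith, fun h => ?_⟩
        rcases this with h | h <;> nlinarith
    have hs : ∑ P, y.2 P * y.2 P = 80 := by
      have : bil y y = 7 * ∑ P, y.2 P * y.2 P := by
        rw [bil, h2, Finset.mul_sum]
        refine Finset.sum_congr rfl fun P _ => ?_
        simp
      linarith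
    have hle : ∑ P, y.2 P * y.2 P ≤ ∑ P, 4 * (e P * e P) := Finset.sum_le_sum fun P _ => (hd P).1
    have heq : ∑ P, y.2 P * y.2 P = ∑ P, 4 * (e P * e P) := by
      refine le_antisymm hle ?_
      rw [← Finset.mul_sum, hs]
      linarith
    have := (Finset.sum_eq_sum_iff_of_le fun P _ => (hd P).1).1 heq
    exact funext fun P => (hd P).2 (this P (Finset.mem_univ P))

lemma U5_sum {y : ZZ} (hy : y ∈ U5) {e : P1 → ℤ} (h : y.2 = fun P => 2 * e P) : ∑ P, e P * e P = 20 := by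
  obtain ⟨_, h1, h2, h3⟩ := U5_prop hy
  have : bil y y = 28 * ∑ P, e P * e P := by
    rw [bil, h2, h, Finset.mul_sum]
    refine Finset.sum_congr rfl fun P _ => ?_
    simp only [Pi.zero_apply]
    ring
  linarith

lemma bil_split (x : ZZ) : bil x x = 5 * (∑ P, x.1 P * x.1 P) + 7 * ∑ P, x.2 P * x.2 P := by
  rw [bil, Finset.mul_sum, Finset.mul_sum, ← Finset.sum_add_distrib]

lemma sum_sq_two (e : P1 → ℤ) : ∑ P, (2 * e P) * (2 * e P) = 4 * ∑ P, e P * e P := by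
  rw [Finset.mul_sum]
  exact Finset.sum_congr rfl fun P _ => by ring

lemma half_of_even {e : P1 → ℤ} (h : ∀ P, (2 : ℤ) ∣ e P) : ∃ f : P1 → ℤ, e = fun P => 2 * f P := by
  choose f hf using h
  exact ⟨f, funext hf⟩

/-- The minimal norm of `L_Q` is 6. -/
theorem min_norm : ∀ x ∈ MM, x ≠ 0 → 420 ≤ bil x x := by
  intro x hx hx0
  by_contra! hlt
  apply hx0
  have hS0 : 0 ≤ ∑ P, x.1 P * x.1 P := Finset.sum_nonneg fun P _ => mul_self_nonneg _
  have hD0 : 0 ≤ ∑ P, x.2 P * x.2 P := Finset.sum_nonneg fun P _ => mul_self_nonneg _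
  -- The form is a multiple of 140 here, so it is 140 or 280.
  obtain ⟨k, hk⟩ := bil_self_dvd hx
  have hsp := bil_split x
  have hle : bil x x ≤ 280 := by omega
  have hpar := hx.1
  -- Vectors with one vanishing component are divisible by 2.
  have hcase1 : x.1 = 0 → x = 0 := by
    intro h1
    obtain ⟨f, hf⟩ := half_of_even (e := x.2) fun P => by have := hpar P; rw [h1] at this; simpa using this
    have hn : ∑ P, f P * f P ≤ 10 := by
      have h2 := sum_sq_two f
      have h3 : ∑ P, x.2 P * x.2 P = ∑ P, (2 * f P) * (2 * f P) := by rw [hf]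
      omega
    have hr : resd 5 (x + x + x).2 = resd 5 f := by
      funext P
      have h5 : (5 : ZMod 5) = 0 := by decide
      simp only [resd, Prod.snd_add, Pi.add_apply, hf]
      push_cast
      linear_combination (f P : ZMod 5) * h5
    have h := rel_snd (mul3_mem hx)
    rw [hr] at h
    rcases small5 h (by linarith) with h0 | ⟨y, hy, hye⟩
    · refine Prod.ext h1 (hf.trans ?_)
      rw [h0]; rfl
    · have := U5_sum hy hye
      omega
  have hcase2 : x.2 = 0 → x = 0 := by
    intro h1
    obtain ⟨f, hf⟩ := half_of_even (e := x.1) fun P => by have := hpar P; rw [h1] at this; simpa using this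
    have hn : ∑ P, f P * f P ≤ 14 := by
      have h2 := sum_sq_two f
      have h3 : ∑ P, x.1 P * x.1 P = ∑ P, (2 * f P) * (2 * f P) := by rw [hf]
      omega
    have hr : resd 7 (x + x + x + x).1 = resd 7 f := by
      funext P
      have h7 : (7 : ZMod 7) = 0 := by decide
      simp only [resd, Prod.fst_add, Pi.add_apply, hf]
      push_cast
      linear_combination (f P : ZMod 7) * h7
    have h := rel_fst (add_mem_MM (mul3_mem hx) hx)
    rw [hr] at h
    have h0 := small7 h (by linarith)
    refine Prod.ext (hf.trans ?_) h1
    rw [h0]; rfl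
  rcases le_or_gt (∑ P, x.2 P * x.2 P) 20 with hD | hD
  · rcases small5 (rel_snd hx) hD with h0 | ⟨y, hy, hye⟩
    · exact hcase2 h0
    · exfalso
      obtain ⟨w, hw, r, hr, γ, rfl⟩ := mem_U5.1 hy
      -- Moving `2 x.2` to the representative of its orbit.
      have hz : ∀ P, (dec2 r).2 P = 2 * (act γ⁻¹ x).2 P := by
        intro P
        rw [← act_snd_mul γ⁻¹ 2 hye P, act_inv_act]
      have hb := bil_act γ⁻¹ x x
      have hs := bil_split (act γ⁻¹ x)
      have h20 : ∑ P, (act γ⁻¹ x).2 P * (act γ⁻¹ x).2 P = 20 :=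
        U5_sum (y := dec2 r) (mem_U5.2 ⟨w, hw, r, hr, 1, act_one _⟩) (funext hz)
      have hmem := act_mem γ⁻¹ hx
      refine small57 (W5_reps hw hr) (rel_fst hmem) (fun P => ?_) (by omega)
      have h1 := hz P
      rw [dec2_snd] at h1
      have h2 := hmem.1 P
      have h3 : od r (idx P) = true ↔ nb r (32 + idx P) % 4 = 2 := by
        unfold od
        exact ⟨Nat.eq_of_beq_eq_true, fun h => by rw [show Nat.mod (nb r (Nat.add 32 (idx P))) 4 = 2 from h]; rfl⟩
      rw [h3]
      omega
  · have h0 := small7 (rel_fst hx) (by omega)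
    exact hcase1 h0

/-! ### The types of the minimal vectors -/

lemma mem_ImgW {W : List (ℕ × List ℕ)} {y : ZZ} :
    y ∈ Img (decW W) ↔ ∃ w ∈ W, ∃ r ∈ w.2, ∃ γ, act γ (dec2 r) = y := by
  rw [mem_Img]
  constructor
  · rintro ⟨q, hq, γ, rfl⟩
    obtain ⟨w, hw, r, hr, rfl⟩ := mem_decW.1 hq
    exact ⟨w, hw, r, hr, γ, rfl⟩
  · rintro ⟨w, hw, r, hr, γ, rfl⟩
    exact ⟨_, mem_decW.2 ⟨w, hw, r, hr, rfl⟩, γ, rfl⟩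

lemma act_mem_Img {L : List (ℕ × ZZ)} (γ : GG) {y : ZZ} (hy : y ∈ Img L) : act γ y ∈ Img L := by
  obtain ⟨q, hq, δ, rfl⟩ := mem_Img.1 hy
  exact mem_Img.2 ⟨q, hq, γ * δ, act_mul _ _ _⟩

/-- The matrix `-1`. -/
def negOne : SL := ⟨!![-1, 0; 0, -1], by simp [Matrix.det_fin_two_of]⟩

lemma sact_negOne (x : P1 → ℤ) : sact negOne x = -x := by
  funext P
  have h : mulr (rp P) negOne = (-1 * (rp P).1, -1 * (rp P).2) := by
    simp [mulr, negOne]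
  rw [sact, h, hat_smul, chi_neg_one]
  change -1 * hat x (rp P) = _
  rw [hat_rp, Pi.neg_apply, neg_one_mul]

lemma neg_mem_Img {L : List (ℕ × ZZ)} {y : ZZ} (hy : y ∈ Img L) : -y ∈ Img L := by
  have h := act_mem_Img (negOne, 1) hy
  have e : act (negOne, 1) y = -y := by
    refine Prod.ext ?_ (funext fun P => ?_)
    · simp [act, sact_negOne]
    · simp [act, sact_negOne]
  rwa [e] at h

open Classical in
/-- The vectors in a union of orbits with a given condition on the inner product with `v`. -/
noncomputable def cs (W : List (ℕ × List ℕ)) (v : ZZ) (p : ℤ → Prop) : Finset ZZ :=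
  (Img (decW W)).filter fun x => p (bil v x)

lemma mem_cs {W : List (ℕ × List ℕ)} {v x : ZZ} {p : ℤ → Prop} :
    x ∈ cs W v p ↔ x ∈ Img (decW W) ∧ p (bil v x) := by
  classical
  exact Finset.mem_filter

/-- The number of vectors in a union of orbits with a given condition on the inner product with `v`. -/
noncomputable def cn (W : List (ℕ × List ℕ)) (v : ZZ) (p : ℤ → Prop) : ℕ := (cs W v p).card

lemma cn_congr {W : List (ℕ × List ℕ)} {v : ZZ} {p q : ℤ → Prop}
    (h : ∀ x ∈ Img (decW W), p (bil v x) ↔ q (bil v x)) : cn W v p = cn W v q := by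
  unfold cn
  congr 1
  ext x
  simp only [mem_cs]
  exact and_congr_right (h x)

lemma cn_or {W : List (ℕ × List ℕ)} {v : ZZ} {p q : ℤ → Prop} (h : ∀ b, p b → ¬ q b) :
    cn W v (fun b => p b ∨ q b) = cn W v p + cn W v q := by
  classical
  unfold cn
  rw [← Finset.card_union_of_disjoint]
  · congr 1
    ext x
    simp only [mem_cs, Finset.mem_union]
    tauto
  · exact Finset.disjoint_left.2 fun x h1 h2 => h _ (mem_cs.1 h1).2 (mem_cs.1 h2).2

/-- Counts of inner products are constant on orbits. -/
lemma cn_act (W : List (ℕ × List ℕ)) (γ : GG) (v : ZZ) (p : ℤ → Prop) : cn W (act γ v) p = cn W v p := by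
  unfold cn
  refine Finset.card_bij' (fun x _ => act γ⁻¹ x) (fun x _ => act γ x) ?_ ?_ ?_ ?_
  · intro x hx
    obtain ⟨h1, h2⟩ := mem_cs.1 hx
    refine mem_cs.2 ⟨act_mem_Img _ h1, ?_⟩
    rwa [← bil_act γ, ← act_mul, mul_inv_cancel, act_one]
  · intro x hx
    obtain ⟨h1, h2⟩ := mem_cs.1 hx
    refine mem_cs.2 ⟨act_mem_Img _ h1, ?_⟩
    rwa [bil_act]
  · intro x _
    rw [← act_mul, mul_inv_cancel, act_one]
  · intro x _
    exact act_inv_act γ x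

lemma bil_neg (v x : ZZ) : bil v (-x) = -bil v x := by
  unfold bil
  rw [← Finset.sum_neg_distrib]
  refine Finset.sum_congr rfl fun P _ => ?_
  simp only [Prod.fst_neg, Prod.snd_neg, Pi.neg_apply]
  ring

lemma cn_neg (W : List (ℕ × List ℕ)) (v : ZZ) (p : ℤ → Prop) : cn W v (fun b => p (-b)) = cn W v p := by
  unfold cn
  refine Finset.card_bij' (fun x _ => -x) (fun x _ => -x) ?_ ?_ (fun x _ => neg_neg x) (fun x _ => neg_neg x)
  · intro x hx
    obtain ⟨h1, h2⟩ := mem_cs.1 hx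
    exact mem_cs.2 ⟨neg_mem_Img h1, by rwa [bil_neg]⟩
  · intro x hx
    obtain ⟨h1, h2⟩ := mem_cs.1 hx
    exact mem_cs.2 ⟨neg_mem_Img h1, by simpa only [bil_neg, neg_neg] using h2⟩

lemma WS_len : ∀ w ∈ WS, w.2.length ≤ 100 := by decide

lemma WS_bil : ∀ w ∈ WS, ∀ r ∈ w.2, bil (dec2 r) (dec2 r) = (420 : ℕ) := fun w hw r hr =>
  normChk_eq (WS_norm.down w hw r hr)

lemma WS_cases {w} (hw : w ∈ WS) {r} (hr : r ∈ w.2) :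
    r ∈ repsA ++ repsB ++ (repsC ++ repsD ++ repsE) ∨ w = (93, repsS) := by
  simp only [WS, List.mem_cons, List.not_mem_nil, or_false] at hw
  simp only [List.mem_append]
  rcases hw with rfl | rfl | rfl | rfl | rfl | rfl
  · exact Or.inl (Or.inl (Or.inl hr))
  · exact Or.inl (Or.inl (Or.inr hr))
  · exact Or.inl (Or.inr (Or.inl (Or.inl hr)))
  · exact Or.inr rfl
  · exact Or.inl (Or.inr (Or.inl (Or.inr hr)))
  · exact Or.inl (Or.inr (Or.inr hr))

lemma WS_tot : ∀ w ∈ WS, ∀ r ∈ w.2, totW WS r 420 = 465 := by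
  intro w hw r hr
  rw [totW_WS]
  rcases WS_cases hw hr with h | rfl
  · exact (tot_AB r h).1
  · exact (tot_S.down r hr).1

/-- The packed counts of minimal vectors. -/
lemma tot_cn (r : ℕ) {T : ℕ} (hT : T ≤ 8000) : tot r T = 465 * cn WS (dec2 r) (fun b => (T : ℤ) ≤ b) := by
  rw [← totW_WS, totW_eq WS WS_len r T hT]
  exact totW_count (n := 420) (by norm_num) WS_len WS_bil WS_tot _

/-- The sum of the weights is 20400, and `20400 * 59520 = 465 * 2611200`. -/
lemma card_IS : (Img (decW WS)).card = 2611200 := by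
  have h := card_Img (W := WS) (N := 465) (n := 420) (by norm_num) WS_len WS_bil WS_tot (s := 20400) rfl
  omega

lemma IS_sub {x : ZZ} (hx : x ∈ Img (decW WS)) : x ∈ SM := by
  obtain ⟨w, hw, r, hr, γ, rfl⟩ := mem_ImgW.1 hx
  exact ⟨act_mem γ (memChk_mem (WS_mem.down w hw r hr)), by rw [bil_act, WS_bil w hw r hr]; rfl⟩

/-- The representatives represent all minimal vectors, because they represent sufficiently many. -/
lemma SM_eq : SM = (Img (decW WS) : Set ZZ) := by
  have h := card_SM min_norm
  have hf : SM.Finite := by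
    refine Set.finite_of_ncard_ne_zero ?_
    rw [← Nat.card_coe_set_eq, h]
    norm_num
  refine (Set.eq_of_subset_of_ncard_le (fun x hx => IS_sub (Finset.mem_coe.1 hx)) ?_ hf).symm
  rw [← Nat.card_coe_set_eq, h, Set.ncard_coe_finset, card_IS]

lemma Sset_eq : Sset = psi '' (Img (decW WS) : Set ZZ) := by
  rw [← SM_eq]
  ext v
  constructor
  · rintro ⟨h1, h2⟩
    rw [LQ_eq] at h1
    obtain ⟨x, hx, rfl⟩ := h1
    refine ⟨x, ⟨hx, ?_⟩, rfl⟩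
    rw [Bf_psi] at h2
    have : (bil x x : ℚ) = 420 := by linarith
    exact_mod_cast this
  · rintro ⟨x, ⟨hx, h⟩, rfl⟩
    refine ⟨psi_mem hx, ?_⟩
    rw [Bf_psi, h]
    norm_num

lemma ncard_psi (W : List (ℕ × List ℕ)) (v : ZZ) (k : ℤ) {A : Set (P1 → Fin 2 → ℚ)}
    (hA : ∀ z, z ∈ A ↔ ∃ x ∈ Img (decW W), bil v x = 70 * k ∧ psi x = z) :
    A.ncard = cn W v (fun b => b = 70 * k) := by
  classical
  have h : A = psi '' (cs W v (fun b => b = 70 * k) : Set ZZ) := by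
    ext z
    rw [hA]
    simp only [Set.mem_image, Finset.mem_coe, mem_cs, and_assoc]
  rw [h, Set.ncard_image_of_injective _ psi_injective, Set.ncard_coe_finset]
  rfl

/-- Counts of inner products in terms of the model. -/
lemma tCount_psi (v : ZZ) (k : ℤ) : tCount k (psi v) = cn WS v (fun b => b = 70 * k) := by
  refine ncard_psi WS v k fun z => ?_
  have key : ∀ x, Bf (psi x) (psi v) = (k : ℚ) ↔ bil v x = 70 * k := by
    intro x
    rw [Bf_psi, bil_comm, div_eq_iff (by norm_num)]
    constructor
    · intro h
      have h' : bil v x = k * 70 := by exact_mod_cast h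
      linarith
    · intro h
      rw [h]; push_cast; ring
  rw [Set.mem_ofPred_eq, Sset_eq]
  constructor
  · rintro ⟨⟨x, hx, rfl⟩, h⟩
    exact ⟨x, hx, (key x).1 h, rfl⟩
  · rintro ⟨x, hx, h, rfl⟩
    exact ⟨⟨x, hx, rfl⟩, (key x).2 h⟩

lemma IS_dvd {v x : ZZ} (hv : v ∈ SM) (hx : x ∈ SM) : (70 : ℤ) ∣ bil v x := bil_dvd hv.1 hx.1

/-- Distinct minimal vectors have inner product at most 3. -/
lemma eq_of_280 {v x : ZZ} (hv : v ∈ SM) (hx : x ∈ SM) (h : 280 ≤ bil v x) : x = v := by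
  by_contra hne
  have h1 := min_norm (v - x) (by rw [sub_eq_add_neg]; exact add_mem_MM hv.1 (neg_mem_MM hx.1))
    (sub_ne_zero.2 (Ne.symm hne))
  rw [bil_sub_self, hv.2, hx.2] at h1
  linarith

/-- The number of vectors with a given inner product, from the numbers of vectors with at least that
inner product. -/
lemma cn_step {W : List (ℕ × List ℕ)} (hW : ∀ x ∈ Img (decW W), x ∈ SM) {v : ZZ} (hv : v ∈ SM) (k : ℤ) :
    cn W v (fun b => 70 * k ≤ b) = cn W v (fun b => b = 70 * k) + cn W v (fun b => 70 * (k + 1) ≤ b) := by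
  rw [← cn_or fun b h1 h2 => by omega]
  refine cn_congr fun x hx => ?_
  obtain ⟨m, hm⟩ := IS_dvd hv (hW x hx)
  omega

lemma cn_top {W : List (ℕ × List ℕ)} (hW : ∀ x ∈ Img (decW W), x ∈ SM) {v : ZZ} (hv : v ∈ Img (decW W)) {T : ℤ}
    (h1 : 280 ≤ T) (h2 : T ≤ 420) : cn W v (fun b => T ≤ b) = 1 := by
  unfold cn
  rw [Finset.card_eq_one]
  refine ⟨v, ?_⟩
  ext x
  rw [mem_cs, Finset.mem_singleton]
  constructor
  · rintro ⟨hx, h⟩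
    exact eq_of_280 (hW v hv) (hW x hx) (by linarith)
  · rintro rfl
    exact ⟨hv, by rw [(hW x hv).2]; exact h2⟩

lemma cn_bot {v : ZZ} (hv : v ∈ Img (decW WS)) : cn WS v (fun b => 490 ≤ b) = 0 := by
  unfold cn
  rw [Finset.card_eq_zero, Finset.eq_empty_iff_forall_notMem]
  intro x hxh
  obtain ⟨hx, h⟩ := mem_cs.1 hxh
  have := eq_of_280 (IS_sub hv) (IS_sub hx) (by linarith)
  rw [this, (IS_sub hv).2] at h
  norm_num at h

lemma cn_zero {v : ZZ} (hv : v ∈ Img (decW WS)) :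
    cn WS v (fun b => b = 0) + 2 * cn WS v (fun b => 70 ≤ b) = 2611200 := by
  have h1 : cn WS v (fun _ => True) = 2611200 := by
    rw [← card_IS]
    unfold cn
    congr 1
    ext x
    simp only [mem_cs, and_true]
  have h2 : cn WS v (fun b => 70 ≤ -b) = cn WS v (fun b => 70 ≤ b) := cn_neg WS v (fun b => 70 ≤ b)
  have h3 : cn WS v (fun _ => True) = cn WS v (fun b => b = 0 ∨ (70 ≤ b ∨ 70 ≤ -b)) := by
    refine cn_congr fun x hx => ?_
    obtain ⟨m, hm⟩ := IS_dvd (IS_sub hv) (IS_sub hx)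
    simp only [true_iff]
    omega
  have h4 : cn WS v (fun b => b = 0 ∨ (70 ≤ b ∨ 70 ≤ -b)) =
      cn WS v (fun b => b = 0) + cn WS v (fun b => 70 ≤ b ∨ 70 ≤ -b) := cn_or fun b h5 h6 => by omega
  have h5 : cn WS v (fun b => 70 ≤ b ∨ 70 ≤ -b) =
      cn WS v (fun b => 70 ≤ b) + cn WS v (fun b => 70 ≤ -b) := cn_or fun b h5 h6 => by omega
  linarith

/-- The type of a minimal vector from the numbers of vectors with inner product at least 1, 2 and 3. -/
lemma types {v : ZZ} (hv : v ∈ Img (decW WS)) {a1 a2 a3 : ℕ} (h1 : cn WS v (fun b => 70 ≤ b) = a1)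
    (h2 : cn WS v (fun b => 140 ≤ b) = a2) (h3 : cn WS v (fun b => 210 ≤ b) = a3) :
    tCount 0 (psi v) + 2 * a1 = 2611200 ∧ tCount 1 (psi v) + a2 = a1 ∧ tCount 2 (psi v) + a3 = a2 ∧
      tCount 3 (psi v) + 1 = a3 ∧ tCount 6 (psi v) = 1 := by
  have t0 := tCount_psi v 0
  have t1 := tCount_psi v 1
  have t2 := tCount_psi v 2
  have t3 := tCount_psi v 3
  have t6 := tCount_psi v 6
  have s0 := cn_zero hv
  have s1 := cn_step (fun x hx => IS_sub hx) (IS_sub hv) 1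
  have s2 := cn_step (fun x hx => IS_sub hx) (IS_sub hv) 2
  have s3 := cn_step (fun x hx => IS_sub hx) (IS_sub hv) 3
  have s6 := cn_step (fun x hx => IS_sub hx) (IS_sub hv) 6
  have u4 := cn_top (fun x hx => IS_sub hx) hv (T := 280) (by norm_num) (by norm_num)
  have u6 := cn_top (fun x hx => IS_sub hx) hv (T := 420) (by norm_num) (by norm_num)
  have u7 := cn_bot hv
  norm_num at t0 t1 t2 t3 t6 s1 s2 s3 s6
  omega

/-- The weighted list of the representatives of the vectors in `S₀`. -/
def W0 : List (ℕ × List ℕ) := [(1, repsS)]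

lemma mem_W0 {w} (hw : w ∈ W0) : w = (1, repsS) := by
  simpa [W0] using hw

lemma W0_sub {x : ZZ} (hx : x ∈ Img (decW W0)) : x ∈ Img (decW WS) := by
  obtain ⟨w, hw, r, hr, γ, rfl⟩ := mem_ImgW.1 hx
  rw [mem_W0 hw] at hr
  exact mem_ImgW.2 ⟨(93, repsS), by simp [WS], r, hr, γ, rfl⟩

/-- The set `S₀` is the union of the orbits of the two vectors in `repsS`: the number of vectors with
inner product at least 3 is 305 for these, and different for all other representatives. -/
lemma S0_eq : S0 = psi '' (Img (decW W0) : Set ZZ) := by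
  ext v
  constructor
  · rintro ⟨h1, -, -, -, h5, -⟩
    rw [Sset_eq] at h1
    obtain ⟨x, hx, rfl⟩ := h1
    have ht := (types (Finset.mem_coe.1 hx) rfl rfl rfl).2.2.2.1
    obtain ⟨w, hw, r, hr, γ, rfl⟩ := mem_ImgW.1 (Finset.mem_coe.1 hx)
    rw [h5, cn_act] at ht
    rcases WS_cases hw hr with h | rfl
    · have h6 := tot_cn r (T := 210) (by norm_num)
      have h7 := (tot_AB r h).2
      rw [h6] at h7
      push_cast at h7
      rw [← ht] at h7
      exact absurd rfl h7
    · exact ⟨_, mem_ImgW.2 ⟨(1, repsS), by simp [W0], r, hr, γ, rfl⟩, rfl⟩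
  · rintro ⟨x, hx, rfl⟩
    have hx0 := Finset.mem_coe.1 hx
    have hx' := W0_sub hx0
    obtain ⟨w, hw, r, hr, γ, rfl⟩ := mem_ImgW.1 hx0
    rw [mem_W0 hw] at hr
    obtain ⟨-, g1, g2, g3, -⟩ := tot_S.down r hr
    rw [tot_cn r (by norm_num)] at g1 g2 g3
    push_cast at g1 g2 g3
    have ht := types hx' (a1 := 616904) (a2 := 38648) (a3 := 305) (by rw [cn_act]; omega) (by rw [cn_act]; omega)
      (by rw [cn_act]; omega)
    obtain ⟨u0, u1, u2, u3, u6⟩ := ht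
    refine ⟨?_, ?_, ?_, ?_, ?_, u6⟩
    · rw [Sset_eq]
      exact ⟨_, hx', rfl⟩
    all_goals omega

lemma W0_len : ∀ w ∈ W0, w.2.length ≤ 100 := by decide

lemma W0_bil : ∀ w ∈ W0, ∀ r ∈ w.2, bil (dec2 r) (dec2 r) = (420 : ℕ) := fun w hw r hr => by
  rw [mem_W0 hw] at hr
  exact WS_bil (93, repsS) (by simp [WS]) r hr

lemma totW_W0 (r T : ℕ) : totW W0 r T = cntv repsS 2 r T := by
  have h : ∀ c : List ℕ → ℕ → ℕ, (W0.map fun q => q.1 * c q.2 q.2.length).sum = c repsS 2 := fun c => by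
    have : (W0.map fun q => q.1 * c q.2 q.2.length).sum = 1 * c repsS 2 + 0 := rfl
    rw [this]
    omega
  exact h fun ls n => cntv ls n r T

lemma W0_tot : ∀ w ∈ W0, ∀ r ∈ w.2, totW W0 r 420 = 5 := fun w hw r hr => by
  rw [mem_W0 hw] at hr
  rw [totW_W0]
  exact (cnt_S.down r hr).1

lemma cnt_cn (r : ℕ) {T : ℕ} (hT : T ≤ 8000) : cntv repsS 2 r T = 5 * cn W0 (dec2 r) (fun b => (T : ℤ) ≤ b) := by
  rw [← totW_W0, totW_eq W0 W0_len r T hT]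
  exact totW_count (n := 420) (by norm_num) W0_len W0_bil W0_tot _

/-- The weights are 1 and the stabilizers have order 5, so `2 * 59520 = 5 * 23808`. -/
lemma card_I0 : (Img (decW W0)).card = 23808 := by
  have h := card_Img (W := W0) (N := 5) (n := 420) (by norm_num) W0_len W0_bil W0_tot (s := 2) rfl
  omega

/-- `|S₀| = 23808`, and for each `v ∈ S₀` there are exactly seven vectors `v' ∈ S₀`
with `⟨v, v'⟩ = -3`. -/
theorem stmt_19 :
    Set.ncard S0 = 23808 ∧
    ∀ v ∈ S0, Set.ncard {v' | v' ∈ S0 ∧ Bf v v' = -3} = 7 := by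
  constructor
  · rw [S0_eq, Set.ncard_image_of_injective _ psi_injective, Set.ncard_coe_finset, card_I0]
  · intro v hv
    rw [S0_eq] at hv
    obtain ⟨x, hx, rfl⟩ := hv
    have hx0 := Finset.mem_coe.1 hx
    have key : ∀ y, Bf (psi x) (psi y) = -3 ↔ bil x y = 70 * -3 := by
      intro y
      rw [Bf_psi, div_eq_iff (by norm_num)]
      constructor
      · intro h
        have h' : bil x y = -3 * 70 := by exact_mod_cast h
        linarith
      · intro h
        rw [h]; push_cast; ring
    rw [ncard_psi W0 x (-3)]
    · have e : cn W0 x (fun b => b = 70 * -3) = cn W0 x (fun b => b = 70 * 3) := by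
        rw [← cn_neg]
        exact cn_congr fun y _ => by constructor <;> intro h <;> linarith
      have hs := cn_step (fun x hx => IS_sub (W0_sub hx)) (IS_sub (W0_sub hx0)) 3
      have h4 := cn_top (fun x hx => IS_sub (W0_sub hx)) hx0 (T := 280) (by norm_num) (by norm_num)
      obtain ⟨w, hw, r, hr, γ, rfl⟩ := mem_ImgW.1 hx0
      rw [mem_W0 hw] at hr
      have h3 := (cnt_S.down r hr).2.2
      rw [cnt_cn r (by norm_num), ← cn_act W0 γ] at h3
      norm_num at hs h3 e ⊢
      omega
    · intro z
      rw [Set.mem_ofPred_eq, S0_eq]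
      constructor
      · rintro ⟨⟨y, hy, rfl⟩, h⟩
        exact ⟨y, hy, (key y).1 h, rfl⟩
      · rintro ⟨y, hy, h, rfl⟩
        exact ⟨⟨y, hy, rfl⟩, (key y).2 h⟩
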